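/- If G is a connected simple graph on n vertices such that every vertex of even degree has at most 3 neighbors of even degree (i.e., the E-subgraph of G has maximum degree at most 3), then pn(G) ≤ ⌈n/2⌉. -/

import Mathlib

open SimpleGraph

variable {V : Type*}

/-- A path decomposition of a simple graph `G`: a list of nontrivial paths of `G`
that are pairwise edge-disjoint and together cover every edge of `G`. -/
structure PathDecomp (G : SimpleGraph V) where
  paths : List (Σ a b : V, G.Walk a b)
  nontrivial : ∀ p ∈ paths, 0 < p.2.2.length
  isPath : ∀ p ∈ paths, p.2.2.IsPath
  edgeDisjoint : paths.Pairwise fun p q => ∀ e, e ∈ p.2.2.edges → e ∉ q.2.2.edges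
  covers : ∀ e ∈ G.edgeSet, ∃ p ∈ paths, e ∈ p.2.2.edges

/-- Cardinality of a path decomposition. -/
def pdCard {G : SimpleGraph V} (D : PathDecomp G) : ℕ := D.paths.length

/-- `ends D u` is the number of paths in `D` having `u` as an end vertex. -/
def ends [DecidableEq V] {G : SimpleGraph V} (D : PathDecomp G) (u : V) : ℕ :=
  (D.paths.filter fun p => p.1 = u ∨ p.2.1 = u).length

/-- The path number: minimum cardinality of a path decomposition. -/
noncomputable def pn (G : SimpleGraph V) : ℕ :=
  sInf {n | ∃ D : PathDecomp G, pdCard D = n}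

/-- Degree as the `ncard` of the neighbor set (no decidability needed). -/
noncomputable def ndeg (G : SimpleGraph V) (v : V) : ℕ := {w | G.Adj v w}.ncard

/-- A SET graph: the set of even-degree vertices consists of exactly three
mutually adjacent vertices, and every odd-degree vertex has at least two
even-degree neighbors. -/
def IsSETGraph (G : SimpleGraph V) : Prop :=
  (∃ a b c : V, a ≠ b ∧ a ≠ c ∧ b ≠ c ∧
      {v : V | Even (ndeg G v)} = {a, b, c} ∧
      G.Adj a b ∧ G.Adj a c ∧ G.Adj b c) ∧
  ∀ v : V, Odd (ndeg G v) →
    ∃ w₁ w₂ : V, w₁ ≠ w₂ ∧ G.Adj v w₁ ∧ G.Adj v w₂ ∧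
      Even (ndeg G w₁) ∧ Even (ndeg G w₂)

/-
Allow trivial paths and record a decomposition by the number `d v` of path ends at each vertex `v`.
Since `∑ v, d v` is twice the number of paths, the aim is `∑ v, d v ≤ |V|`; one extra path is
conceded when the graph is a SET graph, that is, when its even vertices form a triangle and every
odd vertex sees two of them. For a connected SET graph the ends can be prescribed: none at one
vertex of the triangle, two at each of the others, and one everywhere else.

Call a graph admissible when its E-subgraph has maximum degree at most three and no component of it
is a SET graph. Admissible graphs are treated by induction on the edge set: delete the edges from a
vertex to some of its even neighbours so that the smaller graph stays admissible, decompose it, and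
put the edges back. Each returned edge extends a path ending at its far vertex; when this path
already passes through the centre, the edge by which it enters the centre is cut off and becomes
the next one to be attached. A count of path ends shows that these chains of exchanges can be made
to terminate. Two of them obstruct each other only by terminating at opposite ends of the same path,
so the obstructed chains are paired up by an involution, and it suffices that the path ends
available at the centre allow for these pairs.

This leaves minimal counterexamples whose E-subgraph consists of isolated vertices and triangles. In
them an odd vertex with an even neighbour sees at least two vertices of one triangle and no even
vertex outside it, and its odd neighbours see that triangle as well. Hence the triangle and its
neighbourhood form a component that is a SET graph, which admissibility forbids.
-/

section PathLists

/-- The edge joining `a` to the first vertex of a list, as a multiset. -/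
def headEdge (a : V) : List V → Multiset (Sym2 V)
  | [] => 0
  | x :: _ => {s(a, x)}

/-- The multiset of edges joining consecutive vertices of a list. A path is encoded by the list of
its vertices, and this is its edge set. -/
def listEdges : List V → Multiset (Sym2 V)
  | [] => 0
  | x :: l => headEdge x l + listEdges l

theorem listEdges_reverse_append_cons (P : List V) (a : V) (R : List V) :
    listEdges (P.reverse ++ a :: R) =
      listEdges P + listEdges R + headEdge a P + headEdge a R := by
  induction P generalizing a R with
  | nil => simp [listEdges, headEdge, add_comm]
  | cons x P ih =>
    simp only [List.reverse_cons, List.append_assoc, List.singleton_append, ih x (a :: R),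
      listEdges, headEdge, Sym2.eq_swap (a := x) (b := a)]
    abel

theorem listEdges_reverse (l : List V) : listEdges l.reverse = listEdges l := by
  cases l with
  | nil => rfl
  | cons x l =>
    rw [List.reverse_cons, listEdges_reverse_append_cons]
    simp [listEdges, headEdge, add_comm]

theorem mem_of_mem_listEdges {l : List V} {e : Sym2 V} (he : e ∈ listEdges l) {v : V}
    (hv : v ∈ e) : v ∈ l := by
  induction l with
  | nil => simp [listEdges] at he
  | cons x l ih =>
    rcases Multiset.mem_add.mp he with he | he
    · cases l with
      | nil => simp [headEdge] at he
      | cons y l =>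
        obtain rfl : e = s(x, y) := Multiset.mem_singleton.mp he
        rcases Sym2.mem_iff.mp hv with rfl | rfl <;> simp
    · exact List.mem_cons_of_mem _ (ih he)

open Classical in
/-- The indicator of the first vertex of a list. -/
noncomputable def startCount (l : List V) (v : V) : ℕ := if l.head? = some v then 1 else 0

/-- How many of the two end positions of a list are occupied by `v`. Both ends of a one-vertex list
are counted. -/
noncomputable def endCount (l : List V) (v : V) : ℕ := startCount l v + startCount l.reverse v

theorem startCount_nil (v : V) : startCount [] v = 0 := by simp [startCount]

open Classical in
theorem startCount_cons (x : V) (l : List V) (v : V) :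
    startCount (x :: l) v = if v = x then 1 else 0 := by
  simp [startCount, eq_comm]

theorem startCount_append_cons {P R : List V} {a v : V} (hv : v ≠ a) :
    startCount (P ++ a :: R) v = startCount P v := by
  cases P with
  | nil => simp [startCount, hv.symm]
  | cons => rfl

theorem startCount_reverse_cons {l : List V} (hl : l ≠ []) (x v : V) :
    startCount (x :: l).reverse v = startCount l.reverse v := by
  rw [startCount, List.reverse_cons, List.head?_append_of_ne_nil _ (List.reverse_ne_nil_iff.mpr hl),
    startCount]

theorem sum_startCount [Fintype V] {l : List V} (hl : l ≠ []) : ∑ v, startCount l v = 1 := by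
  classical
  obtain ⟨x, l, rfl⟩ := List.exists_cons_of_ne_nil hl
  simp only [startCount_cons, Finset.sum_ite_eq', Finset.mem_univ, if_true]

theorem endCount_nil (v : V) : endCount [] v = 0 := by simp [endCount, startCount_nil]

theorem endCount_reverse (l : List V) (v : V) : endCount l.reverse v = endCount l v := by
  simp [endCount, add_comm]

theorem endCount_reverse_append_cons {P R : List V} {a v : V} (hv : v ≠ a) :
    endCount (P.reverse ++ a :: R) v + (startCount P v + startCount R v) =
      endCount P v + endCount R v := by
  have hrev : (P.reverse ++ a :: R).reverse = R.reverse ++ a :: P := by simp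
  rw [endCount, hrev, startCount_append_cons hv, startCount_append_cons hv, endCount, endCount]
  omega

theorem sum_endCount [Fintype V] {l : List V} (hl : l ≠ []) : ∑ v, endCount l v = 2 := by
  simp only [endCount, Finset.sum_add_distrib, sum_startCount hl,
    sum_startCount (List.reverse_ne_nil_iff.mpr hl)]

theorem endCount_pos_iff {l : List V} {v : V} :
    0 < endCount l v ↔ l.head? = some v ∨ l.reverse.head? = some v := by
  simp only [endCount, startCount]
  split_ifs with h₁ h₂ h₂ <;> simp only [h₁, h₂] <;> decide

theorem eq_of_endCount_pos {l : List V} {u v w : V} (hu : 0 < endCount l u)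
    (hv : 0 < endCount l v) (hw : 0 < endCount l w) (huv : u ≠ v) (huw : u ≠ w) : v = w := by
  rw [endCount_pos_iff] at hu hv hw
  grind

open Classical in
theorem count_headEdge (a x : V) (l : List V) :
    (headEdge a l).count s(a, x) = startCount l x := by
  cases l with
  | nil => simp [headEdge, startCount]
  | cons y l => simp only [headEdge, startCount_cons, Multiset.count_singleton, Sym2.congr_right]

open Classical in
theorem count_headEdge_of_notMem {a : V} {e : Sym2 V} (he : a ∉ e) (l : List V) :
    (headEdge a l).count e = 0 := by
  cases l with
  | nil => simp [headEdge]
  | cons y l =>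
    have hne : e ≠ s(a, y) := fun h => he (h ▸ Sym2.mem_mk_left a y)
    simp [headEdge, hne]

open Classical in
theorem count_listEdges_of_notMem {a : V} {l : List V} (ha : a ∉ l) (x : V) :
    (listEdges l).count s(a, x) = 0 :=
  Multiset.count_eq_zero.mpr fun h => ha (mem_of_mem_listEdges h (Sym2.mem_mk_left a x))

open Classical in
theorem sum_count_headEdge [Fintype V] {a : V} {l : List V} (ha : a ∉ l) (v : V) :
    ∑ w, (headEdge a l).count s(v, w) =
      startCount l v + if v = a ∧ l ≠ [] then 1 else 0 := by
  cases l with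
  | nil => simp [headEdge, startCount]
  | cons x l =>
    have hax : a ≠ x := fun h => ha (h ▸ List.mem_cons_self)
    have hiff : ∀ w, s(v, w) = s(a, x) ↔ (v = a ∧ w = x) ∨ (v = x ∧ w = a) := fun w => Sym2.eq_iff
    simp only [headEdge, Multiset.count_singleton, hiff, startCount_cons]
    by_cases hva : v = a
    · simp only [hva, hax, true_and, false_and, or_false, ne_eq, reduceCtorEq, not_false_iff,
        if_true, if_false, Finset.sum_ite_eq', Finset.mem_univ, zero_add]
    · by_cases hvx : v = x
      · simp [hvx, hax.symm]
      · simp [hva, hvx]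

open Classical in
theorem sum_count_listEdges_add_endCount [Fintype V] {l : List V} (hl : l.Nodup) (v : V) :
    ∑ w, (listEdges l).count s(v, w) + endCount l v = 2 * l.count v := by
  induction l with
  | nil => simp [listEdges, endCount_nil]
  | cons a l ih =>
    have ih := ih hl.of_cons
    simp only [listEdges, Multiset.count_add, Finset.sum_add_distrib,
      sum_count_headEdge (List.nodup_cons.mp hl).1, List.count_cons, beq_iff_eq, eq_comm (a := a)]
    rcases eq_or_ne l [] with rfl | hne
    · simp only [endCount, List.reverse_singleton, startCount_cons, startCount_nil, listEdges,
        Multiset.count_zero, Finset.sum_const_zero, List.count_nil]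
      split_ifs <;> simp_all
    · simp only [endCount, startCount_reverse_cons hne, startCount_cons] at ih ⊢
      split_ifs <;> simp_all <;> omega

end PathLists

section Reattachment

/-- The list `q` is the list `p`, possibly traversed backwards. -/
def IsReorientation (q p : List V) : Prop := q = p ∨ q = p.reverse

theorem IsReorientation.perm {p q : List V} (h : IsReorientation q p) : q.Perm p := by
  rcases h with rfl | rfl
  exacts [.rfl, p.reverse_perm]

theorem IsReorientation.listEdges_eq {p q : List V} (h : IsReorientation q p) :
    listEdges q = listEdges p := by
  rcases h with rfl | rfl
  exacts [rfl, listEdges_reverse p]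

theorem IsReorientation.endCount_eq {p q : List V} (h : IsReorientation q p) (v : V) :
    endCount q v = endCount p v := by
  rcases h with rfl | rfl
  exacts [rfl, endCount_reverse p v]

open Classical in
/-- `p'` is a path with the same edges away from `a` as the path `p`. The functions `old` and `new`
indicate the edges of `p` and `p'` at `a`, and the ends are exchanged accordingly. -/
structure Reattached (a : V) (p p' : List V) (old new : V → ℕ) : Prop where
  ne_nil : p' ≠ []
  nodup : p'.Nodup
  count_eq : ∀ e : Sym2 V, a ∉ e → (listEdges p').count e = (listEdges p).count e
  count_old : ∀ v, (listEdges p).count s(a, v) = old v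
  count_new : ∀ v, (listEdges p').count s(a, v) = new v
  endCount_add : ∀ v, v ≠ a → endCount p' v + new v = endCount p v + old v

theorem Reattached.reverse_append_cons {a : V} {L R L' R' : List V}
    (hn : (L.reverse ++ a :: R).Nodup) (hL : IsReorientation L' L) (hR : IsReorientation R' R) :
    Reattached a (L.reverse ++ a :: R) (L'.reverse ++ a :: R')
      (fun v => startCount L v + startCount R v)
      (fun v => startCount L' v + startCount R' v) where
  ne_nil := by simp
  nodup :=
    (((L'.reverse_perm.trans hL.perm).trans L.reverse_perm.symm).append
      (hR.perm.cons a)).nodup_iff.mpr hn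
  count_eq e he := by
    simp [listEdges_reverse_append_cons, hL.listEdges_eq, hR.listEdges_eq,
      count_headEdge_of_notMem he]
  count_old v := by
    have ⟨haL, haR⟩ : a ∉ L ∧ a ∉ R := by grind
    simp [listEdges_reverse_append_cons, count_listEdges_of_notMem haL,
      count_listEdges_of_notMem haR, count_headEdge]
  count_new v := by
    have ⟨haL, haR⟩ : a ∉ L ∧ a ∉ R := by grind
    simp [listEdges_reverse_append_cons, hL.listEdges_eq, hR.listEdges_eq,
      count_listEdges_of_notMem haL, count_listEdges_of_notMem haR, count_headEdge]
  endCount_add v hv := by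
    rw [endCount_reverse_append_cons hv, endCount_reverse_append_cons hv, hL.endCount_eq,
      hR.endCount_eq]

theorem Reattached.cons {a : V} {p q : List V} (hn : p.Nodup) (ha : a ∉ p)
    (hq : IsReorientation q p) :
    Reattached a p (a :: q) (fun _ => 0) (startCount q) where
  ne_nil := by simp
  nodup := by
    rw [List.nodup_cons, hq.perm.mem_iff, hq.perm.nodup_iff]
    exact ⟨ha, hn⟩
  count_eq e he := by simp [listEdges, hq.listEdges_eq, count_headEdge_of_notMem he]
  count_old := count_listEdges_of_notMem ha
  count_new v := by
    simp [listEdges, hq.listEdges_eq, count_listEdges_of_notMem ha, count_headEdge]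
  endCount_add v hv := by
    simpa [startCount_nil, endCount_nil, hq.endCount_eq] using
      endCount_reverse_append_cons (P := []) (R := q) hv

theorem Reattached.refl {a : V} {p : List V} (hp : p ≠ []) (hn : p.Nodup) (ha : a ∉ p) :
    Reattached a p p (fun _ => 0) (fun _ => 0) :=
  ⟨hp, hn, fun _ _ => rfl, count_listEdges_of_notMem ha, count_listEdges_of_notMem ha,
    fun _ _ => rfl⟩

end Reattachment

open Classical in
/-- A decomposition of the edges of `G` into `k` paths, each encoded as its list of vertices. A path
may be trivial, that is, consist of a single vertex. -/
structure PathSystem (G : SimpleGraph V) (k : ℕ) where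
  path : Fin k → List V
  ne_nil : ∀ i, path i ≠ []
  nodup : ∀ i, (path i).Nodup
  sum_count : ∀ e : Sym2 V, ∑ i, (listEdges (path i)).count e = if e ∈ G.edgeSet then 1 else 0

/-- The number of path ends of a path system at `v`. A trivial path has both its ends at the same
vertex. -/
noncomputable def PathSystem.numEnds {G : SimpleGraph V} {k : ℕ} (P : PathSystem G k) (v : V) : ℕ :=
  ∑ i, endCount (P.path i) v

/-- `HasEnds G d`: some path system of `G` has exactly `d v` path ends at each vertex `v`. -/
def HasEnds (G : SimpleGraph V) (d : V → ℕ) : Prop :=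
  ∃ (k : ℕ) (P : PathSystem G k), P.numEnds = d

section Neighbours
variable [Fintype V] {G : SimpleGraph V}

open Classical in
/-- The set of neighbours of `v`: a version of `SimpleGraph.neighborFinset` without instance
arguments depending on `G`. -/
noncomputable def nbr (G : SimpleGraph V) (v : V) : Finset V := {w | G.Adj v w}

theorem mem_nbr {v w : V} : w ∈ nbr G v ↔ G.Adj v w := by simp [nbr]

theorem notMem_nbr_self {v : V} : v ∉ nbr G v := by simp [mem_nbr]

theorem ne_of_mem_nbr {v w : V} (h : w ∈ nbr G v) : w ≠ v := (mem_nbr.mp h).ne'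

open Classical in
theorem sum_ite_adj (v : V) : (∑ w, if G.Adj v w then 1 else 0) = (nbr G v).card := by
  rw [nbr, Finset.card_filter]

theorem PathSystem.sum_numEnds {k : ℕ} (P : PathSystem G k) : ∑ v, P.numEnds v = 2 * k := by
  simp only [numEnds]
  rw [Finset.sum_comm, Finset.sum_congr rfl fun i _ => sum_endCount (P.ne_nil i)]
  simp [mul_comm]

theorem HasEnds.even {d : V → ℕ} (h : HasEnds G d) (v : V) : Even (d v + (nbr G v).card) := by
  classical
  obtain ⟨k, P, rfl⟩ := h
  have hcard : (nbr G v).card = ∑ i, ∑ w, (listEdges (P.path i)).count s(v, w) := by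
    rw [Finset.sum_comm, ← sum_ite_adj]
    simp only [P.sum_count, mem_edgeSet]
  rw [hcard, PathSystem.numEnds, add_comm, ← Finset.sum_add_distrib,
    Finset.sum_congr rfl fun i _ => sum_count_listEdges_add_endCount (P.nodup i) v,
    ← Finset.mul_sum]
  exact even_two_mul _

end Neighbours

namespace PathSystem
variable {G : SimpleGraph V} {k : ℕ} {P : PathSystem G k} {a : V}

/-- For each path of the system through `a`, its two arms: the pieces on either side of `a`, read
away from `a`. The paths avoiding `a` are given empty arms. -/
structure Arms (P : PathSystem G k) (a : V) where
  arm : Fin k → Bool → List V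
  path_eq : ∀ i, a ∈ P.path i → P.path i = (arm i false).reverse ++ a :: arm i true
  arm_eq_nil : ∀ i b, a ∉ P.path i → arm i b = []

theorem exists_arms (P : PathSystem G k) (a : V) : Nonempty (P.Arms a) := by
  have hsplit : ∀ i, ∃ S : Bool → List V,
      (a ∈ P.path i → P.path i = (S false).reverse ++ a :: S true) ∧
        ∀ b, a ∉ P.path i → S b = [] := by
    intro i
    by_cases ha : a ∈ P.path i
    · obtain ⟨s, t, hst⟩ := List.append_of_mem ha
      exact ⟨fun b => if b then t else s.reverse, by simp [hst], fun _ h => absurd ha h⟩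
    · exact ⟨fun _ => [], fun h => absurd h ha, fun _ _ => rfl⟩
  choose S hthrough havoid using hsplit
  exact ⟨⟨S, hthrough, havoid⟩⟩

namespace Arms

open Classical in
theorem count_listEdges (A : P.Arms a) (i : Fin k) (v : V) :
    (listEdges (P.path i)).count s(a, v) = ∑ b, startCount (A.arm i b) v := by
  by_cases ha : a ∈ P.path i
  · have hpath := A.path_eq i ha
    have hcount := (Reattached.reverse_append_cons (hpath ▸ P.nodup i) (Or.inl rfl)
      (Or.inl rfl)).count_old v
    rw [← hpath] at hcount
    rw [hcount, Fintype.sum_bool, add_comm]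
  · simp [count_listEdges_of_notMem ha, A.arm_eq_nil i _ ha, startCount_nil]

open Classical in
theorem sum_startCount (A : P.Arms a) (v : V) :
    ∑ i, ∑ b, startCount (A.arm i b) v = if G.Adj a v then 1 else 0 := by
  simp only [← A.count_listEdges, P.sum_count, mem_edgeSet]

theorem adj_of_head? (A : P.Arms a) {i : Fin k} {b : Bool} {x : V}
    (hx : (A.arm i b).head? = some x) : G.Adj a x := by
  classical
  by_contra hadj
  have hzero := A.sum_startCount x
  rw [if_neg hadj, Finset.sum_eq_zero_iff] at hzero
  have hb := Finset.sum_eq_zero_iff.mp (hzero i (Finset.mem_univ i)) b (Finset.mem_univ b)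
  simp [startCount, hx] at hb

theorem eq_of_head? (A : P.Arms a) {i j : Fin k} {b c : Bool} {x : V}
    (hi : (A.arm i b).head? = some x) (hj : (A.arm j c).head? = some x) : (i, b) = (j, c) := by
  classical
  by_contra hne
  have hone := A.sum_startCount x
  rw [if_pos (A.adj_of_head? hi),
    ← Fintype.sum_prod_type' (f := fun i b => startCount (A.arm i b) x)] at hone
  have htwo : ∑ z ∈ {(i, b), (j, c)}, startCount (A.arm z.1 z.2) x = 2 := by
    simp [Finset.sum_pair hne, startCount, hi, hj]
  have hle := Finset.sum_le_sum_of_subset (f := fun z => startCount (A.arm z.1 z.2) x)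
    (Finset.subset_univ {(i, b), (j, c)})
  omega

theorem exists_farEnd (A : P.Arms a) (x : V) :
    ∃ y, ∀ i b, (A.arm i b).head? = some x → (A.arm i b).reverse.head? = some y := by
  by_cases hx : ∃ i b, (A.arm i b).head? = some x
  · obtain ⟨i, b, hib⟩ := hx
    have hne : (A.arm i b).reverse ≠ [] := by
      rw [Ne, List.reverse_eq_nil_iff]
      rintro h
      simp [h] at hib
    refine ⟨(A.arm i b).reverse.head hne, fun j c hjc => ?_⟩
    cases A.eq_of_head? hib hjc
    exact List.head?_eq_some_head hne
  · exact ⟨x, fun i b h => absurd ⟨i, b, h⟩ hx⟩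

/-- The far end of the arm that starts at the neighbour `x` of `a`. -/
noncomputable def farEnd (A : P.Arms a) (x : V) : V := (A.exists_farEnd x).choose

theorem head?_reverse_arm (A : P.Arms a) {i : Fin k} {b : Bool} {x : V}
    (hx : (A.arm i b).head? = some x) : (A.arm i b).reverse.head? = some (A.farEnd x) :=
  (A.exists_farEnd x).choose_spec i b hx

/-- `A.Attached v o`: the vertex `v` is an end of the piece `o`, where `.inl x` stands for the arm
starting at the neighbour `x` of `a` and `.inr i` for the path `P.path i` avoiding `a`. Extending
that piece by the edge `av` makes it end at `a`. -/
def Attached (A : P.Arms a) (v : V) : V ⊕ Fin k → Prop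
  | .inl x => G.Adj a x ∧ A.farEnd x = v
  | .inr i => a ∉ P.path i ∧ 0 < endCount (P.path i) v

theorem Attached.unique {A : P.Arms a} {u v w : V} {o : V ⊕ Fin k} (hu : A.Attached u o)
    (hv : A.Attached v o) (hw : A.Attached w o) (huv : u ≠ v) (huw : u ≠ w) : v = w := by
  cases o with
  | inl x => exact hv.2.symm.trans hw.2
  | inr i => exact eq_of_endCount_pos hu.2 hv.2 hw.2 huv huw

open Classical in
theorem endCount_path (A : P.Arms a) {v : V} (hv : v ≠ a) (i : Fin k) :
    endCount (P.path i) v = ∑ b, startCount (A.arm i b).reverse v +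
      if a ∉ P.path i then endCount (P.path i) v else 0 := by
  by_cases ha : a ∈ P.path i
  · have hends := endCount_reverse_append_cons (P := A.arm i false) (R := A.arm i true) hv
    rw [← A.path_eq i ha] at hends
    simp only [ha, not_true_eq_false, if_false, Fintype.sum_bool]
    simp only [endCount] at hends ⊢
    omega
  · simp [ha, A.arm_eq_nil i _ ha, startCount_nil]

theorem exists_attached (A : P.Arms a) {v : V} (hv : v ≠ a) (hpos : 0 < P.numEnds v) :
    ∃ o, A.Attached v o := by
  classical
  obtain ⟨i, -, hi⟩ := Finset.exists_ne_zero_of_sum_ne_zero hpos.ne'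
  by_cases ha : a ∈ P.path i
  · rw [A.endCount_path hv, if_neg (not_not.mpr ha), add_zero] at hi
    obtain ⟨b, -, hb⟩ := Finset.exists_ne_zero_of_sum_ne_zero hi
    have hend : (A.arm i b).reverse.head? = some v := by
      by_contra h
      exact hb (if_neg h)
    rcases hS : (A.arm i b).head? with _ | x
    · simp [List.head?_eq_none_iff.mp hS] at hend
    · rw [A.head?_reverse_arm hS] at hend
      exact ⟨.inl x, A.adj_of_head? hS, Option.some.inj hend⟩
  · exact ⟨.inr i, ha, Nat.pos_of_ne_zero hi⟩

variable [Fintype V]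

open Classical in
theorem startCount_reverse_arm (A : P.Arms a) (i : Fin k) (b : Bool) (v : V) :
    startCount (A.arm i b).reverse v =
      ∑ x ∈ nbr G a with A.farEnd x = v, startCount (A.arm i b) x := by
  rcases hS : (A.arm i b).head? with _ | x
  · simp [List.head?_eq_none_iff.mp hS, startCount_nil]
  · have hx : x ∈ nbr G a := mem_nbr.mpr (A.adj_of_head? hS)
    simp [startCount, hS, A.head?_reverse_arm hS, hx]

open Classical in
theorem numEnds_eq (A : P.Arms a) {v : V} (hv : v ≠ a) :
    P.numEnds v = ({x ∈ nbr G a | A.farEnd x = v} : Finset V).card +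
      ∑ i with a ∉ P.path i, endCount (P.path i) v := by
  have harms : ∑ i, ∑ b, startCount (A.arm i b).reverse v =
      ({x ∈ nbr G a | A.farEnd x = v} : Finset V).card := by
    simp only [A.startCount_reverse_arm]
    rw [Finset.sum_congr rfl fun i _ => Finset.sum_comm, Finset.sum_comm, Finset.card_eq_sum_ones]
    refine Finset.sum_congr rfl fun x hx => ?_
    rw [A.sum_startCount, if_pos (mem_nbr.mp (Finset.mem_filter.mp hx).1)]
  rw [numEnds, Finset.sum_congr rfl fun i _ => A.endCount_path hv i, Finset.sum_add_distrib, harms,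
    Finset.sum_filter]

end Arms

/-- A recipe for turning a path system of `G` into one of a graph `G'` that differs from `G` only at
`a`: the edge from `a` to a neighbour `v` of `G'` is to be attached to the piece `φ v`, in such a
way that every arm gets exactly one edge and every path avoiding `a` at most one. -/
structure Rewiring (A : P.Arms a) (G' : SimpleGraph V) (φ : V → V ⊕ Fin k) : Prop where
  adj_iff : ∀ u v, u ≠ a → v ≠ a → (G'.Adj u v ↔ G.Adj u v)
  attached : ∀ v, G'.Adj a v → (φ v = .inl v ∧ G.Adj a v) ∨ A.Attached v (φ v)
  injOn : Set.InjOn φ (G'.neighborSet a)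
  surj : ∀ x, G.Adj a x → ∃ v, G'.Adj a v ∧ φ v = .inl x

open Classical in
/-- The number of edges at `a` that a rewiring gives to the `i`-th path for attaching an edge to the
piece `o`. -/
noncomputable def Arms.load (A : P.Arms a) (i : Fin k) : V ⊕ Fin k → ℕ
  | .inl x => ∑ b, startCount (A.arm i b) x
  | .inr j => if j = i then 1 else 0

namespace Rewiring
variable {A : P.Arms a} {G' : SimpleGraph V} {φ : V → V ⊕ Fin k}

theorem exists_arm (R : Rewiring A G' φ) (i : Fin k) (b : Bool) :
    ∃ S, IsReorientation S (A.arm i b) ∧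
      ∀ v, S.head? = some v ↔ G'.Adj a v ∧ ∃ x, φ v = .inl x ∧ (A.arm i b).head? = some x := by
  rcases hS : (A.arm i b).head? with _ | x
  · exact ⟨A.arm i b, Or.inl rfl, fun v => by simp [hS]⟩
  obtain ⟨w, hw, hwx⟩ := R.surj x (A.adj_of_head? hS)
  have hiff : ∀ v, some w = some v ↔ G'.Adj a v ∧ ∃ y, φ v = .inl y ∧ some x = some y := by
    simp only [Option.some.injEq]
    refine fun v => ⟨by rintro rfl; exact ⟨hw, x, hwx, rfl⟩, ?_⟩
    rintro ⟨hv, _, hvx, rfl⟩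
    exact R.injOn hw hv (hwx.trans hvx.symm)
  rcases R.attached w hw with ⟨hww, -⟩ | hatt
  · obtain rfl : w = x := Sum.inl.inj (hww.symm.trans hwx)
    exact ⟨A.arm i b, Or.inl rfl, hS ▸ hiff⟩
  · rw [hwx] at hatt
    refine ⟨(A.arm i b).reverse, Or.inr rfl, ?_⟩
    rwa [A.head?_reverse_arm hS, hatt.2]

open Classical in
theorem exists_reattached_of_mem (R : Rewiring A G' φ) {i : Fin k} (ha : a ∈ P.path i) :
    ∃ q, Reattached a (P.path i) q (fun v => A.load i (.inl v))
      (fun v => if G'.Adj a v then A.load i (φ v) else 0) := by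
  choose S hS hhead using R.exists_arm i
  have hload : ∀ v, ∑ b, startCount (S b) v = if G'.Adj a v then A.load i (φ v) else 0 := by
    intro v
    simp only [startCount, hhead]
    by_cases hv : G'.Adj a v
    · simp only [hv, true_and, if_true]
      rcases hφ : φ v with x | j
      · simp [Arms.load, startCount]
      · have hatt := (R.attached v hv).resolve_left (by simp [hφ])
        rw [hφ] at hatt
        have hji : j ≠ i := fun h => hatt.1 (h ▸ ha)
        simp [Arms.load, hji]
    · simp [hv]
  have hreatt := Reattached.reverse_append_cons (A.path_eq i ha ▸ P.nodup i) (hS false) (hS true)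
  rw [← A.path_eq i ha] at hreatt
  refine ⟨(S false).reverse ++ a :: S true, ?_⟩
  convert hreatt using 2 with v v
  · rw [Arms.load, Fintype.sum_bool, add_comm]
  · rw [← hload, Fintype.sum_bool, add_comm]

open Classical in
theorem exists_reattached_of_notMem (R : Rewiring A G' φ) {i : Fin k} (ha : a ∉ P.path i) :
    ∃ q, Reattached a (P.path i) q (fun v => A.load i (.inl v))
      (fun v => if G'.Adj a v then A.load i (φ v) else 0) := by
  have hold : (fun v => A.load i (.inl v)) = fun _ => 0 := by
    simp [Arms.load, A.arm_eq_nil i _ ha, startCount_nil]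
  have hnew : ∀ v, (if G'.Adj a v then A.load i (φ v) else 0) =
      if G'.Adj a v ∧ φ v = .inr i then 1 else 0 := by
    intro v
    rcases φ v with x | j
    · simp [Arms.load, A.arm_eq_nil i _ ha, startCount_nil]
    · simp [Arms.load, ite_and]
  simp only [hold, hnew]
  by_cases hused : ∃ w, G'.Adj a w ∧ φ w = .inr i
  · obtain ⟨w, hw, hwi⟩ := hused
    have hatt := (R.attached w hw).resolve_left (by simp [hwi])
    rw [hwi] at hatt
    obtain ⟨q, hq, hqw⟩ : ∃ q, IsReorientation q (P.path i) ∧ q.head? = some w := by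
      rcases endCount_pos_iff.mp hatt.2 with h | h
      exacts [⟨_, Or.inl rfl, h⟩, ⟨_, Or.inr rfl, h⟩]
    have hiff : ∀ v, (G'.Adj a v ∧ φ v = .inr i) ↔ w = v := fun v =>
      ⟨fun h => R.injOn hw h.1 (hwi.trans h.2.symm), by rintro rfl; exact ⟨hw, hwi⟩⟩
    refine ⟨a :: q, ?_⟩
    convert Reattached.cons (P.nodup i) ha hq using 2 with v
    simp only [hiff, startCount, hqw, Option.some.injEq]
  · refine ⟨P.path i, ?_⟩
    convert Reattached.refl (P.ne_nil i) (P.nodup i) ha using 2 with v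
    exact if_neg fun h => hused ⟨v, h⟩

open Classical in
theorem sum_load (R : Rewiring A G' φ) (v : V) :
    ∑ i, (if G'.Adj a v then A.load i (φ v) else 0) = if G'.Adj a v then 1 else 0 := by
  by_cases hv : G'.Adj a v
  · simp only [hv, if_true]
    rcases hφ : φ v with x | j
    · have hx : G.Adj a x := by
        rcases R.attached v hv with ⟨hvv, hadj⟩ | hatt
        · exact Sum.inl.inj (hvv.symm.trans hφ) ▸ hadj
        · rw [hφ] at hatt
          exact hatt.1
      simp only [Arms.load, A.sum_startCount, hx, if_true]
    · simp [Arms.load]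
  · simp [hv]

open Classical in
theorem exists_pathSystem (R : Rewiring A G' φ) :
    ∃ P' : PathSystem G' k, ∀ v, v ≠ a →
      P'.numEnds v + (if G'.Adj a v then 1 else 0) =
        P.numEnds v + if G.Adj a v then 1 else 0 := by
  have hex : ∀ i, ∃ q, Reattached a (P.path i) q (fun v => A.load i (.inl v))
      (fun v => if G'.Adj a v then A.load i (φ v) else 0) := fun i => by
    by_cases ha : a ∈ P.path i
    exacts [R.exists_reattached_of_mem ha, R.exists_reattached_of_notMem ha]
  choose q hq using hex
  refine ⟨⟨q, fun i => (hq i).ne_nil, fun i => (hq i).nodup, fun e => ?_⟩, fun v hv => ?_⟩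
  · by_cases hae : a ∈ e
    · obtain ⟨v, rfl⟩ := Sym2.mem_iff_exists.mp hae
      simp only [(hq _).count_new, R.sum_load, mem_edgeSet]
    · simp only [(hq _).count_eq e hae, P.sum_count]
      induction e using Sym2.ind with
      | _ u v =>
        simp only [Sym2.mem_iff, not_or] at hae
        simp only [mem_edgeSet, R.adj_iff u v (Ne.symm hae.1) (Ne.symm hae.2)]
  · rw [← R.sum_load v, ← A.sum_startCount v, numEnds, numEnds, ← Finset.sum_add_distrib,
      ← Finset.sum_add_distrib]
    exact Finset.sum_congr rfl fun i _ => (hq i).endCount_add v hv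

end Rewiring

end PathSystem

section Cut
variable {G : SimpleGraph V} {x : V} {T : Finset V} {u v : V}

/-- The graph obtained from `G` by removing the edges joining `x` to `T`. -/
def cut (G : SimpleGraph V) (x : V) (T : Finset V) : SimpleGraph V :=
  G.deleteEdges ((fun t => s(x, t)) '' T)

theorem cut_adj : (cut G x T).Adj u v ↔ G.Adj u v ∧ ¬ (u = x ∧ v ∈ T) ∧ ¬ (v = x ∧ u ∈ T) := by
  simp only [cut, deleteEdges_adj, Set.mem_image, Finset.mem_coe, Sym2.eq_iff]
  grind

theorem cut_adj_of_ne (hu : u ≠ x) (hv : v ≠ x) : (cut G x T).Adj u v ↔ G.Adj u v := by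
  simp [cut_adj, hu, hv]

theorem cut_adj_self : (cut G x T).Adj x v ↔ G.Adj x v ∧ v ∉ T := by
  rw [cut_adj]
  refine and_congr_right fun hxv => ?_
  simp [hxv.ne']

theorem cut_singleton_swap {a b : V} : cut G a {b} = cut G b {a} := by
  simp [cut, Sym2.eq_swap]

theorem cut_comm {y : V} {S : Finset V} : cut (cut G x S) y T = cut (cut G y T) x S := by
  simp only [cut, deleteEdges_deleteEdges, Set.union_comm]

theorem cut_le : cut G x T ≤ G := deleteEdges_le _

theorem cut_lt (hv : v ∈ T) (h : G.Adj x v) : cut G x T < G :=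
  lt_of_le_not_ge cut_le fun hle => (cut_adj_self.mp (hle h)).2 hv

theorem cut_empty : cut G x ∅ = G := by simp [cut]

open Classical in
theorem cut_cut_union {S : Finset V} : cut (cut G x S) x T = cut G x (S ∪ T) := by
  simp only [cut, deleteEdges_deleteEdges, Finset.coe_union, Set.image_union]

theorem mem_nbr_cut_self [Fintype V] : v ∈ nbr (cut G x T) x ↔ v ∈ nbr G x ∧ v ∉ T := by
  rw [mem_nbr, mem_nbr, cut_adj_self]

end Cut

section Chains
variable {α β : Type*} {s : α → α ⊕ β} {b v w : α}

/-- `Leads s b v`: iterating the partial map `s` from `b` reaches `v`. Iteration continues from `u`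
to `x` if `s u = .inl x` and terminates at `u` if `s u = .inr j`. -/
def Leads (s : α → α ⊕ β) : α → α → Prop := Relation.ReflTransGen fun u x => s u = .inl x

theorem Leads.eq_of_terminal {j j' : β} (hv : Leads s b v) (hw : Leads s b w) (hvj : s v = .inr j)
    (hwj : s w = .inr j') : v = w := by
  have hunique : Relator.RightUnique (fun u x => s u = .inl x) :=
    fun u x y hx hy => Sum.inl.inj (hx.symm.trans hy)
  have hstay : ∀ {v w : α} {j : β}, s v = .inr j → Leads s v w → v = w := by
    intro v w j hvj h
    rcases Relation.ReflTransGen.cases_head h with h | ⟨c, hc, -⟩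
    · exact h
    · cases hvj.symm.trans hc
  rcases Relation.ReflTransGen.total_of_right_unique hunique hv hw with h | h
  · exact hstay hvj h
  · exact (hstay hwj h).symm

end Chains

/-- `σ` restricts to an involution of `T`. -/
def InvolutiveOn (σ : V → V) (T : Finset V) : Prop := ∀ t ∈ T, σ t ∈ T ∧ σ (σ t) = t

theorem exists_involutiveOn_of_rightUnique {T : Finset V} {r : V → V → Prop}
    (hmem : ∀ t ∈ T, ∀ t', r t t' → t' ∈ T) (hsymm : ∀ t ∈ T, ∀ t', r t t' → r t' t)
    (hunique : ∀ t ∈ T, ∀ t' t'', r t t' → r t t'' → t' = t'') :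
    ∃ σ, InvolutiveOn σ T ∧ ∀ t ∈ T, ∀ t', r t t' → σ t = t' := by
  classical
  let σ : V → V := fun t => if h : ∃ t', r t t' then h.choose else t
  have hσ : ∀ t ∈ T, ∀ t', r t t' → σ t = t' := by
    intro t ht t' h
    have hex : ∃ t', r t t' := ⟨t', h⟩
    rw [show σ t = hex.choose from dif_pos hex]
    exact hunique t ht _ _ hex.choose_spec h
  refine ⟨σ, fun t ht => ?_, hσ⟩
  by_cases h : ∃ t', r t t'
  · obtain ⟨t', h⟩ := h
    rw [hσ t ht t' h]
    exact ⟨hmem t ht t' h, hσ t' (hmem t ht t' h) t (hsymm t ht t' h)⟩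
  · have hfix : σ t = t := dif_neg h
    rw [hfix]
    exact ⟨ht, hfix⟩

section EndShift
variable [Fintype V]

/-- The end counts `d'` arise from `d` by moving one path end from each vertex of `B` to `a`. -/
structure EndShift (a : V) (B : Finset V) (d d' : V → ℕ) : Prop where
  notMem_center : a ∉ B
  of_mem : ∀ v ∈ B, d' v + 1 = d v
  of_notMem : ∀ v, v ≠ a → v ∉ B → d' v = d v
  sum_eq : ∑ v, d' v = ∑ v, d v

theorem EndShift.center {a : V} {B : Finset V} {d d' : V → ℕ} (h : EndShift a B d d') :
    d' a = d a + B.card := by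
  classical
  have hoff : ∑ v ∈ Finset.univ.erase a, (d' v + if v ∈ B then 1 else 0) =
      ∑ v ∈ Finset.univ.erase a, d v := by
    refine Finset.sum_congr rfl fun v hv => ?_
    split_ifs with hvB
    · exact h.of_mem v hvB
    · exact h.of_notMem v (Finset.ne_of_mem_erase hv) hvB
  have hcard : ∑ v ∈ Finset.univ.erase a, (if v ∈ B then 1 else 0) = B.card := by
    rw [← Finset.card_filter]
    congr 1
    ext v
    simpa using fun hv (hva : v = a) => h.notMem_center (hva ▸ hv)
  have hsum := h.sum_eq
  rw [← Finset.add_sum_erase _ _ (Finset.mem_univ a),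
    ← Finset.add_sum_erase _ _ (Finset.mem_univ a)] at hsum
  rw [Finset.sum_add_distrib, hcard] at hoff
  omega

end EndShift

namespace PathSystem.Arms

open Classical in
/-- Every new edge `ab` is attached to the piece `s b`, which frees the edge previously attached to
that piece, to be attached to the next piece of the chain, and so on. -/
theorem rewiring_of_leads {G G' : SimpleGraph V} {k : ℕ} {P : PathSystem G k} {a : V}
    (A : P.Arms a) {s : V → V ⊕ Fin k} {B : Finset V}
    (hadj : ∀ u v, u ≠ a → v ≠ a → (G'.Adj u v ↔ G.Adj u v))
    (hstar : ∀ v, G'.Adj a v ↔ G.Adj a v ∨ v ∈ B) (hB : ∀ b ∈ B, ¬ G.Adj a b)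
    (hs : ∀ b ∈ B, ∀ v, Leads s b v → A.Attached v (s v))
    (hconf : ∀ b ∈ B, ∀ b' ∈ B, ∀ v w, Leads s b v → Leads s b' w →
      ∀ j, s v = .inr j → s w = .inr j → v = w) :
    Rewiring A G' fun v => if ∃ b ∈ B, Leads s b v then s v else .inl v where
  adj_iff := hadj
  attached v hv := by
    by_cases hC : ∃ b ∈ B, Leads s b v
    · obtain ⟨b, hb, hbv⟩ := hC
      exact Or.inr (if_pos (⟨b, hb, hbv⟩ : ∃ b ∈ B, Leads s b v) ▸ hs b hb v hbv)
    · exact Or.inl ⟨if_neg hC, ((hstar v).mp hv).resolve_right fun h => hC ⟨v, h, .refl⟩⟩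
  injOn := by
    intro v _ w _ hvw
    by_cases hvC : ∃ b ∈ B, Leads s b v <;> by_cases hwC : ∃ b ∈ B, Leads s b w <;>
      simp only [hvC, hwC, if_true, if_false] at hvw
    · obtain ⟨⟨b, hb, hbv⟩, b', hb', hbw⟩ := And.intro hvC hwC
      rcases hsv : s v with x | j
      · have hv := hs b hb v hbv
        have hw := hs b' hb' w hbw
        rw [hsv] at hv
        rw [← hvw, hsv] at hw
        exact hv.2.symm.trans hw.2
      · exact hconf b hb b' hb' v w hbv hbw j hsv (hvw ▸ hsv)
    · obtain ⟨b, hb, hbv⟩ := hvC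
      exact absurd ⟨b, hb, hbv.tail hvw⟩ hwC
    · obtain ⟨b, hb, hbw⟩ := hwC
      exact absurd ⟨b, hb, hbw.tail hvw.symm⟩ hvC
    · exact Sum.inl.inj hvw
  surj x hx := by
    by_cases hC : ∃ b ∈ B, Leads s b x
    · obtain ⟨b, hb, hbx⟩ := hC
      rcases Relation.ReflTransGen.cases_tail hbx with rfl | ⟨w, hw, hwx⟩
      · exact absurd hx (hB _ hb)
      · have hwC : ∃ b ∈ B, Leads s b w := ⟨b, hb, hw⟩
        refine ⟨w, (hstar w).mpr ?_, (if_pos hwC).trans hwx⟩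
        rcases Relation.ReflTransGen.cases_tail hw with rfl | ⟨u, hu, huw⟩
        · exact Or.inr hb
        · have hatt := hs b hb u hu
          rw [huw] at hatt
          exact Or.inl hatt.1
    · exact ⟨x, (hstar x).mpr (Or.inl hx), if_neg hC⟩

variable [Fintype V] {G : SimpleGraph V} {a : V} {T : Finset V} {k : ℕ}

open Classical in
theorem exists_endShift_of_leads {P : PathSystem (cut G a T) k} (A : P.Arms a)
    {s : V → V ⊕ Fin k} {B : Finset V} (hT : T ⊆ nbr G a) (hBT : B ⊆ T)
    (hs : ∀ b ∈ B, ∀ v, Leads s b v → A.Attached v (s v))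
    (hconf : ∀ b ∈ B, ∀ b' ∈ B, ∀ v w, Leads s b v → Leads s b' w →
      ∀ j, s v = .inr j → s w = .inr j → v = w) :
    ∃ d', HasEnds (cut G a (T \ B)) d' ∧ EndShift a B P.numEnds d' := by
  have hB : ∀ b ∈ B, ¬ (cut G a T).Adj a b := fun b hb h => (cut_adj_self.mp h).2 (hBT hb)
  have hstar : ∀ v, (cut G a (T \ B)).Adj a v ↔ (cut G a T).Adj a v ∨ v ∈ B := by
    intro v
    have hBv : v ∈ B → G.Adj a v := fun hv => mem_nbr.mp (hT (hBT hv))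
    simp only [cut_adj_self, Finset.mem_sdiff]
    tauto
  obtain ⟨P', hP'⟩ := (A.rewiring_of_leads
    (fun u v hu hv => by rw [cut_adj_of_ne hu hv, cut_adj_of_ne hu hv]) hstar hB hs
    hconf).exists_pathSystem
  have haB : a ∉ B := fun h => notMem_nbr_self (hT (hBT h))
  refine ⟨P'.numEnds, ⟨k, P', rfl⟩, haB, fun v hv => ?_, fun v hva hv => ?_, ?_⟩
  · simpa [hstar, hv, hB v hv] using hP' v fun h => haB (h ▸ hv)
  · simpa [hstar, hv] using hP' v hva
  · rw [P'.sum_numEnds, P.sum_numEnds]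

end PathSystem.Arms

section AddEdge

/-- The vertices from which some chain of attachments ends at a path avoiding `a`. -/
inductive PathSystem.Arms.Escapes {G : SimpleGraph V} {k : ℕ} {P : PathSystem G k} {a : V}
    (A : P.Arms a) : V → Prop
  | free {v : V} {i : Fin k} : A.Attached v (.inr i) → A.Escapes v
  | arm {v x : V} : A.Attached v (.inl x) → A.Escapes x → A.Escapes v

namespace PathSystem.Arms
variable {G : SimpleGraph V} {k : ℕ} {P : PathSystem G k} {a : V} (A : P.Arms a)

theorem exists_leads_attached :
    ∃ s : V → V ⊕ Fin k, ∀ b v, A.Escapes b → Leads s b v → A.Attached v (s v) := by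
  have hnext : ∀ v, ∃ o, A.Escapes v → A.Attached v o ∧ ∀ x, o = .inl x → A.Escapes x := by
    intro v
    by_cases hv : A.Escapes v
    · cases hv with
      | @free _ i h => exact ⟨.inr i, fun _ => ⟨h, by simp⟩⟩
      | @arm _ x h hx => exact ⟨.inl x, fun _ => ⟨h, by rintro _ ⟨⟩; exact hx⟩⟩
    · exact ⟨.inl v, fun h => absurd h hv⟩
  choose s hs using hnext
  refine ⟨s, fun b v hb hbv => (hs v ?_).1⟩
  induction hbv with
  | refl => exact hb
  | tail _ huv ih => exact (hs _ ih).2 _ huv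

variable [Fintype V]

open Classical in
theorem numEnds_eq_of_not_escapes {v : V} (hva : v ≠ a) (hv : ¬ A.Escapes v) :
    P.numEnds v = ({x ∈ nbr G a | A.farEnd x = v} : Finset V).card := by
  rw [A.numEnds_eq hva, Nat.add_eq_left]
  refine Finset.sum_eq_zero fun i hi => Nat.eq_zero_of_not_pos fun hpos => hv ?_
  exact .free ⟨(Finset.mem_filter.mp hi).2, hpos⟩

open Classical in
/-- Arms ending outside the escaping vertices also start there, so if `b` does not escape, then the
non-escaping vertices carry at most as many path ends as there are non-escaping neighbours. -/
theorem escapes_of_card_lt {b : V} (hba : b ≠ a) (hb : ¬ G.Adj a b)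
    (hlt : ({v ∈ nbr G a | P.numEnds v = 0} : Finset V).card < P.numEnds b) : A.Escapes b := by
  by_contra hesc
  let L : Finset V := {v ∈ nbr G a | ¬ A.Escapes v}
  have hbL : b ∉ L := fun h => hb (mem_nbr.mp (Finset.mem_filter.mp h).1)
  have hL : ∀ v ∈ insert b L, v ≠ a ∧ ¬ A.Escapes v := by
    intro v hv
    rcases Finset.mem_insert.mp hv with rfl | hv
    · exact ⟨hba, hesc⟩
    · exact ⟨ne_of_mem_nbr (Finset.mem_filter.mp hv).1, (Finset.mem_filter.mp hv).2⟩
  have hupper : ∑ v ∈ insert b L, P.numEnds v ≤ L.card := by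
    rw [Finset.sum_congr rfl fun v hv => A.numEnds_eq_of_not_escapes (hL v hv).1 (hL v hv).2,
      ← Finset.card_biUnion fun u _ v _ huv => Finset.disjoint_left.mpr fun x hx hx' =>
        huv ((Finset.mem_filter.mp hx).2.symm.trans (Finset.mem_filter.mp hx').2)]
    refine Finset.card_le_card fun x hx => ?_
    obtain ⟨v, hv, hx⟩ := Finset.mem_biUnion.mp hx
    obtain ⟨hxN, hxv⟩ := Finset.mem_filter.mp hx
    exact Finset.mem_filter.mpr ⟨hxN, fun h => (hL v hv).2 (.arm ⟨mem_nbr.mp hxN, hxv⟩ h)⟩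
  have hlower : L.card ≤ ∑ v ∈ L, P.numEnds v + ({v ∈ L | P.numEnds v = 0} : Finset V).card := by
    rw [Finset.card_eq_sum_ones L, Finset.card_filter (fun v => P.numEnds v = 0) L,
      ← Finset.sum_add_distrib]
    refine Finset.sum_le_sum fun v _ => ?_
    split_ifs <;> omega
  have hzero : ({v ∈ L | P.numEnds v = 0} : Finset V).card ≤
      ({v ∈ nbr G a | P.numEnds v = 0} : Finset V).card :=
    Finset.card_le_card (Finset.filter_subset_filter _ (Finset.filter_subset _ _))
  rw [Finset.sum_insert hbL] at hupper
  omega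

end PathSystem.Arms

open Classical in
theorem HasEnds.exists_endShift_singleton [Fintype V] {G : SimpleGraph V} {a b : V} {d : V → ℕ}
    (hd : HasEnds (cut G a {b}) d) (hab : G.Adj a b)
    (hlt : ({v ∈ nbr G a | v ≠ b ∧ d v = 0} : Finset V).card < d b) :
    ∃ d', HasEnds G d' ∧ EndShift a {b} d d' := by
  obtain ⟨k, P, rfl⟩ := hd
  obtain ⟨A⟩ := P.exists_arms a
  have hesc : A.Escapes b := by
    refine A.escapes_of_card_lt hab.ne' (fun h => by simp [cut_adj_self] at h) ?_
    convert hlt using 2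
    ext v
    simp [mem_nbr_cut_self, and_assoc]
  obtain ⟨s, hs⟩ := A.exists_leads_attached
  simpa [cut_empty] using A.exists_endShift_of_leads (B := {b})
    (by simpa [mem_nbr] using hab) subset_rfl (by simpa using fun v => hs b v hesc) (by
      simp only [Finset.mem_singleton]
      rintro _ rfl _ rfl v w hv hw j hvj hwj
      exact hv.eq_of_terminal hw hvj hwj)

end AddEdge

section AddStar
variable {G : SimpleGraph V} {a : V} {T : Finset V} {k : ℕ}

section Chains
variable {P : PathSystem (cut G a T) k} {A : P.Arms a} {s : V → V ⊕ Fin k} {b b' v : V}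

theorem Leads.adj (hs : ∀ v, G.Adj a v → A.Attached v (s v)) (hb : G.Adj a b)
    (h : Leads s b v) : G.Adj a v := by
  induction h with
  | refl => exact hb
  | tail _ huv ih =>
    have hatt := hs _ ih
    rw [huv] at hatt
    exact cut_le hatt.1

theorem Leads.eq_of_mem (hs : ∀ v, G.Adj a v → A.Attached v (s v)) (hb : G.Adj a b)
    (h : Leads s b v) (hv : v ∈ T) : b = v := by
  rcases Relation.ReflTransGen.cases_tail h with h | ⟨u, hu, huv⟩
  · exact h.symm
  · have hatt := hs u (Leads.adj hs hb hu)
    rw [huv] at hatt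
    exact absurd hv (cut_adj_self.mp hatt.1).2

theorem Leads.eq_of_leads (hT : ∀ t ∈ T, G.Adj a t) (hs : ∀ v, G.Adj a v → A.Attached v (s v))
    (hb : b ∈ T) (hb' : b' ∈ T) (h : Leads s b v) (h' : Leads s b' v) : b = b' := by
  induction h generalizing b' with
  | refl => exact (Leads.eq_of_mem hs (hT b' hb') h' hb).symm
  | @tail u v hu huv ih =>
    rcases Relation.ReflTransGen.cases_tail h' with rfl | ⟨w, hw, hwv⟩
    · exact Leads.eq_of_mem hs (hT b hb) (hu.tail huv) hb'
    · have hattu := hs u (Leads.adj hs (hT b hb) hu)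
      have hattw := hs w (Leads.adj hs (hT b' hb') hw)
      rw [huv] at hattu
      rw [hwv] at hattw
      have hwu : w = u := hattw.2.symm.trans hattu.2
      exact ih hb' (hwu ▸ hw)

/-- The chains of attachments from `t` and from `t' ∈ T` terminate at opposite ends of the same
path, so that at most one of the edges `at` and `at'` can be added. -/
def Conflict (s : V → V ⊕ Fin k) (T : Finset V) (t t' : V) : Prop :=
  t' ∈ T ∧ ∃ j v w, v ≠ w ∧ Leads s t v ∧ Leads s t' w ∧ s v = .inr j ∧ s w = .inr j

theorem Conflict.unique (hT : ∀ t ∈ T, G.Adj a t) (hs : ∀ v, G.Adj a v → A.Attached v (s v))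
    {t t' t'' : V} (ht : t ∈ T) (h' : Conflict s T t t') (h'' : Conflict s T t t'') : t' = t'' := by
  obtain ⟨ht', j, v, w, hvw, hv, hw, hvj, hwj⟩ := h'
  obtain ⟨ht'', i, x, y, hxy, hx, hy, hxi, hyi⟩ := h''
  obtain rfl := hv.eq_of_terminal hx hvj hxi
  obtain rfl : j = i := Sum.inr.inj (hvj.symm.trans hxi)
  have hattv := hvj ▸ hs v (Leads.adj hs (hT t ht) hv)
  have hattw := hwj ▸ hs w (Leads.adj hs (hT t' ht') hw)
  have hatty := hyi ▸ hs y (Leads.adj hs (hT t'' ht'') hy)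
  obtain rfl := hattv.unique hattw hatty hvw hxy
  exact Leads.eq_of_leads hT hs ht' ht'' hw hy

end Chains

open Classical in
/-- Two edges at `a` can only obstruct each other when their chains of attachments end at the two
ends of one path; `σ` exchanges such pairs. -/
theorem HasEnds.exists_involutiveOn_endShift [Fintype V] {d : V → ℕ} (hd : HasEnds (cut G a T) d)
    (hT : T ⊆ nbr G a) (hpos : ∀ v ∈ nbr G a, 1 ≤ d v) :
    ∃ σ : V → V, InvolutiveOn σ T ∧ ∀ B ⊆ T, (∀ t ∈ B, σ t ∈ B → σ t = t) →
      ∃ d', HasEnds (cut G a (T \ B)) d' ∧ EndShift a B d d' := by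
  obtain ⟨k, P, rfl⟩ := hd
  obtain ⟨A⟩ := P.exists_arms a
  have hT' : ∀ t ∈ T, G.Adj a t := fun t ht => mem_nbr.mp (hT ht)
  have hatt : ∀ v, ∃ o, G.Adj a v → A.Attached v o := fun v => by
    by_cases hv : G.Adj a v
    · obtain ⟨o, ho⟩ := A.exists_attached hv.ne' (hpos v (mem_nbr.mpr hv))
      exact ⟨o, fun _ => ho⟩
    · exact ⟨.inl v, fun h => absurd h hv⟩
  choose s hs using hatt
  obtain ⟨σ, hσ, hσr⟩ := exists_involutiveOn_of_rightUnique (T := T) (r := Conflict s T)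
    (fun _ _ _ h => h.1)
    (fun t ht t' ⟨_, j, v, w, hvw, hv, hw, hvj, hwj⟩ => ⟨ht, j, w, v, hvw.symm, hw, hv, hwj, hvj⟩)
    (fun t ht t' t'' => Conflict.unique hT' hs ht)
  refine ⟨σ, hσ, fun B hBT hB => ?_⟩
  exact A.exists_endShift_of_leads hT hBT
    (fun b hb v hv => hs v (hv.adj hs (hT' b (hBT hb)))) (by
      intro b hb b' hb' v w hv hw j hvj hwj
      by_contra hvw
      have hbb' : σ b = b' := hσr b (hBT hb) b' ⟨hBT hb', j, v, w, hvw, hv, hw, hvj, hwj⟩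
      obtain rfl : b = b' := (hB b hb (hbb' ▸ hb')).symm.trans hbb'
      exact hvw (hv.eq_of_terminal hw hvj hwj))

end AddStar

section CutDegrees
variable [Fintype V] {G H : SimpleGraph V} {x v t : V} {T : Finset V}

theorem nbr_mono (h : H ≤ G) (v : V) : nbr H v ⊆ nbr G v :=
  fun _ hw => mem_nbr.mpr (h (mem_nbr.mp hw))

theorem nbr_cut_of_notMem (hv : v ≠ x) (hvT : v ∉ T) : nbr (cut G x T) v = nbr G v := by
  ext w
  rw [mem_nbr, mem_nbr, cut_adj]
  tauto

open Classical in
theorem card_nbr_cut_self (hT : T ⊆ nbr G x) :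
    (nbr (cut G x T) x).card + T.card = (nbr G x).card := by
  rw [← Finset.card_sdiff_add_card_eq_card hT]
  congr 2
  ext v
  rw [mem_nbr_cut_self, Finset.mem_sdiff]

open Classical in
theorem card_nbr_cut_of_mem (hT : T ⊆ nbr G x) (ht : t ∈ T) :
    (nbr (cut G x T) t).card + 1 = (nbr G t).card := by
  have hx : x ∈ nbr G t := mem_nbr.mpr (mem_nbr.mp (hT ht)).symm
  have htx : t ≠ x := ne_of_mem_nbr (hT ht)
  rw [← Finset.card_erase_add_one hx]
  congr 2
  ext v
  rw [mem_nbr, cut_adj, Finset.mem_erase, mem_nbr]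
  tauto

theorem EndShift.even_add_card_nbr_cut_iff {d e : V → ℕ} (h : EndShift x T e d)
    (hT : T ⊆ nbr G x) (v : V) :
    Even (e v + (nbr (cut G x T) v).card) ↔ Even (d v + (nbr G v).card) := by
  rcases eq_or_ne v x with rfl | hvx
  · rw [h.center, ← card_nbr_cut_self hT]
    simp only [Nat.even_add]
    tauto
  · by_cases hvT : v ∈ T
    · rw [← h.of_mem v hvT, ← card_nbr_cut_of_mem hT hvT]
      congr! 1
      ring
    · rw [h.of_notMem v hvx hvT, nbr_cut_of_notMem hvx hvT]

end CutDegrees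

section PrescribedEnds

theorem EndShift.eq_of_endShift [Fintype V] {a : V} {B : Finset V} {d d' d'' : V → ℕ}
    (h' : EndShift a B d d') (h'' : EndShift a B d d'') : d' = d'' := by
  funext v
  by_cases hvB : v ∈ B
  · exact Nat.add_right_cancel ((h'.of_mem v hvB).trans (h''.of_mem v hvB).symm)
  · rcases eq_or_ne v a with rfl | hva
    · rw [h'.center, h''.center]
    · rw [h'.of_notMem v hva hvB, h''.of_notMem v hva hvB]

theorem exists_endShift_singleton_of_ne_zero [Fintype V] {a b : V} {d : V → ℕ} (hab : a ≠ b)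
    (ha : d a ≠ 0) : ∃ e, EndShift a {b} e d := by
  classical
  let e : V → ℕ := fun v => if v = a then d a - 1 else if v = b then d b + 1 else d v
  have hpoint : ∀ v, d v + (if v = b then 1 else 0) = e v + (if v = a then 1 else 0) := by
    intro v
    simp only [e]
    split_ifs <;> grind
  refine ⟨e, by simpa using hab, by simp [e, hab.symm], fun v hva hvb => ?_, ?_⟩
  · simp only [e, if_neg hva, if_neg (Finset.mem_singleton.not.mp hvb)]
  · have hsum := Finset.sum_congr rfl fun v (_ : v ∈ Finset.univ) => hpoint v
    simpa [Finset.sum_add_distrib] using hsum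

open Classical in
theorem HasEnds.of_fintype {G : SimpleGraph V} {d : V → ℕ} {ι : Type*} [Fintype ι]
    (p : ι → List V) (hne : ∀ i, p i ≠ []) (hnodup : ∀ i, (p i).Nodup)
    (hcount : ∀ e, ∑ i, (listEdges (p i)).count e = if e ∈ G.edgeSet then 1 else 0)
    (hends : ∀ v, ∑ i, endCount (p i) v = d v) : HasEnds G d := by
  let f := (Fintype.equivFin ι).symm
  refine ⟨Fintype.card ι, ⟨fun i => p (f i), fun i => hne _, fun i => hnodup _, fun e => ?_⟩,
    funext fun v => ?_⟩
  · exact (Equiv.sum_comp f fun i => (listEdges (p i)).count e).trans (hcount e)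
  · exact (Equiv.sum_comp f fun i => endCount (p i) v).trans (hends v)

theorem hasEnds_bot [Finite V] {d : V → ℕ} (hd : ∀ v, Even (d v)) :
    HasEnds (⊥ : SimpleGraph V) d := by
  classical
  cases nonempty_fintype V
  refine HasEnds.of_fintype (ι := Σ v : V, Fin (d v / 2)) (fun i => [i.1]) (by simp) (by simp)
    (fun e => by simp [listEdges, headEdge]) fun v => ?_
  rw [Fintype.sum_sigma, Finset.sum_eq_single v]
  · obtain ⟨k, hk⟩ := hd v
    simp [endCount, startCount]
    omega
  · intro w _ hw
    simp [endCount, startCount, hw]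
  · simp

variable [Fintype V] {d : V → ℕ}

theorem exists_adj_of_zero_unique {G : SimpleGraph V} (hG : G ≠ ⊥)
    (hzero : ∀ u v, d u = 0 → d v = 0 → (nbr G u).Nonempty → (nbr G v).Nonempty → u = v) :
    ∃ a b, G.Adj a b ∧ ∀ v, d v = 0 → (nbr G v).Nonempty → v = b := by
  by_cases hb : ∃ b, d b = 0 ∧ (nbr G b).Nonempty
  · obtain ⟨b, hb0, a, ha⟩ := hb
    exact ⟨a, b, (mem_nbr.mp ha).symm, fun v hv hvn => hzero v b hv hb0 hvn ⟨a, ha⟩⟩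
  · obtain ⟨a, b, hab⟩ := G.ne_bot_iff_exists_adj.mp hG
    exact ⟨a, b, hab, fun v h0 hv => absurd ⟨v, h0, hv⟩ hb⟩

/-- Induction on `G`: if `b` is the only non-isolated zero of `d` and `ab` is an edge, then moving
a path end from `a` to `b` and deleting `ab` leaves only `a` as a possible non-isolated zero. -/
theorem HasEnds.of_parity {G : SimpleGraph V} (hpar : ∀ v, Even (d v + (nbr G v).card))
    (hzero : ∀ u v, d u = 0 → d v = 0 → (nbr G u).Nonempty → (nbr G v).Nonempty → u = v) :
    HasEnds G d := by
  classical
  induction G using WellFoundedLT.induction generalizing d with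
  | ind G ih =>
  rcases eq_or_ne G ⊥ with rfl | hG
  · exact hasEnds_bot fun v => by simpa [nbr] using hpar v
  obtain ⟨a, b, hab, hb⟩ := exists_adj_of_zero_unique hG hzero
  have ha0 : d a ≠ 0 := fun h => hab.ne (hb a h ⟨b, mem_nbr.mpr hab⟩)
  obtain ⟨e, he⟩ := exists_endShift_singleton_of_ne_zero hab.ne ha0
  have heb : d b + 1 = e b := he.of_mem b (Finset.mem_singleton_self b)
  have hzero_e : ∀ v, e v = 0 → (nbr G v).Nonempty → v = a := by
    intro v h0 hv
    by_contra hva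
    rcases eq_or_ne v b with rfl | hvb
    · omega
    · exact hvb (hb v ((he.of_notMem v hva (by simpa using hvb)).trans h0) hv)
  have hcut : HasEnds (cut G a {b}) e := by
    refine ih _ (cut_lt (Finset.mem_singleton_self b) hab) (fun v => ?_) fun u v hu hv hun hvn => ?_
    · exact (he.even_add_card_nbr_cut_iff (by simpa [mem_nbr] using hab) v).mpr (hpar v)
    · rw [hzero_e u hu (hun.mono (nbr_mono cut_le u)), hzero_e v hv (hvn.mono (nbr_mono cut_le v))]
  have hblock : ({v ∈ nbr G a | v ≠ b ∧ e v = 0} : Finset V) = ∅ := by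
    refine Finset.filter_eq_empty_iff.mpr ?_
    rintro v hv ⟨-, hv0⟩
    exact ne_of_mem_nbr hv (hzero_e v hv0 ⟨a, mem_nbr.mpr (mem_nbr.mp hv).symm⟩)
  obtain ⟨d', hd', hshift⟩ := hcut.exists_endShift_singleton hab (by rw [hblock]; simp; omega)
  exact hshift.eq_of_endShift he ▸ hd'

end PrescribedEnds

section AddBack
variable [Fintype V] {G : SimpleGraph V} {x a b : V} {M : Finset V} {d d' d'' : V → ℕ}

theorem EndShift.symm_singleton (h : EndShift a {b} d d') : EndShift b {a} d' d where
  notMem_center := by simpa [eq_comm] using h.notMem_center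
  of_mem := by simpa using h.center.symm
  of_notMem v hvb hva := (h.of_notMem v (by simpa using hva) (by simpa using hvb)).symm
  sum_eq := h.sum_eq.symm

theorem EndShift.refl (a : V) (d : V → ℕ) : EndShift a ∅ d d :=
  ⟨Finset.notMem_empty a, by simp, fun _ _ _ => rfl, rfl⟩

open Classical in
theorem EndShift.trans {B C : Finset V} (h : EndShift a B d d') (h' : EndShift a C d' d'')
    (hBC : Disjoint B C) : EndShift a (B ∪ C) d d'' where
  notMem_center := by simpa using ⟨h.notMem_center, h'.notMem_center⟩
  of_mem v hv := by
    have hva : v ≠ a := by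
      rintro rfl
      exact (Finset.mem_union.mp hv).elim h.notMem_center h'.notMem_center
    rcases Finset.mem_union.mp hv with hv | hv
    · rw [h'.of_notMem v hva (Finset.disjoint_left.mp hBC hv), h.of_mem v hv]
    · rw [h'.of_mem v hv, h.of_notMem v hva (Finset.disjoint_right.mp hBC hv)]
  of_notMem v hva hv := by
    rw [Finset.mem_union, not_or] at hv
    rw [h'.of_notMem v hva hv.2, h.of_notMem v hva hv.1]
  sum_eq := h'.sum_eq.trans h.sum_eq

open Classical in
theorem HasEnds.exists_endShift_center_singleton {t : V} (hd : HasEnds (cut G x {t}) d)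
    (hxt : G.Adj x t) (hlt : ({v ∈ nbr G t | v ≠ x ∧ d v = 0} : Finset V).card < d x) :
    ∃ d', HasEnds G d' ∧ EndShift x {t} d' d := by
  rw [cut_singleton_swap] at hd
  obtain ⟨d', hd', h⟩ := hd.exists_endShift_singleton hxt.symm hlt
  exact ⟨d', hd', h.symm_singleton⟩

open Classical in
/-- The edges from `x` to `M` are added one at a time, each using up one path end at `x`. -/
theorem HasEnds.exists_endShift_center {c : ℕ} (hM : M ⊆ nbr G x) (hd : HasEnds (cut G x M) d)
    (hc : ∀ t ∈ M, ({v ∈ nbr G t | v ≠ x ∧ d v = 0} : Finset V).card ≤ c)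
    (hx : M.Nonempty → M.card + c ≤ d x) : ∃ d', HasEnds G d' ∧ EndShift x M d' d := by
  induction M using Finset.induction_on generalizing d with
  | empty => exact ⟨d, by rwa [cut_empty] at hd, .refl x d⟩
  | insert t M ht ih =>
    have hcard := hx ⟨t, by simp⟩
    rw [Finset.card_insert_of_notMem ht] at hcard
    have hxt : G.Adj x t := mem_nbr.mp (hM (Finset.mem_insert_self t M))
    have hcut : cut G x (insert t M) = cut (cut G x M) x {t} := by
      rw [cut_cut_union, Finset.union_comm, Finset.insert_eq]
    have hlt : ({v ∈ nbr (cut G x M) t | v ≠ x ∧ d v = 0} : Finset V).card ≤ c :=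
      (Finset.card_le_card (Finset.filter_subset_filter _ (nbr_mono cut_le t))).trans
        (hc t (Finset.mem_insert_self t M))
    obtain ⟨d₁, hd₁, h₁⟩ := (hcut ▸ hd).exists_endShift_center_singleton
      (cut_adj_self.mpr ⟨hxt, ht⟩) (by omega)
    have hd₁x : d x = d₁ x + 1 := by simpa using h₁.center
    have hzero : ∀ v, v ≠ x → d₁ v = 0 → d v = 0 := by
      intro v hvx hv
      by_cases hvt : v ∈ ({t} : Finset V)
      · have := h₁.of_mem v hvt
        omega
      · rw [h₁.of_notMem v hvx hvt, hv]
    obtain ⟨d₂, hd₂, h₂⟩ := ih ((Finset.subset_insert t M).trans hM) hd₁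
      (fun s hs => (Finset.card_le_card (Finset.monotone_filter_right _
        fun v _ hv => ⟨hv.1, hzero v hv.1 hv.2⟩)).trans (hc s (Finset.mem_insert_of_mem hs)))
      (fun _ => by omega)
    refine ⟨d₂, hd₂, ?_⟩
    rw [Finset.insert_eq, Finset.union_comm]
    exact h₂.trans h₁ (by simpa using ht)

end AddBack

section Selection
variable {σ : V → V} {S T B : Finset V}

open Classical in
/-- The fixed points of `σ` in `T`. -/
noncomputable def fixedOn (σ : V → V) (T : Finset V) : Finset V := {t ∈ T | σ t = t}

theorem mem_fixedOn {t : V} : t ∈ fixedOn σ T ↔ t ∈ T ∧ σ t = t := by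
  classical exact Finset.mem_filter

theorem fixedOn_mono {K : Finset V} (h : K ⊆ T) : fixedOn σ K ⊆ fixedOn σ T := by
  classical exact Finset.filter_subset_filter _ h

open Classical in
/-- `B` consists of one vertex from every orbit of the involution `σ` of `T`; from an orbit with
exactly one vertex in `S`, the vertex outside `S` is taken. -/
structure IsTransversal (σ : V → V) (T S B : Finset V) : Prop where
  subset : B ⊆ T
  fixed : ∀ t ∈ B, σ t ∈ B → σ t = t
  notMem : ∀ t ∈ S, σ t ∉ S → t ∉ B
  card_eq : B.card = (T \ B).card + (fixedOn σ T).card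

theorem InvolutiveOn.exists_isTransversal (hσ : InvolutiveOn σ T) (S : Finset V) :
    ∃ B, IsTransversal σ T S B := by
  classical
  obtain ⟨f, hf⟩ := Set.countable_iff_exists_injOn.mp T.countable_toSet
  let rank : V → ℕ ×ₗ ℕ := fun t => toLex (if t ∈ S then 1 else 0, f t)
  have hrank : ∀ t ∈ T, rank t = rank (σ t) → σ t = t := fun t ht h =>
    (hf ht (hσ t ht).1 (Prod.ext_iff.mp (toLex.injective h)).2).symm
  have hσ_mem : ∀ t ∈ T, σ t ∈ T := fun t ht => (hσ t ht).1
  have hσσ : ∀ t ∈ T, σ (σ t) = t := fun t ht => (hσ t ht).2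
  let B : Finset V := {t ∈ T | rank t ≤ rank (σ t)}
  have hmem : ∀ t, t ∈ B ↔ t ∈ T ∧ rank t ≤ rank (σ t) := fun t => Finset.mem_filter
  have hfixed : ∀ t ∈ B, σ t ∈ B → σ t = t := by
    intro t ht hσt
    refine hrank t ((hmem t).mp ht).1 (le_antisymm ((hmem t).mp ht).2 ?_)
    simpa only [hσσ t ((hmem t).mp ht).1] using ((hmem _).mp hσt).2
  refine ⟨B, Finset.filter_subset _ _, hfixed, fun t htS hσtS htB => ?_, ?_⟩
  · refine absurd ((hmem t).mp htB).2 (not_le.mpr ?_)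
    exact Prod.Lex.toLex_lt_toLex.mpr (Or.inl (by simp [htS, hσtS]))
  · have hfixedOn : fixedOn σ T = {t ∈ B | σ t = t} := by
      ext t
      rw [mem_fixedOn, Finset.mem_filter, hmem]
      exact ⟨fun h => ⟨⟨h.1, by rw [h.2]⟩, h.2⟩, fun h => ⟨h.1.1, h.2⟩⟩
    rw [hfixedOn, ← Finset.card_filter_add_card_filter_not (s := B) (fun t => σ t = t), add_comm,
      Nat.add_right_cancel_iff]
    refine Finset.card_nbij' σ σ (fun t ht => ?_) (fun t ht => ?_) ?_ ?_
    · obtain ⟨htB, hne⟩ := Finset.mem_filter.mp ht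
      exact Finset.mem_coe.mpr (Finset.mem_sdiff.mpr
        ⟨hσ_mem t ((hmem t).mp htB).1, fun h => hne (hfixed t htB h)⟩)
    · obtain ⟨htT, htB⟩ := Finset.mem_sdiff.mp ht
      have hlt : ¬ rank t ≤ rank (σ t) := fun h => htB ((hmem t).mpr ⟨htT, h⟩)
      refine Finset.mem_coe.mpr (Finset.mem_filter.mpr ⟨(hmem _).mpr ⟨hσ_mem t htT, ?_⟩, ?_⟩)
      · simpa only [hσσ t htT] using (not_le.mp hlt).le
      · rw [hσσ t htT]
        exact fun h => hlt (by rw [← h])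
    · exact fun t ht => hσσ t ((hmem t).mp (Finset.mem_filter.mp ht).1).1
    · exact fun t ht => hσσ t (Finset.mem_sdiff.mp ht).1

theorem InvolutiveOn.card_fixedOn_mod_two (hσ : InvolutiveOn σ T) :
    (fixedOn σ T).card % 2 = T.card % 2 := by
  classical
  obtain ⟨B, hB⟩ := hσ.exists_isTransversal ∅
  have hcard := hB.card_eq
  have hsplit := Finset.card_sdiff_add_card_eq_card hB.subset
  omega

theorem InvolutiveOn.one_le_add_card_fixedOn (hσ : InvolutiveOn σ T) {n : ℕ}
    (hn : Even T.card → 1 ≤ n) : 1 ≤ n + (fixedOn σ T).card := by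
  have hmod := hσ.card_fixedOn_mod_two
  rw [Nat.even_iff] at hn
  omega

end Selection
section AddStarBack
variable [Fintype V] {G : SimpleGraph V} {x : V} {T M : Finset V} {d : V → ℕ} {σ : V → V}

open Classical in
/-- The neighbours `v ≠ x` of `t` at which possibly no path ends once a path end has been taken away
from some vertices of `T`. They obstruct adding the edge `tx` by shortening a path ending at `x`. -/
noncomputable def blockers (G : SimpleGraph V) (x : V) (d : V → ℕ) (T : Finset V) (t : V) :
    Finset V :=
  {v ∈ nbr G t | v ≠ x ∧ (d v = 0 ∨ v ∈ T)}

theorem mem_blockers {t v : V} :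
    v ∈ blockers G x d T t ↔ v ∈ nbr G t ∧ v ≠ x ∧ (d v = 0 ∨ v ∈ T) := by
  classical exact Finset.mem_filter

theorem blockers_mono {B : Finset V} (h : B ⊆ T) (t : V) :
    blockers G x d B t ⊆ blockers G x d T t := fun v hv => by
  rw [mem_blockers] at hv ⊢
  exact ⟨hv.1, hv.2.1, hv.2.2.imp_right (@h v)⟩

open Classical in
theorem EndShift.filter_eq_zero_subset_blockers {B : Finset V} {d' : V → ℕ}
    (h : EndShift x B d d') (t : V) :
    ({v ∈ nbr G t | v ≠ x ∧ d' v = 0} : Finset V) ⊆ blockers G x d B t := fun v hv => by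
  obtain ⟨hvt, hvx, hv0⟩ := Finset.mem_filter.mp hv
  refine mem_blockers.mpr ⟨hvt, hvx, or_iff_not_imp_right.mpr fun hvB => ?_⟩
  rw [← h.of_notMem v hvx hvB, hv0]

open Classical in
theorem HasEnds.exists_endShift_center_of_last {c : ℕ} {t : V} (hM : M ⊆ nbr G x) (htM : t ∈ M)
    (hd : HasEnds (cut G x M) d)
    (hc : ∀ s ∈ M, ({v ∈ nbr G s | v ≠ x ∧ d v = 0} : Finset V).card ≤ c + 1)
    (ht : ({v ∈ nbr G t | v ≠ x ∧ d v = 0} : Finset V).card ≤ c) (hx : M.card + c ≤ d x) :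
    ∃ d', HasEnds G d' ∧ EndShift x M d' d := by
  have hcut : cut G x M = cut (cut G x {t}) x (M.erase t) := by
    rw [cut_cut_union, ← Finset.insert_eq, Finset.insert_erase htM]
  have hcard := Finset.card_erase_add_one htM
  obtain ⟨d₁, hd₁, h₁⟩ := (hcut ▸ hd).exists_endShift_center (c := c + 1)
    (fun s hs => mem_nbr_cut_self.mpr
      ⟨hM (Finset.mem_of_mem_erase hs), by simpa using Finset.ne_of_mem_erase hs⟩)
    (fun s hs => (Finset.card_le_card (Finset.filter_subset_filter _ (nbr_mono cut_le s))).trans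
      (hc s (Finset.mem_of_mem_erase hs))) (fun _ => by omega)
  have hcenter := h₁.center
  have hzero : ∀ v, v ≠ x → d₁ v = 0 → d v = 0 := by
    intro v hvx hv
    by_cases hvM : v ∈ M.erase t
    · have := h₁.of_mem v hvM
      omega
    · rw [h₁.of_notMem v hvx hvM, hv]
  obtain ⟨d₂, hd₂, h₂⟩ := hd₁.exists_endShift_center_singleton (mem_nbr.mp (hM htM)) (by
    have hle := Finset.card_le_card (Finset.monotone_filter_right (nbr G t)
      (p := fun v => v ≠ x ∧ d₁ v = 0) (q := fun v => v ≠ x ∧ d v = 0)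
      fun v _ hv => ⟨hv.1, hzero v hv.1 hv.2⟩)
    omega)
  refine ⟨d₂, hd₂, ?_⟩
  rw [← Finset.insert_erase htM, Finset.insert_eq]
  exact h₂.trans h₁ (by simp)

/-- Path ends are redistributed among `x` and the vertices of `T`, without loss at `x`. -/
structure Redistribution (x : V) (T : Finset V) (d d' : V → ℕ) : Prop where
  le_center : d x ≤ d' x
  of_notMem : ∀ v, v ≠ x → v ∉ T → d' v = d v
  sum_eq : ∑ v, d' v = ∑ v, d v

open Classical in
theorem IsTransversal.redistribution {S B : Finset V} {d₁ d₂ : V → ℕ}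
    (hB : IsTransversal σ T S B) (h₁ : EndShift x B d d₁) (h₂ : EndShift x (T \ B) d₂ d₁) :
    Redistribution x T d d₂ where
  le_center := by
    have hcard := hB.card_eq
    have hcenter₁ := h₁.center
    have hcenter₂ := h₂.center
    omega
  of_notMem v hvx hvT := by
    rw [← h₂.of_notMem v hvx fun h => hvT (Finset.mem_sdiff.mp h).1,
      h₁.of_notMem v hvx fun h => hvT (hB.subset h)]
  sum_eq := h₂.sum_eq.symm.trans h₁.sum_eq

/-- Adding the edges from `x` to one vertex of each orbit of `σ` leaves enough path ends at `x` to
add the other edges from `x` to `T`: at least two spare ends, or no other edges, or one spare end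
and, for a suitable choice of orbit representatives, an edge `xt` with at most one blocker that can
be added last. -/
def StarAddable (G : SimpleGraph V) (x : V) (T : Finset V) (d : V → ℕ) (σ : V → V) : Prop :=
  2 ≤ d x + (fixedOn σ T).card ∨ fixedOn σ T = T ∨
    (1 ≤ d x + (fixedOn σ T).card ∧ ∃ S ⊆ T, ∃ t ∈ S, σ t ∉ S ∧
      ∀ B, IsTransversal σ T S B → (blockers G x d B t).card ≤ 1)

theorem StarAddable.exists_isTransversal (hσ : InvolutiveOn σ T) (h : StarAddable G x T d σ) :
    ∃ S B, IsTransversal σ T S B ∧ (2 ≤ d x + (fixedOn σ T).card ∨ fixedOn σ T = T ∨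
      (1 ≤ d x + (fixedOn σ T).card ∧ ∃ t ∈ T, t ∉ B ∧ (blockers G x d B t).card ≤ 1)) := by
  rcases h with h | h | ⟨h, S, hST, t, htS, hσt, ht⟩
  · obtain ⟨B, hB⟩ := hσ.exists_isTransversal ∅
    exact ⟨∅, B, hB, Or.inl h⟩
  · obtain ⟨B, hB⟩ := hσ.exists_isTransversal ∅
    exact ⟨∅, B, hB, Or.inr (Or.inl h)⟩
  · obtain ⟨B, hB⟩ := hσ.exists_isTransversal S
    exact ⟨S, B, hB, Or.inr (Or.inr ⟨h, t, hST htS, hB.notMem t htS hσt, ht B hB⟩)⟩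

/-- Add the edges to a transversal `B` of `σ` first; this moves `B.card` path ends to `x`, which
suffices to add the edges to `T \ B`. -/
theorem HasEnds.exists_redistribution (hT : T ⊆ nbr G x) (hd : HasEnds (cut G x T) d)
    (hpos : ∀ v ∈ nbr G x, 1 ≤ d v) (hblock : ∀ t ∈ T, (blockers G x d T t).card ≤ 2)
    (hadd : ∀ σ, InvolutiveOn σ T → StarAddable G x T d σ) :
    ∃ d', HasEnds G d' ∧ Redistribution x T d d' := by
  classical
  obtain ⟨σ, hσ, hshift⟩ := hd.exists_involutiveOn_endShift hT hpos
  obtain ⟨S, B, hB, hcases⟩ := (hadd σ hσ).exists_isTransversal hσ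
  obtain ⟨d₁, hd₁, h₁⟩ := hshift B hB.subset hB.fixed
  have hcenter := h₁.center
  have hcard := hB.card_eq
  have hsplit := Finset.card_sdiff_add_card_eq_card hB.subset
  have hM : T \ B ⊆ nbr G x := Finset.sdiff_subset.trans hT
  have hzero : ∀ t ∈ T \ B, ({v ∈ nbr G t | v ≠ x ∧ d₁ v = 0} : Finset V).card ≤ 2 := fun t ht =>
    (Finset.card_le_card ((h₁.filter_eq_zero_subset_blockers t).trans
      (blockers_mono hB.subset t))).trans (hblock t (Finset.mem_sdiff.mp ht).1)
  obtain ⟨d₂, hd₂, h₂⟩ : ∃ d₂, HasEnds G d₂ ∧ EndShift x (T \ B) d₂ d₁ := by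
    rcases hcases with h | h | ⟨h, t, htT, htB, ht⟩
    · exact hd₁.exists_endShift_center hM hzero fun _ => by omega
    · rw [h] at hcard
      refine hd₁.exists_endShift_center hM hzero fun hne => ?_
      have := hne.card_pos
      omega
    · exact hd₁.exists_endShift_center_of_last hM (Finset.mem_sdiff.mpr ⟨htT, htB⟩) hzero
        ((Finset.card_le_card (h₁.filter_eq_zero_subset_blockers t)).trans ht) (by omega)
  exact ⟨d₂, hd₂, hB.redistribution h₁ h₂⟩

end AddStarBack

section StarAddable
variable [Fintype V] {G : SimpleGraph V} {x : V} {T K : Finset V} {d : V → ℕ} {σ : V → V}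

theorem StarAddable.of_odd (hσ : InvolutiveOn σ T) (hodd : Odd T.card) (hx : 1 ≤ d x) :
    StarAddable G x T d σ := by
  have hmod := hσ.card_fixedOn_mod_two
  rw [Nat.odd_iff] at hodd
  left
  omega

theorem StarAddable.of_card_eq_one (hσ : InvolutiveOn σ T) (hT : T.card = 1) :
    StarAddable G x T d σ := by
  obtain ⟨t, rfl⟩ := Finset.card_eq_one.mp hT
  have ht : σ t = t := by simpa using (hσ t (by simp)).1
  refine Or.inr (Or.inl (Finset.ext fun v => ?_))
  rw [mem_fixedOn, Finset.mem_singleton]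
  exact ⟨And.left, fun hv => ⟨hv, hv ▸ ht⟩⟩

theorem StarAddable.of_map_ne {t : V} (hx : 1 ≤ d x + (fixedOn σ T).card) (ht : t ∈ T)
    (hσt : σ t ≠ t) (hblock : (blockers G x d T t).card ≤ 1) : StarAddable G x T d σ :=
  Or.inr <| Or.inr ⟨hx, {t}, by simpa using ht, t, by simp, by simpa using hσt,
    fun _ hB => (Finset.card_le_card (blockers_mono hB.subset t)).trans hblock⟩

theorem StarAddable.of_even {t : V} (hσ : InvolutiveOn σ T) (heven : Even T.card)
    (hx : 1 ≤ d x) (ht : t ∈ T) (hblock : (blockers G x d T t).card ≤ 1) :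
    StarAddable G x T d σ := by
  by_cases hσt : σ t = t
  · have hmod := hσ.card_fixedOn_mod_two
    have hpos : 0 < (fixedOn σ T).card := Finset.card_pos.mpr ⟨t, mem_fixedOn.mpr ⟨ht, hσt⟩⟩
    rw [Nat.even_iff] at heven
    left
    omega
  · exact .of_map_ne (by omega) ht hσt hblock

theorem StarAddable.of_two {t t' : V} (hσ : InvolutiveOn σ T) (hx : Even T.card → 1 ≤ d x)
    (ht : t ∈ T) (ht' : t' ∈ T) (hne : t ≠ t') (hblock : (blockers G x d T t).card ≤ 1)
    (hblock' : (blockers G x d T t').card ≤ 1) : StarAddable G x T d σ := by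
  by_cases hσt : σ t = t
  · by_cases hσt' : σ t' = t'
    · refine Or.inl (le_add_left (Finset.one_lt_card.mpr ⟨t, ?_, t', ?_, hne⟩))
      exacts [mem_fixedOn.mpr ⟨ht, hσt⟩, mem_fixedOn.mpr ⟨ht', hσt'⟩]
    · exact .of_map_ne (hσ.one_le_add_card_fixedOn hx) ht' hσt' hblock'
  · exact .of_map_ne (hσ.one_le_add_card_fixedOn hx) ht hσt hblock

/-- If a transversal containing no vertex of `K` whose orbit leaves `K` left two blockers of `p`,
these would be the two other vertices of `K`, and both would be fixed. -/
theorem StarAddable.of_triple {p : V} (hσ : InvolutiveOn σ T)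
    (hx : 1 ≤ d x + (fixedOn σ T).card) (hpos : ∀ t ∈ T, 1 ≤ d t) (hKT : K ⊆ T)
    (hK : K.card = 3) (hp : p ∈ K) (hblock : blockers G x d T p ⊆ K) (hσp : σ p ∉ K) :
    StarAddable G x T d σ := by
  classical
  by_cases hfixed : 2 ≤ (fixedOn σ T).card
  · exact Or.inl (le_add_left hfixed)
  refine Or.inr (Or.inr ⟨hx, K, hKT, p, hp, hσp, fun B hB => ?_⟩)
  by_contra! hcard
  have hsub : blockers G x d B p ⊆ K.erase p := fun v hv =>
    Finset.mem_erase.mpr ⟨ne_of_mem_nbr (mem_blockers.mp hv).1,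
      hblock (blockers_mono hB.subset p hv)⟩
  have heq : blockers G x d B p = K.erase p :=
    Finset.eq_of_subset_of_card_le hsub (by rw [Finset.card_erase_of_mem hp]; omega)
  have hmemB : ∀ v ∈ K.erase p, v ∈ B := by
    intro v hv
    have hdv := hpos v (hKT (Finset.mem_of_mem_erase hv))
    exact (mem_blockers.mp (heq ▸ hv)).2.2.resolve_left (by omega)
  refine hfixed (hcard.trans_le (Finset.card_le_card fun v hv => ?_))
  have hv := hsub hv
  have hvK := Finset.mem_of_mem_erase hv
  have hσvK : σ v ∈ K := by_contra fun h => hB.notMem v hvK h (hmemB v hv)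
  have hσvp : σ v ≠ p := fun h => hσp (by rwa [← h, (hσ v (hKT hvK)).2])
  exact mem_fixedOn.mpr ⟨hKT hvK,
    hB.fixed v (hmemB v hv) (hmemB _ (Finset.mem_erase.mpr ⟨hσvp, hσvK⟩))⟩

theorem StarAddable.of_two_triples {K' : Finset V} (hσ : InvolutiveOn σ T)
    (hx : Even T.card → 1 ≤ d x) (hpos : ∀ t ∈ T, 1 ≤ d t) (hKT : K ⊆ T) (hKT' : K' ⊆ T)
    (hdisj : Disjoint K K') (hK : K.card = 3) (hK' : K'.card = 3)
    (hblock : ∀ t ∈ K, blockers G x d T t ⊆ K) (hblock' : ∀ t ∈ K', blockers G x d T t ⊆ K') :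
    StarAddable G x T d σ := by
  classical
  have hx' := hσ.one_le_add_card_fixedOn hx
  by_cases hσK : ∀ p ∈ K, σ p ∈ K
  · by_cases hσK' : ∀ p ∈ K', σ p ∈ K'
    · have hmod := InvolutiveOn.card_fixedOn_mod_two fun t ht => ⟨hσK t ht, (hσ t (hKT ht)).2⟩
      have hmod' := InvolutiveOn.card_fixedOn_mod_two fun t ht => ⟨hσK' t ht, (hσ t (hKT' ht)).2⟩
      have hdisj' : Disjoint (fixedOn σ K) (fixedOn σ K') := Finset.disjoint_filter_filter hdisj
      have hle := Finset.card_le_card (Finset.union_subset (fixedOn_mono (σ := σ) hKT)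
        (fixedOn_mono hKT'))
      rw [Finset.card_union_of_disjoint hdisj'] at hle
      left
      omega
    · push Not at hσK'
      obtain ⟨p, hp, hσp⟩ := hσK'
      exact .of_triple hσ hx' hpos hKT' hK' hp (hblock' p hp) hσp
  · push Not at hσK
    obtain ⟨p, hp, hσp⟩ := hσK
    exact .of_triple hσ hx' hpos hKT hK hp (hblock p hp) hσp

end StarAddable

section ThreeElements

theorem eq_or_eq_of_card_le_two {A : Finset V} {a b v : V} (hA : A.card ≤ 2) (ha : a ∈ A)
    (hb : b ∈ A) (hab : a ≠ b) (hv : v ∈ A) : v = a ∨ v = b := by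
  by_contra! h
  exact hA.not_gt (Finset.two_lt_card_iff.mpr ⟨v, a, b, hv, ha, hb, h.1, h.2, hab⟩)

theorem eq_or_eq_or_eq_of_card_le_three {A : Finset V} {a b c v : V} (hA : A.card ≤ 3)
    (ha : a ∈ A) (hb : b ∈ A) (hc : c ∈ A) (hab : a ≠ b) (hac : a ≠ c) (hbc : b ≠ c)
    (hv : v ∈ A) : v = a ∨ v = b ∨ v = c := by
  by_contra! h
  exact hA.not_gt (Finset.three_lt_card_iff.mpr
    ⟨v, a, b, c, hv, ha, hb, hc, h.1, h.2.1, h.2.2, hab, hac, hbc⟩)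

end ThreeElements

section EvenDegree
variable [Fintype V] {G H : SimpleGraph V} {a b x t v w : V} {T : Finset V} {d : V → ℕ}

/-- `v` has even degree in `G`, that is, `v` is a vertex of the E-subgraph of `G`. -/
def EvenDeg (G : SimpleGraph V) (v : V) : Prop := Even (nbr G v).card

open Classical in
/-- The neighbours of `v` of even degree. For `v` of even degree these are its neighbours in the
E-subgraph. -/
noncomputable def evenNbrs (G : SimpleGraph V) (v : V) : Finset V := {w ∈ nbr G v | EvenDeg G w}

theorem mem_evenNbrs : w ∈ evenNbrs G v ↔ G.Adj v w ∧ EvenDeg G w := by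
  simp [evenNbrs, mem_nbr]

theorem evenNbrs_subset_nbr : evenNbrs G v ⊆ nbr G v :=
  fun _ h => mem_nbr.mpr (mem_evenNbrs.mp h).1

theorem evenNbrs_eq_empty_iff : evenNbrs G v = ∅ ↔ ∀ w, G.Adj v w → ¬EvenDeg G w := by
  simp only [Finset.eq_empty_iff_forall_notMem, mem_evenNbrs, not_and]

theorem EvenDeg.congr (h : nbr H v = nbr G v) : EvenDeg H v ↔ EvenDeg G v := by
  rw [EvenDeg, EvenDeg, h]

theorem HasEnds.evenDeg_of_eq_zero (h : HasEnds G d) (hv : d v = 0) : EvenDeg G v := by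
  simpa [EvenDeg, hv] using h.even v

theorem HasEnds.pos_of_not_evenDeg (h : HasEnds G d) (hv : ¬EvenDeg G v) : 1 ≤ d v :=
  Nat.one_le_iff_ne_zero.mpr (mt h.evenDeg_of_eq_zero hv)

theorem evenDeg_cut_of_mem (hT : T ⊆ nbr G x) (ht : t ∈ T) :
    EvenDeg (cut G x T) t ↔ ¬EvenDeg G t := by
  rw [EvenDeg, EvenDeg, ← card_nbr_cut_of_mem hT ht, Nat.even_add_one, not_not]

theorem evenDeg_cut_of_notMem (hv : v ≠ x) (hvT : v ∉ T) :
    EvenDeg (cut G x T) v ↔ EvenDeg G v :=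
  EvenDeg.congr (nbr_cut_of_notMem hv hvT)

theorem evenDeg_cut_self (hT : T ⊆ nbr G x) :
    EvenDeg (cut G x T) x ↔ (EvenDeg G x ↔ Even T.card) := by
  rw [EvenDeg, EvenDeg, ← card_nbr_cut_self hT, Nat.even_add]
  tauto

theorem evenDeg_cut_singleton_iff (hab : G.Adj a b) (ha : EvenDeg G a) (hb : EvenDeg G b) :
    EvenDeg (cut G a {b}) v ↔ EvenDeg G v ∧ v ≠ a ∧ v ≠ b := by
  have hsub : ({b} : Finset V) ⊆ nbr G a := by simpa [mem_nbr] using hab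
  rcases eq_or_ne v a with rfl | hva
  · simp [evenDeg_cut_self hsub, ha]
  rcases eq_or_ne v b with rfl | hvb
  · simp [evenDeg_cut_of_mem hsub, hb]
  · simp [evenDeg_cut_of_notMem hva (Finset.notMem_singleton.mpr hvb), hva, hvb]

theorem mem_evenNbrs_cut_singleton_iff (hab : G.Adj a b) (ha : EvenDeg G a) (hb : EvenDeg G b) :
    w ∈ evenNbrs (cut G a {b}) v ↔ w ∈ evenNbrs G v ∧ w ≠ a ∧ w ≠ b := by
  rw [mem_evenNbrs, mem_evenNbrs, evenDeg_cut_singleton_iff hab ha hb, cut_adj]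
  simp only [Finset.mem_singleton]
  tauto

theorem not_evenDeg_cut_evenNbrs (ht : t ∈ evenNbrs G x) :
    ¬EvenDeg (cut G x (evenNbrs G x)) t := by
  rw [evenDeg_cut_of_mem evenNbrs_subset_nbr ht, not_not]
  exact (mem_evenNbrs.mp ht).2

theorem not_evenDeg_cut_evenNbrs_of_adj (hv : G.Adj x v) :
    ¬EvenDeg (cut G x (evenNbrs G x)) v := by
  by_cases hvT : v ∈ evenNbrs G x
  · exact not_evenDeg_cut_evenNbrs hvT
  · rw [evenDeg_cut_of_notMem hv.ne' hvT]
    exact fun hev => hvT (mem_evenNbrs.mpr ⟨hv, hev⟩)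

theorem evenNbrs_cut_evenNbrs : evenNbrs (cut G x (evenNbrs G x)) x = ∅ :=
  evenNbrs_eq_empty_iff.mpr fun _ hv => not_evenDeg_cut_evenNbrs_of_adj (cut_le hv)

theorem HasEnds.pos_of_cut_evenNbrs (hd : HasEnds (cut G x (evenNbrs G x)) d) :
    ∀ v ∈ nbr G x, 1 ≤ d v :=
  fun _ hv => hd.pos_of_not_evenDeg (not_evenDeg_cut_evenNbrs_of_adj (mem_nbr.mp hv))

theorem HasEnds.evenDeg_of_cut_evenNbrs (hd : HasEnds (cut G x (evenNbrs G x)) d) :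
    ∀ v, v ≠ x → d v = 0 → EvenDeg G v := by
  intro v hvx hv
  by_cases hvT : v ∈ evenNbrs G x
  · exact (mem_evenNbrs.mp hvT).2
  · exact (evenDeg_cut_of_notMem hvx hvT).mp (hd.evenDeg_of_eq_zero hv)

open Classical in
theorem blockers_subset_evenNbrs (hzero : ∀ v, v ≠ x → d v = 0 → EvenDeg G v)
    (hT : T ⊆ evenNbrs G x) (t : V) : blockers G x d T t ⊆ (evenNbrs G t).erase x := fun v hv => by
  obtain ⟨hvt, hvx, hv⟩ := mem_blockers.mp hv
  exact Finset.mem_erase.mpr ⟨hvx, mem_evenNbrs.mpr ⟨mem_nbr.mp hvt,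
    hv.elim (hzero v hvx) fun hvT => (mem_evenNbrs.mp (hT hvT)).2⟩⟩

theorem HasEnds.exists_endShift_singleton_of_pos (hab : G.Adj a b)
    (hd : HasEnds (cut G a {b}) d) (hpos : ∀ v ∈ nbr G a, 1 ≤ d v) :
    ∃ d', HasEnds G d' ∧ EndShift a {b} d d' := by
  classical
  refine hd.exists_endShift_singleton hab ?_
  have hempty : ({v ∈ nbr G a | v ≠ b ∧ d v = 0} : Finset V) = ∅ :=
    Finset.filter_eq_empty_iff.mpr fun v hv h => by
      have := hpos v hv
      omega
  rw [hempty, Finset.card_empty]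
  exact hpos b (mem_nbr.mpr hab)

end EvenDegree

section Reductions
variable [Fintype V] {G H : SimpleGraph V} {a b p q r s x v w : V}

/-- `a`, `b`, `c` form a triangle of the E-subgraph of `G`. -/
structure IsEvenTriangle (G : SimpleGraph V) (a b c : V) : Prop where
  adj_ab : G.Adj a b
  adj_ac : G.Adj a c
  adj_bc : G.Adj b c
  even_a : EvenDeg G a
  even_b : EvenDeg G b
  even_c : EvenDeg G c

/-- `v` is adjacent to at least two of `a`, `b`, `c`. -/
def AdjTwo (G : SimpleGraph V) (a b c v : V) : Prop :=
  (G.Adj v a ∧ G.Adj v b) ∨ (G.Adj v a ∧ G.Adj v c) ∨ (G.Adj v b ∧ G.Adj v c)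

/-- `G` has a component `C` with exactly three vertices of even degree, which form a triangle, and
every other vertex of `C` is adjacent to at least two of them. Such a component, a *single even
triangle* (SET) graph, may need more than `|C| / 2` paths. -/
def HasSETComponent (G : SimpleGraph V) : Prop :=
  ∃ (C : Set V) (a b c : V), a ∈ C ∧ b ∈ C ∧ c ∈ C ∧ IsEvenTriangle G a b c ∧
    (∀ u ∈ C, ∀ v, G.Adj u v → v ∈ C) ∧
    ∀ v ∈ C, v ≠ a → v ≠ b → v ≠ c → ¬EvenDeg G v ∧ AdjTwo G a b c v

/-- The graphs on which the induction runs: the E-subgraph has maximum degree at most 3, and no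
component is a single even triangle. -/
structure Admissible (G : SimpleGraph V) : Prop where
  card_evenNbrs_le : ∀ v, EvenDeg G v → (evenNbrs G v).card ≤ 3
  not_hasSETComponent : ¬HasSETComponent G

/-- `G` has a path decomposition, trivial paths being allowed, into at most `|V| / 2` paths. -/
def IsGallai (G : SimpleGraph V) : Prop := ∃ d, HasEnds G d ∧ ∑ v, d v ≤ Fintype.card V

/-- Induction hypothesis of the proof that admissible graphs satisfy `IsGallai`. -/
def GallaiBelow (G : SimpleGraph V) : Prop := ∀ H < G, Admissible H → IsGallai H

theorem GallaiBelow.anti (h : GallaiBelow G) (hle : H ≤ G) : GallaiBelow H :=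
  fun K hK => h K (hK.trans_le hle)

/-- Deleting edges of `G` yields `H` in such a way that every vertex losing an edge either has odd
degree in `H` and at most one neighbour in each even triangle of `H`, or is isolated in the
E-subgraph of `H`. This makes admissibility pass from `G` to `H`. -/
structure IsReduction (G H : SimpleGraph V) : Prop where
  le : H ≤ G
  of_nbr_ne : ∀ u, nbr H u ≠ nbr G u →
    (¬EvenDeg H u ∧ ∀ p q r, IsEvenTriangle H p q r → H.Adj u p → ¬H.Adj u q) ∨
      (EvenDeg H u ∧ evenNbrs H u = ∅)

theorem IsEvenTriangle.rotate {c : V} (h : IsEvenTriangle G a b c) : IsEvenTriangle G b c a :=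
  ⟨h.adj_bc, h.adj_ab.symm, h.adj_ac.symm, h.even_b, h.even_c, h.even_a⟩

theorem IsEvenTriangle.swap {c : V} (h : IsEvenTriangle G a b c) : IsEvenTriangle G a c b :=
  ⟨h.adj_ac, h.adj_ab, h.adj_bc.symm, h.even_a, h.even_c, h.even_b⟩

theorem IsReduction.nbr_eq (h : IsReduction G H) (hv : EvenDeg H v) (hw : EvenDeg H w)
    (hvw : H.Adj v w) : nbr H v = nbr G v := by
  by_contra hne
  rcases h.of_nbr_ne v hne with h | h
  · exact h.1 hv
  · exact evenNbrs_eq_empty_iff.mp h.2 w hvw hw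

theorem IsReduction.evenDeg (h : IsReduction G H) (hv : EvenDeg H v) (hw : EvenDeg H w)
    (hvw : H.Adj v w) : EvenDeg G v :=
  (EvenDeg.congr (h.nbr_eq hv hw hvw)).mp hv

theorem IsReduction.evenNbrs_subset (h : IsReduction G H) (hv : EvenDeg H v) :
    evenNbrs H v ⊆ evenNbrs G v := fun w hw => by
  obtain ⟨hvw, hw⟩ := mem_evenNbrs.mp hw
  exact mem_evenNbrs.mpr ⟨h.le hvw, h.evenDeg hw hv hvw.symm⟩

theorem IsReduction.card_evenNbrs_le (h : IsReduction G H) {k : ℕ}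
    (hk : ∀ v, EvenDeg G v → (evenNbrs G v).card ≤ k) :
    ∀ v, EvenDeg H v → (evenNbrs H v).card ≤ k := by
  intro v hv
  rcases (evenNbrs H v).eq_empty_or_nonempty with hempty | ⟨w, hw⟩
  · simp [hempty]
  · obtain ⟨hvw, hw⟩ := mem_evenNbrs.mp hw
    exact (Finset.card_le_card (h.evenNbrs_subset hv)).trans (hk v (h.evenDeg hv hw hvw))

theorem IsReduction.hasSETComponent (h : IsReduction G H) (hH : HasSETComponent H) :
    HasSETComponent G := by
  obtain ⟨C, a, b, c, ha, hb, hc, habc, hclosed, hrest⟩ := hH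
  have hnbra := h.nbr_eq habc.even_a habc.even_b habc.adj_ab
  have hnbrb := h.nbr_eq habc.even_b habc.even_c habc.adj_bc
  have hnbrc := h.nbr_eq habc.even_c habc.even_a habc.adj_ac.symm
  have hnbr : ∀ v ∈ C, nbr H v = nbr G v := by
    intro v hv
    rcases eq_or_ne v a with rfl | hva
    · exact hnbra
    rcases eq_or_ne v b with rfl | hvb
    · exact hnbrb
    rcases eq_or_ne v c with rfl | hvc
    · exact hnbrc
    obtain ⟨hodd, hadj⟩ := hrest v hv hva hvb hvc
    by_contra hne
    rcases h.of_nbr_ne v hne with ⟨-, hle⟩ | ⟨heven, -⟩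
    · rcases hadj with hadj | hadj | hadj
      · exact hle a b c habc hadj.1 hadj.2
      · exact hle a c b habc.swap hadj.1 hadj.2
      · exact hle b c a habc.rotate hadj.1 hadj.2
    · exact hodd heven
  have hadj : ∀ u ∈ C, ∀ v, G.Adj u v ↔ H.Adj u v := fun u hu v => by
    rw [← mem_nbr, ← mem_nbr, hnbr u hu]
  refine ⟨C, a, b, c, ha, hb, hc, ⟨h.le habc.adj_ab, h.le habc.adj_ac, h.le habc.adj_bc,
    (EvenDeg.congr hnbra).mp habc.even_a, (EvenDeg.congr hnbrb).mp habc.even_b,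
    (EvenDeg.congr hnbrc).mp habc.even_c⟩,
    fun u hu v huv => hclosed u hu v ((hadj u hu v).mp huv), fun v hv hva hvb hvc => ?_⟩
  simp only [AdjTwo, hadj v hv, ← EvenDeg.congr (hnbr v hv)]
  exact hrest v hv hva hvb hvc

theorem IsReduction.admissible (h : IsReduction G H) (hG : Admissible G) : Admissible H :=
  ⟨h.card_evenNbrs_le hG.card_evenNbrs_le, mt h.hasSETComponent hG.not_hasSETComponent⟩

theorem eq_or_mem_of_nbr_cut_ne {T : Finset V} (h : nbr (cut G x T) v ≠ nbr G v) :
    v = x ∨ v ∈ T := by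
  by_contra! hcon
  exact h (nbr_cut_of_notMem hcon.1 hcon.2)

/-- Both `a` and `b` become odd and keep at most one even neighbour. -/
theorem isReduction_cut_singleton (hab : G.Adj a b) (ha : EvenDeg G a) (hb : EvenDeg G b)
    (hle : ∀ v, EvenDeg G v → (evenNbrs G v).card ≤ 2) : IsReduction G (cut G a {b}) := by
  refine ⟨cut_le, fun u hu => Or.inl ?_⟩
  have hcases : u = a ∨ u = b := by simpa using eq_or_mem_of_nbr_cut_ne hu
  refine ⟨fun hev => ?_, fun p q r hpqr hup huq => hpqr.adj_ab.ne ?_⟩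
  · rw [evenDeg_cut_singleton_iff hab ha hb] at hev
    exact hcases.elim hev.2.1 hev.2.2
  obtain ⟨hp, hpa, hpb⟩ := (mem_evenNbrs_cut_singleton_iff hab ha hb).mp
    (mem_evenNbrs.mpr ⟨hup, hpqr.even_a⟩)
  obtain ⟨hq, hqa, hqb⟩ := (mem_evenNbrs_cut_singleton_iff hab ha hb).mp
    (mem_evenNbrs.mpr ⟨huq, hpqr.even_b⟩)
  rcases hcases with rfl | rfl
  · exact ((eq_or_eq_of_card_le_two (hle u ha) (mem_evenNbrs.mpr ⟨hab, hb⟩) hq hqb.symm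
      hp).resolve_left hpb)
  · exact ((eq_or_eq_of_card_le_two (hle u hb) (mem_evenNbrs.mpr ⟨hab.symm, ha⟩) hq hqa.symm
      hp).resolve_left hpa)

/-- An even neighbour `s` of `x` with two neighbours in an even triangle that avoids `x` and its
even neighbours, which keeps the deletion of the edges from `x` to its even neighbours from being
a reduction. -/
structure IsObstruction (G : SimpleGraph V) (x s p q r : V) : Prop
    extends IsEvenTriangle G p q r where
  mem : s ∈ evenNbrs G x
  adj_sp : G.Adj s p
  adj_sq : G.Adj s q
  notMem : p ∉ evenNbrs G x ∧ q ∉ evenNbrs G x ∧ r ∉ evenNbrs G x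
  ne : p ≠ x ∧ q ≠ x ∧ r ≠ x

theorem notMem_and_ne_of_evenDeg_cut_evenNbrs (hv : EvenDeg (cut G x (evenNbrs G x)) v)
    (hw : EvenDeg (cut G x (evenNbrs G x)) w) (hvw : (cut G x (evenNbrs G x)).Adj v w) :
    v ∉ evenNbrs G x ∧ v ≠ x := by
  refine ⟨fun h => not_evenDeg_cut_evenNbrs h hv, ?_⟩
  rintro rfl
  exact evenNbrs_eq_empty_iff.mp evenNbrs_cut_evenNbrs w hvw hw

theorem isReduction_cut_evenNbrs (h : ∀ s p q r, ¬IsObstruction G x s p q r) :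
    IsReduction G (cut G x (evenNbrs G x)) := by
  refine ⟨cut_le, fun u hu => ?_⟩
  rcases eq_or_mem_of_nbr_cut_ne hu with rfl | hu
  · rw [evenNbrs_cut_evenNbrs]
    refine or_iff_not_imp_right.mpr fun hodd => ⟨fun heven => hodd ⟨heven, rfl⟩, ?_⟩
    intro p q r hpqr hup
    exact absurd hpqr.even_a (evenNbrs_eq_empty_iff.mp evenNbrs_cut_evenNbrs p hup)
  · refine Or.inl ⟨not_evenDeg_cut_evenNbrs hu, fun p q r hpqr hup huq => ?_⟩
    obtain ⟨hpT, hpx⟩ := notMem_and_ne_of_evenDeg_cut_evenNbrs hpqr.even_a hpqr.even_b hpqr.adj_ab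
    obtain ⟨hqT, hqx⟩ := notMem_and_ne_of_evenDeg_cut_evenNbrs hpqr.even_b hpqr.even_c hpqr.adj_bc
    obtain ⟨hrT, hrx⟩ :=
      notMem_and_ne_of_evenDeg_cut_evenNbrs hpqr.even_c hpqr.even_a hpqr.adj_ac.symm
    exact h u p q r ⟨⟨cut_le hpqr.adj_ab, cut_le hpqr.adj_ac, cut_le hpqr.adj_bc,
      (evenDeg_cut_of_notMem hpx hpT).mp hpqr.even_a,
      (evenDeg_cut_of_notMem hqx hqT).mp hpqr.even_b,
      (evenDeg_cut_of_notMem hrx hrT).mp hpqr.even_c⟩,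
      hu, cut_le hup, cut_le huq, ⟨hpT, hqT, hrT⟩, hpx, hqx, hrx⟩

namespace IsObstruction

theorem mem_evenNbrs_left (h : IsObstruction G x s p q r) :
    q ∈ evenNbrs G p ∧ r ∈ evenNbrs G p ∧ s ∈ evenNbrs G p :=
  ⟨mem_evenNbrs.mpr ⟨h.adj_ab, h.even_b⟩, mem_evenNbrs.mpr ⟨h.adj_ac, h.even_c⟩,
    mem_evenNbrs.mpr ⟨h.adj_sp.symm, (mem_evenNbrs.mp h.mem).2⟩⟩

theorem q_ne_s (h : IsObstruction G x s p q r) : q ≠ s := fun e => h.notMem.2.1 (e ▸ h.mem)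

theorem r_ne_s (h : IsObstruction G x s p q r) : r ≠ s := fun e => h.notMem.2.2 (e ▸ h.mem)

theorem two_lt_card (h : IsObstruction G x s p q r) : 2 < (evenNbrs G p).card := by
  obtain ⟨hq, hr, hs⟩ := h.mem_evenNbrs_left
  exact Finset.two_lt_card_iff.mpr ⟨q, r, s, hq, hr, hs, h.adj_bc.ne, h.q_ne_s, h.r_ne_s⟩

theorem isReduction_cut (h : IsObstruction G x s p q r) (hx : EvenDeg G x)
    (hle : ∀ v, EvenDeg G v → (evenNbrs G v).card ≤ 3) :
    IsReduction G (cut G p (evenNbrs G p)) := by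
  obtain ⟨hqp, hrp, hsp⟩ := h.mem_evenNbrs_left
  obtain ⟨hxs, hs⟩ := mem_evenNbrs.mp h.mem
  refine isReduction_cut_evenNbrs fun s' p' q' r' h' => ?_
  have hp' : ∀ v ∈ evenNbrs G p, p' ≠ v := fun v hv e => h'.notMem.1 (e ▸ hv)
  have hq' : ∀ v ∈ evenNbrs G p, q' ≠ v := fun v hv e => h'.notMem.2.1 (e ▸ hv)
  have mem_p' := mem_evenNbrs.mpr ⟨h'.adj_sp, h'.even_a⟩
  have mem_q' := mem_evenNbrs.mpr ⟨h'.adj_sq, h'.even_b⟩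
  rcases eq_or_eq_or_eq_of_card_le_three (hle p h.even_a) hqp hrp hsp h.adj_bc.ne h.q_ne_s h.r_ne_s
    h'.mem with rfl | rfl | rfl
  · rcases eq_or_eq_or_eq_of_card_le_three (hle s' h.even_b)
      (mem_evenNbrs.mpr ⟨h.adj_ab.symm, h.even_a⟩) (mem_evenNbrs.mpr ⟨h.adj_bc, h.even_c⟩)
      (mem_evenNbrs.mpr ⟨h.adj_sq.symm, hs⟩) h.adj_ac.ne h.adj_sp.ne' h.r_ne_s mem_p'
      with e | e | e
    exacts [h'.ne.1 e, hp' _ hrp e, hp' _ hsp e]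
  · rcases eq_or_eq_or_eq_of_card_le_three (hle s' h.even_c)
      (mem_evenNbrs.mpr ⟨h.adj_ac.symm, h.even_a⟩) (mem_evenNbrs.mpr ⟨h.adj_bc.symm, h.even_b⟩)
      mem_p' h.adj_ab.ne h'.ne.1.symm (hp' _ hqp).symm mem_q' with e | e | e
    exacts [h'.ne.2.1 e, hq' _ hqp e, h'.adj_ab.ne e.symm]
  · have hcases : ∀ v ∈ evenNbrs G s', v ≠ p → (∀ u ∈ evenNbrs G p, v ≠ u) → v = x := by
      intro v hv hvp hne
      rcases eq_or_eq_or_eq_of_card_le_three (hle s' hs) (mem_evenNbrs.mpr ⟨hxs.symm, hx⟩)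
        (mem_evenNbrs.mpr ⟨h.adj_sp, h.even_a⟩) (mem_evenNbrs.mpr ⟨h.adj_sq, h.even_b⟩)
        h.ne.1.symm h.ne.2.1.symm h.adj_ab.ne hv with e | e | e
      exacts [e, absurd e hvp, absurd e (hne _ hqp)]
    exact h'.adj_ab.ne ((hcases p' mem_p' h'.ne.1 hp').trans (hcases q' mem_q' h'.ne.2.1 hq').symm)

end IsObstruction

theorem isReduction_cut_evenNbrs_of_le_two (hle : ∀ v, EvenDeg G v → (evenNbrs G v).card ≤ 2) :
    IsReduction G (cut G x (evenNbrs G x)) :=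
  isReduction_cut_evenNbrs fun _ p _ _ h => h.two_lt_card.not_ge (hle p h.even_a)

end Reductions

section EvenDegreeTwo
variable [Fintype V] {G : SimpleGraph V} {a b c x s v : V}

theorem isGallai_of_isReduction_of_card_eq_three (hG : Admissible G) (hbelow : GallaiBelow G)
    (hx : EvenDeg G x) (hcard : (evenNbrs G x).card = 3)
    (hred : IsReduction G (cut G x (evenNbrs G x))) : IsGallai G := by
  classical
  obtain ⟨t, ht⟩ : (evenNbrs G x).Nonempty := Finset.card_pos.mp (by omega)
  obtain ⟨d, hd, hsum⟩ := hbelow _ (cut_lt ht (mem_evenNbrs.mp ht).1) (hred.admissible hG)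
  have hodd : ¬EvenDeg (cut G x (evenNbrs G x)) x := by
    rw [evenDeg_cut_self evenNbrs_subset_nbr, hcard]
    exact fun h => absurd (h.mp hx) (by decide)
  have hblock : ∀ t ∈ evenNbrs G x, (blockers G x d (evenNbrs G x) t).card ≤ 2 := by
    intro t ht
    obtain ⟨hxt, ht⟩ := mem_evenNbrs.mp ht
    have hle := Finset.card_le_card
      (blockers_subset_evenNbrs hd.evenDeg_of_cut_evenNbrs subset_rfl t)
    have hxt' := Finset.card_erase_add_one (mem_evenNbrs.mpr ⟨hxt.symm, hx⟩)
    have hle' := hG.card_evenNbrs_le t ht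
    omega
  obtain ⟨d', hd', h⟩ := HasEnds.exists_redistribution evenNbrs_subset_nbr hd
    hd.pos_of_cut_evenNbrs hblock fun σ hσ =>
      .of_odd hσ (hcard ▸ by decide) (hd.pos_of_not_evenDeg hodd)
  exact ⟨d', hd', h.sum_eq.trans_le hsum⟩

theorem isGallai_of_card_evenNbrs_eq_three (hG : Admissible G) (hbelow : GallaiBelow G)
    (hx : EvenDeg G x) (hcard : (evenNbrs G x).card = 3) : IsGallai G := by
  by_cases hobs : ∃ s p q r, IsObstruction G x s p q r
  · obtain ⟨s, p, q, r, h⟩ := hobs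
    exact isGallai_of_isReduction_of_card_eq_three hG hbelow h.even_a
      ((hG.card_evenNbrs_le p h.even_a).antisymm h.two_lt_card)
      (h.isReduction_cut hx hG.card_evenNbrs_le)
  · push Not at hobs
    exact isGallai_of_isReduction_of_card_eq_three hG hbelow hx hcard
      (isReduction_cut_evenNbrs hobs)

theorem isGallai_of_evenNbrs_eq_singleton (hG : Admissible G) (hbelow : GallaiBelow G)
    (hle : ∀ v, EvenDeg G v → (evenNbrs G v).card ≤ 2) (hs : evenNbrs G x = {s}) :
    IsGallai G := by
  have hsx : s ∈ evenNbrs G x := hs ▸ Finset.mem_singleton_self s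
  have hadj := (mem_evenNbrs.mp hsx).1
  obtain ⟨d, hd, hsum⟩ := hbelow _ (cut_lt hsx hadj)
    ((isReduction_cut_evenNbrs_of_le_two hle).admissible hG)
  have hpos := hd.pos_of_cut_evenNbrs
  rw [hs] at hd
  obtain ⟨d', hd', h⟩ := hd.exists_endShift_singleton_of_pos hadj hpos
  exact ⟨d', hd', h.sum_eq.trans_le hsum⟩

theorem exists_hasEnds_cut_cut_singleton {u₁ u₂ w₁ w₂ : V} (hG : Admissible G)
    (hbelow : GallaiBelow G) (hle : ∀ v, EvenDeg G v → (evenNbrs G v).card ≤ 2)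
    (hu₁ : EvenDeg G u₁) (hu₂ : u₂ ∈ evenNbrs G u₁) (hw₁ : EvenDeg G w₁)
    (hw₂ : w₂ ∈ evenNbrs G w₁) (hne₁₁ : u₁ ≠ w₁) (hne₁₂ : u₁ ≠ w₂) (hne₂₁ : u₂ ≠ w₁)
    (hne₂₂ : u₂ ≠ w₂) :
    ∃ d, HasEnds (cut (cut G w₁ {w₂}) u₁ {u₂}) d ∧ ∑ v, d v ≤ Fintype.card V ∧
      ∀ v, d v = 0 → EvenDeg G v ∧ v ≠ u₁ ∧ v ≠ u₂ ∧ v ≠ w₁ ∧ v ≠ w₂ := by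
  obtain ⟨hadj_u, hu₂⟩ := mem_evenNbrs.mp hu₂
  obtain ⟨hadj_w, hw₂⟩ := mem_evenNbrs.mp hw₂
  have heven : ∀ v, EvenDeg (cut G w₁ {w₂}) v ↔ EvenDeg G v ∧ v ≠ w₁ ∧ v ≠ w₂ := fun v =>
    evenDeg_cut_singleton_iff hadj_w hw₁ hw₂
  have hadj_u' : (cut G w₁ {w₂}).Adj u₁ u₂ := (cut_adj_of_ne hne₁₁ hne₂₁).mpr hadj_u
  have hu₁' := (heven u₁).mpr ⟨hu₁, hne₁₁, hne₁₂⟩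
  have hu₂' := (heven u₂).mpr ⟨hu₂, hne₂₁, hne₂₂⟩
  have hred := isReduction_cut_singleton hadj_w hw₁ hw₂ hle
  have hred' := isReduction_cut_singleton hadj_u' hu₁' hu₂' (hred.card_evenNbrs_le hle)
  obtain ⟨d, hd, hsum⟩ := hbelow _ ((cut_lt (Finset.mem_singleton_self u₂) hadj_u').trans_le cut_le)
    (hred'.admissible (hred.admissible hG))
  refine ⟨d, hd, hsum, fun v hv => ?_⟩
  have hev := hd.evenDeg_of_eq_zero hv
  rw [evenDeg_cut_singleton_iff hadj_u' hu₁' hu₂', heven] at hev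
  tauto

/-- Delete the outer edges of the path. The inner vertices become odd and have no even neighbours
left, so the two edges can be added one after the other. -/
theorem isGallai_of_even_path {v₁ v₂ v₃ v₄ : V} (hG : Admissible G) (hbelow : GallaiBelow G)
    (hle : ∀ v, EvenDeg G v → (evenNbrs G v).card ≤ 2)
    (h₂₁ : v₁ ∈ evenNbrs G v₂) (h₂₃ : v₃ ∈ evenNbrs G v₂) (h₃₂ : v₂ ∈ evenNbrs G v₃)
    (h₃₄ : v₄ ∈ evenNbrs G v₃) (hne₁₃ : v₁ ≠ v₃) (hne₁₄ : v₁ ≠ v₄) (hne₂₄ : v₂ ≠ v₄) :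
    IsGallai G := by
  obtain ⟨hadj₂₁, heven₁⟩ := mem_evenNbrs.mp h₂₁
  obtain ⟨hadj₂₃, heven₃⟩ := mem_evenNbrs.mp h₂₃
  have heven₂ := (mem_evenNbrs.mp h₃₂).2
  have hadj₃₄ := (mem_evenNbrs.mp h₃₄).1
  have hcases₂ : ∀ v, G.Adj v₂ v → EvenDeg G v → v = v₁ ∨ v = v₃ := fun v hv hev =>
    eq_or_eq_of_card_le_two (hle v₂ heven₂) h₂₁ h₂₃ hne₁₃ (mem_evenNbrs.mpr ⟨hv, hev⟩)
  have hcases₃ : ∀ v, G.Adj v₃ v → EvenDeg G v → v = v₂ ∨ v = v₄ := fun v hv hev =>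
    eq_or_eq_of_card_le_two (hle v₃ heven₃) h₃₂ h₃₄ hne₂₄ (mem_evenNbrs.mpr ⟨hv, hev⟩)
  obtain ⟨d, hd, hsum, hzero⟩ := exists_hasEnds_cut_cut_singleton hG hbelow hle heven₂ h₂₁ heven₃
    h₃₄ hadj₂₃.ne hne₂₄ hne₁₃ hne₁₄
  have hadj₂₁' : (cut G v₃ {v₄}).Adj v₂ v₁ := (cut_adj_of_ne hadj₂₃.ne hne₁₃).mpr hadj₂₁
  obtain ⟨d₁, hd₁, h₁⟩ := hd.exists_endShift_singleton_of_pos hadj₂₁' fun v hv => by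
    by_contra! h0
    obtain ⟨hev, -, hv₁, hv₃, -⟩ := hzero v (by omega)
    exact (hcases₂ v (cut_le (mem_nbr.mp hv)) hev).elim hv₁ hv₃
  have hpos₂ : d₁ v₂ = d v₂ + 1 := h₁.center
  obtain ⟨d₂, hd₂, h₂⟩ := hd₁.exists_endShift_singleton_of_pos hadj₃₄ fun v hv => by
    by_contra! h0
    have hv₂ : v ≠ v₂ := by
      rintro rfl
      omega
    have hv₁ : v ≠ v₁ := by
      rintro rfl
      exact (hcases₃ v (mem_nbr.mp hv) heven₁).elim hadj₂₁.ne' hne₁₄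
    obtain ⟨hev, -, -, -, hv₄⟩ := hzero v <| by
      rw [← h₁.of_notMem v hv₂ (by simpa using hv₁)]
      omega
    exact (hcases₃ v (mem_nbr.mp hv) hev).elim hv₂ hv₄
  exact ⟨d₂, hd₂, (h₂.sum_eq.trans h₁.sum_eq).trans_le hsum⟩

/-- `a`, `b`, `c` form a triangle that is a component of the E-subgraph of `G`. -/
structure IsTriangleComponent (G : SimpleGraph V) (a b c : V) : Prop
    extends IsEvenTriangle G a b c where
  of_mem_a : ∀ v ∈ evenNbrs G a, v = b ∨ v = c
  of_mem_b : ∀ v ∈ evenNbrs G b, v = a ∨ v = c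
  of_mem_c : ∀ v ∈ evenNbrs G c, v = a ∨ v = b

theorem IsTriangleComponent.rotate (h : IsTriangleComponent G a b c) :
    IsTriangleComponent G b c a :=
  ⟨h.toIsEvenTriangle.rotate, fun v hv => (h.of_mem_b v hv).symm,
    fun v hv => (h.of_mem_c v hv).symm, h.of_mem_a⟩

theorem IsTriangleComponent.swap (h : IsTriangleComponent G a b c) :
    IsTriangleComponent G a c b :=
  ⟨h.toIsEvenTriangle.swap, fun v hv => (h.of_mem_a v hv).symm, h.of_mem_c, h.of_mem_b⟩

/-- Every component of the E-subgraph of `G` is a single vertex or a triangle. -/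
def EvenIsolatedOrTriangle (G : SimpleGraph V) : Prop :=
  ∀ v, EvenDeg G v → evenNbrs G v = ∅ ∨ ∃ b c, IsTriangleComponent G v b c

theorem EvenIsolatedOrTriangle.card_evenNbrs_le_two (h : EvenIsolatedOrTriangle G) :
    ∀ v, EvenDeg G v → (evenNbrs G v).card ≤ 2 := by
  classical
  intro v hv
  rcases h v hv with hempty | ⟨b, c, h⟩
  · simp [hempty]
  · exact (Finset.card_le_card (t := {b, c}) fun u hu => by simpa using h.of_mem_a u hu).trans
      Finset.card_le_two

theorem isTriangleComponent_of_evenNbrs_eq_pair [DecidableEq V] (ha : EvenDeg G a)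
    (hbc : evenNbrs G a = {b, c}) (hb : evenNbrs G b = {a, c}) (hc : evenNbrs G c = {a, b}) :
    IsTriangleComponent G a b c := by
  have mem_b : b ∈ evenNbrs G a := by simp [hbc]
  have mem_c : c ∈ evenNbrs G a := by simp [hbc]
  have mem_c' : c ∈ evenNbrs G b := by simp [hb]
  exact ⟨⟨(mem_evenNbrs.mp mem_b).1, (mem_evenNbrs.mp mem_c).1, (mem_evenNbrs.mp mem_c').1, ha,
    (mem_evenNbrs.mp mem_b).2, (mem_evenNbrs.mp mem_c).2⟩,
    fun v hv => by simpa [hbc] using hv, fun v hv => by simpa [hb] using hv,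
    fun v hv => by simpa [hc] using hv⟩

theorem card_evenNbrs_le_two_of_not_isGallai (hG : Admissible G) (hbelow : GallaiBelow G)
    (hnot : ¬IsGallai G) : ∀ v, EvenDeg G v → (evenNbrs G v).card ≤ 2 := fun v hv => by
  have hle := hG.card_evenNbrs_le v hv
  have hne : (evenNbrs G v).card ≠ 3 := fun h =>
    hnot (isGallai_of_card_evenNbrs_eq_three hG hbelow hv h)
  omega

theorem card_evenNbrs_eq_two_of_not_isGallai (hG : Admissible G) (hbelow : GallaiBelow G)
    (hnot : ¬IsGallai G) (hv : EvenDeg G v) (hne : (evenNbrs G v).Nonempty) :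
    (evenNbrs G v).card = 2 := by
  have hle := card_evenNbrs_le_two_of_not_isGallai hG hbelow hnot
  have hpos := hne.card_pos
  have hne_one : (evenNbrs G v).card ≠ 1 := fun h => by
    obtain ⟨s, hs⟩ := Finset.card_eq_one.mp h
    exact hnot (isGallai_of_evenNbrs_eq_singleton hG hbelow hle hs)
  have := hle v hv
  omega

open Classical in
theorem evenNbrs_eq_pair_of_not_isGallai (hG : Admissible G) (hbelow : GallaiBelow G)
    (hnot : ¬IsGallai G) (ha : EvenDeg G a) (hbc : evenNbrs G a = {b, c}) (hne : b ≠ c) :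
    evenNbrs G b = {a, c} := by
  have hle := card_evenNbrs_le_two_of_not_isGallai hG hbelow hnot
  have hb : b ∈ evenNbrs G a := by simp [hbc]
  have hc : c ∈ evenNbrs G a := by simp [hbc]
  obtain ⟨hab, hb_even⟩ := mem_evenNbrs.mp hb
  have ha' : a ∈ evenNbrs G b := mem_evenNbrs.mpr ⟨hab.symm, ha⟩
  have hcard := card_evenNbrs_eq_two_of_not_isGallai hG hbelow hnot hb_even ⟨a, ha'⟩
  have hc' : c ∈ evenNbrs G b := by
    obtain ⟨w, hw, hwa⟩ := Finset.exists_mem_ne (s := evenNbrs G b) (by omega) a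
    rcases eq_or_ne w c with rfl | hwc
    · exact hw
    · exact absurd (isGallai_of_even_path hG hbelow hle hc hb ha' hw hne.symm hwc.symm hwa.symm)
        hnot
  refine (Finset.eq_of_subset_of_card_le ?_ ?_).symm
  · exact Finset.insert_subset ha' (Finset.singleton_subset_iff.mpr hc')
  · rw [hcard, Finset.card_pair (mem_evenNbrs.mp hc).1.ne]

theorem evenIsolatedOrTriangle_of_not_isGallai (hG : Admissible G) (hbelow : GallaiBelow G)
    (hnot : ¬IsGallai G) : EvenIsolatedOrTriangle G := by
  classical
  intro a ha
  refine or_iff_not_imp_left.mpr fun hempty => ?_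
  obtain ⟨b, c, hne, hbc⟩ := Finset.card_eq_two.mp (card_evenNbrs_eq_two_of_not_isGallai hG hbelow
    hnot ha (Finset.nonempty_iff_ne_empty.mpr hempty))
  have hcb : evenNbrs G a = {c, b} := hbc.trans (Finset.pair_comm b c)
  exact ⟨b, c, isTriangleComponent_of_evenNbrs_eq_pair ha hbc
    (evenNbrs_eq_pair_of_not_isGallai hG hbelow hnot ha hbc hne)
    (evenNbrs_eq_pair_of_not_isGallai hG hbelow hnot ha hcb hne.symm)⟩

end EvenDegreeTwo

section TriangleComponents
variable [Fintype V] {G : SimpleGraph V} {a b c p q r v w : V}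

open Classical in
theorem IsTriangleComponent.card_eq_three (h : IsTriangleComponent G a b c) :
    ({a, b, c} : Finset V).card = 3 :=
  Finset.card_eq_three.mpr ⟨a, b, c, h.adj_ab.ne, h.adj_ac.ne, h.adj_bc.ne, rfl⟩

open Classical in
theorem IsTriangleComponent.evenNbrs_eq (h : IsTriangleComponent G a b c) :
    evenNbrs G a = {b, c} := by
  refine Finset.Subset.antisymm (fun v hv => by simpa using h.of_mem_a v hv) ?_
  exact Finset.insert_subset (mem_evenNbrs.mpr ⟨h.adj_ab, h.even_b⟩)
    (Finset.singleton_subset_iff.mpr (mem_evenNbrs.mpr ⟨h.adj_ac, h.even_c⟩))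

open Classical in
theorem IsTriangleComponent.evenNbrs_subset (h : IsTriangleComponent G a b c)
    (hv : v ∈ ({a, b, c} : Finset V)) : evenNbrs G v ⊆ {a, b, c} := by
  simp only [Finset.mem_insert, Finset.mem_singleton] at hv
  rcases hv with rfl | rfl | rfl
  · simp [h.evenNbrs_eq]
  · simp [h.rotate.evenNbrs_eq, Finset.insert_subset_iff]
  · simp [h.rotate.rotate.evenNbrs_eq, Finset.insert_subset_iff]

open Classical in
theorem IsTriangleComponent.disjoint (h : IsTriangleComponent G a b c)
    (h' : IsTriangleComponent G p q r) (hp : p ∉ ({a, b, c} : Finset V)) :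
    Disjoint ({a, b, c} : Finset V) {p, q, r} := by
  have hadj : ∀ v, G.Adj v p → v ∉ ({a, b, c} : Finset V) := fun v hvp hv =>
    hp (h.evenNbrs_subset hv (mem_evenNbrs.mpr ⟨hvp, h'.even_a⟩))
  refine Finset.disjoint_right.mpr fun v hv => ?_
  simp only [Finset.mem_insert, Finset.mem_singleton] at hv
  rcases hv with rfl | rfl | rfl
  · exact hp
  · exact hadj v h'.adj_ab.symm
  · exact hadj v h'.adj_ac.symm

open Classical in
theorem IsTriangleComponent.evenDeg_of_mem (h : IsTriangleComponent G a b c)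
    (hv : v ∈ ({a, b, c} : Finset V)) : EvenDeg G v := by
  simp only [Finset.mem_insert, Finset.mem_singleton] at hv
  rcases hv with rfl | rfl | rfl
  exacts [h.even_a, h.even_b, h.even_c]

open Classical in
theorem IsTriangleComponent.subset_of_mem (h : IsTriangleComponent G a b c)
    (h' : IsTriangleComponent G p q r) (hv : v ∈ ({a, b, c} : Finset V))
    (hv' : v ∈ ({p, q, r} : Finset V)) : ({p, q, r} : Finset V) ⊆ {a, b, c} := by
  have hp : p ∈ ({a, b, c} : Finset V) := by
    by_contra hp
    exact Finset.disjoint_left.mp (h.disjoint h' hp) hv hv'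
  refine Finset.insert_subset hp (Finset.insert_subset ?_ (Finset.singleton_subset_iff.mpr ?_))
  · exact h.evenNbrs_subset hp (mem_evenNbrs.mpr ⟨h'.adj_ab, h'.even_b⟩)
  · exact h.evenNbrs_subset hp (mem_evenNbrs.mpr ⟨h'.adj_ac, h'.even_c⟩)

theorem IsTriangleComponent.evenDeg_cut_iff (h : IsTriangleComponent G a b c) :
    EvenDeg (cut G b {c}) v ↔ EvenDeg G v ∧ v ≠ b ∧ v ≠ c :=
  evenDeg_cut_singleton_iff h.adj_bc h.even_b h.even_c

theorem IsTriangleComponent.mem_evenNbrs_cut_iff (h : IsTriangleComponent G a b c) :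
    w ∈ evenNbrs (cut G b {c}) v ↔ w ∈ evenNbrs G v ∧ w ≠ b ∧ w ≠ c :=
  mem_evenNbrs_cut_singleton_iff h.adj_bc h.even_b h.even_c

theorem IsTriangleComponent.evenNbrs_cut_subset (h : IsTriangleComponent G a b c) :
    evenNbrs (cut G b {c}) v ⊆ evenNbrs G v := fun _ hw => (h.mem_evenNbrs_cut_iff.mp hw).1

theorem IsTriangleComponent.evenNbrs_cut_eq_empty (h : IsTriangleComponent G a b c) :
    evenNbrs (cut G b {c}) a = ∅ := by
  refine Finset.eq_empty_of_forall_notMem fun v hv => ?_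
  obtain ⟨hv, hb, hc⟩ := h.mem_evenNbrs_cut_iff.mp hv
  exact (h.of_mem_a v hv).elim hb hc

open Classical in
theorem IsTriangleComponent.cut_of_notMem (h : IsTriangleComponent G a b c)
    (h' : IsTriangleComponent G p q r) (hp : p ∉ ({a, b, c} : Finset V)) :
    IsTriangleComponent (cut G b {c}) p q r := by
  have hne : ∀ v ∈ ({p, q, r} : Finset V), v ≠ b ∧ v ≠ c := fun v hv => by
    have := Finset.disjoint_right.mp (h.disjoint h' hp) hv
    simp only [Finset.mem_insert, Finset.mem_singleton, not_or] at this
    exact this.2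
  have hpbc := hne p (by simp)
  have hqbc := hne q (by simp)
  have hrbc := hne r (by simp)
  exact ⟨⟨(cut_adj_of_ne hpbc.1 hqbc.1).mpr h'.adj_ab, (cut_adj_of_ne hpbc.1 hrbc.1).mpr h'.adj_ac,
    (cut_adj_of_ne hqbc.1 hrbc.1).mpr h'.adj_bc, h.evenDeg_cut_iff.mpr ⟨h'.even_a, hpbc⟩,
    h.evenDeg_cut_iff.mpr ⟨h'.even_b, hqbc⟩, h.evenDeg_cut_iff.mpr ⟨h'.even_c, hrbc⟩⟩,
    fun v hv => h'.of_mem_a v (h.evenNbrs_cut_subset hv),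
    fun v hv => h'.of_mem_b v (h.evenNbrs_cut_subset hv),
    fun v hv => h'.of_mem_c v (h.evenNbrs_cut_subset hv)⟩

theorem IsTriangleComponent.evenIsolatedOrTriangle_cut (h : IsTriangleComponent G a b c)
    (hG : EvenIsolatedOrTriangle G) : EvenIsolatedOrTriangle (cut G b {c}) := by
  classical
  intro v hv
  obtain ⟨hv, hvb, hvc⟩ := h.evenDeg_cut_iff.mp hv
  rcases eq_or_ne v a with rfl | hva
  · exact Or.inl h.evenNbrs_cut_eq_empty
  rcases hG v hv with hempty | ⟨q, r, h'⟩
  · exact Or.inl (Finset.subset_empty.mp (hempty ▸ h.evenNbrs_cut_subset))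
  · exact Or.inr ⟨q, r, h.cut_of_notMem h' (by simp [hva, hvb, hvc])⟩

theorem IsTriangleComponent.admissible_cut (h : IsTriangleComponent G a b c) (hG : Admissible G)
    (hcomp : EvenIsolatedOrTriangle G) : Admissible (cut G b {c}) :=
  (isReduction_cut_singleton h.adj_bc h.even_b h.even_c hcomp.card_evenNbrs_le_two).admissible hG

end TriangleComponents

section StarPrepared
variable [Fintype V] {G : SimpleGraph V} {a b c t v x : V} {T : Finset V} {L L' : Set V}
  {d d' : V → ℕ}

/-- Numbers of ends `d` of a path decomposition of `G` without the edges from `x` to `T`, suited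
for adding these edges. The set `L` collects members of `T` with at most one blocker. -/
structure StarPrepared (G : SimpleGraph V) (x : V) (T : Finset V) (L : Set V) (d : V → ℕ) :
    Prop where
  hasEnds : HasEnds (cut G x T) d
  sum_le : ∑ v, d v ≤ Fintype.card V
  subset : T ⊆ evenNbrs G x
  evenDeg_of_eq_zero : ∀ v, v ≠ x → d v = 0 → EvenDeg G v
  pos_of_mem : ∀ v ∈ nbr G x, 1 ≤ d v
  pos_of_even : Even T.card → 1 ≤ d x
  low : ∀ t ∈ L, t ∈ T ∧ (blockers G x d T t).card ≤ 1

theorem StarPrepared.mono (h : StarPrepared G x T L d) (hL : L' ⊆ L) : StarPrepared G x T L' d :=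
  { h with low := fun t ht => h.low t (hL ht) }

theorem StarPrepared.blockers_subset (h : StarPrepared G x T L d) (t : V) :
    blockers G x d T t ⊆ evenNbrs G t := by
  classical
  exact (blockers_subset_evenNbrs h.evenDeg_of_eq_zero h.subset t).trans (Finset.erase_subset _ _)

theorem StarPrepared.isGallai (h : StarPrepared G x T L d)
    (hle : ∀ v, EvenDeg G v → (evenNbrs G v).card ≤ 2)
    (hadd : ∀ σ, InvolutiveOn σ T → StarAddable G x T d σ) : IsGallai G := by
  obtain ⟨d', hd', hredist⟩ := HasEnds.exists_redistribution (h.subset.trans evenNbrs_subset_nbr)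
    h.hasEnds h.pos_of_mem (fun t ht => (Finset.card_le_card (h.blockers_subset t)).trans
      (hle t (mem_evenNbrs.mp (h.subset ht)).2)) hadd
  exact ⟨d', hd', hredist.sum_eq.trans_le h.sum_le⟩

theorem exists_starPrepared_of_le_two (hG : Admissible G) (hbelow : GallaiBelow G)
    (hle : ∀ v, EvenDeg G v → (evenNbrs G v).card ≤ 2) (hx : ¬EvenDeg G x)
    (hne : (evenNbrs G x).Nonempty) :
    ∃ d, StarPrepared G x (evenNbrs G x) {t | t ∈ evenNbrs G x ∧ evenNbrs G t = ∅} d := by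
  classical
  obtain ⟨s, hs⟩ := hne
  obtain ⟨d, hd, hsum⟩ := hbelow _ (cut_lt hs (mem_evenNbrs.mp hs).1)
    ((isReduction_cut_evenNbrs_of_le_two hle).admissible hG)
  have hzero := hd.evenDeg_of_cut_evenNbrs
  refine ⟨d, hd, hsum, subset_rfl, hzero, hd.pos_of_cut_evenNbrs, fun heven => ?_, ?_⟩
  · refine hd.pos_of_not_evenDeg ?_
    simpa [evenDeg_cut_self evenNbrs_subset_nbr, heven] using hx
  · rintro t ⟨ht, hempty⟩
    have hsub := blockers_subset_evenNbrs hzero subset_rfl t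
    rw [hempty, Finset.erase_empty, Finset.subset_empty] at hsub
    exact ⟨ht, by simp [hsub]⟩

theorem StarPrepared.exists_endShift (R : StarPrepared (cut G b {c}) x T L d)
    (h : IsTriangleComponent G a b c) (hx : ¬EvenDeg G x) (ha : a ∈ T)
    (hb : G.Adj x b → Even T.card) :
    ∃ d', HasEnds (cut G x T) d' ∧ EndShift b {c} d d' := by
  have hbx : b ≠ x := fun e => hx (e ▸ h.even_b)
  have hcx : c ≠ x := fun e => hx (e ▸ h.even_c)
  have hd := R.hasEnds
  rw [cut_comm] at hd
  refine hd.exists_endShift_singleton_of_pos ((cut_adj_of_ne hbx hcx).mpr h.adj_bc) fun v hv => ?_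
  have hbv : G.Adj b v := cut_le (mem_nbr.mp hv)
  rcases eq_or_ne v x with rfl | hvx
  · exact R.pos_of_even (hb hbv.symm)
  by_contra! hlt
  obtain ⟨heven, -, hvc⟩ := h.evenDeg_cut_iff.mp (R.evenDeg_of_eq_zero v hvx (by omega))
  rcases h.of_mem_b v (mem_evenNbrs.mpr ⟨hbv, heven⟩) with rfl | hvc'
  · exact absurd (R.pos_of_mem v (evenNbrs_subset_nbr (R.subset ha))) (by omega)
  · exact hvc hvc'

theorem StarPrepared.evenDeg_of_endShift (R : StarPrepared (cut G b {c}) x T L d)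
    (h : IsTriangleComponent G a b c) (hd' : EndShift b {c} d d') (hvx : v ≠ x) (hv : d' v = 0) :
    EvenDeg G v := by
  rcases eq_or_ne v b with rfl | hvb
  · exact h.even_b
  rcases eq_or_ne v c with rfl | hvc
  · exact h.even_c
  rw [hd'.of_notMem v hvb (by simpa using hvc)] at hv
  exact (h.evenDeg_cut_iff.mp (R.evenDeg_of_eq_zero v hvx hv)).1

theorem StarPrepared.blockers_apex_subset (R : StarPrepared (cut G b {c}) x T L d)
    (h : IsTriangleComponent G a b c) (hd' : EndShift b {c} d d') :
    blockers G x d' T a ⊆ {c} := by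
  intro v hv
  obtain ⟨hav, hvx, hcases⟩ := mem_blockers.mp hv
  have hT : ∀ t ∈ T, t ∈ evenNbrs G x ∧ t ≠ b ∧ t ≠ c := fun t ht =>
    h.mem_evenNbrs_cut_iff.mp (R.subset ht)
  have hevenv : EvenDeg G v := hcases.elim (R.evenDeg_of_endShift h hd' hvx) fun hvT =>
    (mem_evenNbrs.mp (hT v hvT).1).2
  refine Finset.mem_singleton.mpr ((h.of_mem_a v
    (mem_evenNbrs.mpr ⟨mem_nbr.mp hav, hevenv⟩)).resolve_left ?_)
  rintro rfl
  have hcenter : d' v = d v + 1 := hd'.center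
  exact hcases.elim (by omega) fun hvT => (hT v hvT).2.1 rfl

theorem StarPrepared.blockers_subset_of_endShift (R : StarPrepared (cut G b {c}) x T L d)
    (h : IsTriangleComponent G a b c) (hd' : EndShift b {c} d d') (ht : t ∈ T) (hta : t ≠ a) :
    blockers G x d' T t ⊆ blockers (cut G b {c}) x d T t := by
  intro v hv
  obtain ⟨htv, hvx, hcases⟩ := mem_blockers.mp hv
  obtain ⟨htx, htb, htc⟩ := h.mem_evenNbrs_cut_iff.mp (R.subset ht)
  have hvc : v ≠ c := by
    rintro rfl
    exact (h.of_mem_c t (mem_evenNbrs.mpr ⟨(mem_nbr.mp htv).symm, (mem_evenNbrs.mp htx).2⟩)).elim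
      hta htb
  refine mem_blockers.mpr ⟨?_, hvx, hcases.imp_left fun hzero => ?_⟩
  · exact mem_nbr.mpr (cut_adj.mpr ⟨mem_nbr.mp htv, fun e => htb e.1,
      fun e => htc (Finset.mem_singleton.mp e.2)⟩)
  · rcases eq_or_ne v b with rfl | hvb
    · have hcenter : d' v = d v + 1 := hd'.center
      omega
    · rwa [← hd'.of_notMem v hvb (by simpa using hvc)]

/-- The third vertex of the triangle joins the vertices with at most one blocker: `b` ends a path
after `bc` has been added. -/
theorem StarPrepared.insert_apex (R : StarPrepared (cut G b {c}) x T L d)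
    (h : IsTriangleComponent G a b c) (hx : ¬EvenDeg G x) (ha : a ∈ T) (hc : ¬G.Adj x c)
    (hb : G.Adj x b → Even T.card) :
    ∃ d', StarPrepared G x T (insert a L) d' := by
  have hbx : b ≠ x := fun e => hx (e ▸ h.even_b)
  have hcx : c ≠ x := fun e => hx (e ▸ h.even_c)
  obtain ⟨d', hends, hd'⟩ := R.exists_endShift h hx ha hb
  have heq : ∀ v, v ≠ b → v ≠ c → d' v = d v := fun v hvb hvc =>
    hd'.of_notMem v hvb (by simpa using hvc)
  refine ⟨d', hends, hd'.sum_eq.trans_le R.sum_le, R.subset.trans h.evenNbrs_cut_subset,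
    fun v => R.evenDeg_of_endShift h hd', fun v hv => ?_, ?_, fun t ht => ?_⟩
  · have hxv := mem_nbr.mp hv
    rcases eq_or_ne v b with rfl | hvb
    · exact le_of_le_of_eq le_add_self hd'.center.symm
    · rw [heq v hvb fun e => hc (e ▸ hxv)]
      exact R.pos_of_mem v (mem_nbr.mpr ((cut_adj_of_ne hbx.symm hvb).mpr hxv))
  · rw [heq x hbx.symm hcx.symm]
    exact R.pos_of_even
  · rcases eq_or_ne t a with rfl | hta
    · exact ⟨ha, Finset.card_le_card (R.blockers_apex_subset h hd')⟩
    · obtain ⟨htT, hlow⟩ := R.low t (Set.mem_of_mem_insert_of_ne ht hta)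
      exact ⟨htT, (Finset.card_le_card (R.blockers_subset_of_endShift h hd' htT hta)).trans hlow⟩

end StarPrepared

section OddVertex
variable [Fintype V] {G : SimpleGraph V} {a b c p q r t x : V}

open Classical in
/-- The even neighbours of `x` that have exactly `i` even neighbours in common with `x`. -/
noncomputable def evenNbrsSharing (G : SimpleGraph V) (x : V) (i : ℕ) : Finset V :=
  {t ∈ evenNbrs G x | {s ∈ evenNbrs G t | G.Adj x s}.card = i}

theorem evenNbrsSharing_subset {i : ℕ} : evenNbrsSharing G x i ⊆ evenNbrs G x := by
  classical exact Finset.filter_subset _ _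

theorem mem_evenNbrsSharing_zero :
    t ∈ evenNbrsSharing G x 0 ↔ t ∈ evenNbrs G x ∧ ∀ s ∈ evenNbrs G t, ¬G.Adj x s := by
  classical simp [evenNbrsSharing, Finset.filter_eq_empty_iff]

theorem IsTriangleComponent.mem_evenNbrsSharing_one (h : IsTriangleComponent G a b c)
    (ha : G.Adj x a) (hb : G.Adj x b) (hc : ¬G.Adj x c) : a ∈ evenNbrsSharing G x 1 := by
  classical
  simp [evenNbrsSharing, mem_evenNbrs, ha, h.even_a, h.evenNbrs_eq, Finset.filter_insert,
    Finset.filter_singleton, hb, hc]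

theorem IsTriangleComponent.mem_evenNbrsSharing_two (h : IsTriangleComponent G a b c)
    (ha : G.Adj x a) (hb : G.Adj x b) (hc : G.Adj x c) : a ∈ evenNbrsSharing G x 2 := by
  classical
  simp [evenNbrsSharing, mem_evenNbrs, ha, h.even_a, h.evenNbrs_eq, Finset.filter_insert,
    Finset.filter_singleton, hb, hc, Finset.card_pair h.adj_bc.ne]

theorem EvenIsolatedOrTriangle.exists_of_mem_evenNbrsSharing_one (hcomp : EvenIsolatedOrTriangle G)
    (ht : t ∈ evenNbrsSharing G x 1) :
    ∃ b c, IsTriangleComponent G t b c ∧ G.Adj x b ∧ ¬G.Adj x c := by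
  classical
  obtain ⟨htx, hcard⟩ := Finset.mem_filter.mp ht
  rcases hcomp t (mem_evenNbrs.mp htx).2 with hempty | ⟨b, c, h⟩
  · simp [hempty] at hcard
  · rw [h.evenNbrs_eq, Finset.filter_insert, Finset.filter_singleton] at hcard
    by_cases hb : G.Adj x b
    · exact ⟨b, c, h, hb, fun hc => by simp [hb, hc, Finset.card_pair h.adj_bc.ne] at hcard⟩
    · exact ⟨c, b, h.swap, by by_contra hc; simp [hb, hc] at hcard, hb⟩

theorem EvenIsolatedOrTriangle.exists_of_mem_evenNbrsSharing_two (hcomp : EvenIsolatedOrTriangle G)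
    (ht : t ∈ evenNbrsSharing G x 2) :
    ∃ b c, IsTriangleComponent G t b c ∧ G.Adj x b ∧ G.Adj x c := by
  classical
  obtain ⟨htx, hcard⟩ := Finset.mem_filter.mp ht
  rcases hcomp t (mem_evenNbrs.mp htx).2 with hempty | ⟨b, c, h⟩
  · simp [hempty] at hcard
  · have hsub := Finset.eq_of_subset_of_card_le (Finset.filter_subset (G.Adj x) (evenNbrs G t))
      ((hcomp.card_evenNbrs_le_two t h.even_a).trans hcard.ge)
    rw [h.evenNbrs_eq, Finset.filter_eq_self] at hsub
    exact ⟨b, c, h, hsub b (by simp), hsub c (by simp)⟩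

theorem EvenIsolatedOrTriangle.card_evenNbrs_eq_add (hcomp : EvenIsolatedOrTriangle G) :
    (evenNbrs G x).card = (evenNbrsSharing G x 0).card + (evenNbrsSharing G x 1).card +
      (evenNbrsSharing G x 2).card := by
  classical
  rw [Finset.card_eq_sum_card_fiberwise
    (f := fun t => (Finset.filter (G.Adj x) (evenNbrs G t)).card) (t := Finset.range 3)
    fun t ht => Finset.mem_coe.mpr (Finset.mem_range.mpr (Nat.lt_succ_of_le
      ((Finset.card_filter_le _ _).trans (hcomp.card_evenNbrs_le_two t (mem_evenNbrs.mp ht).2))))]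
  simp only [Finset.sum_range_succ, Finset.sum_range_zero, zero_add]
  rfl

theorem IsTriangleComponent.evenNbrs_cut_eq (h : IsTriangleComponent G a b c)
    (hb : ¬G.Adj x b) (hc : ¬G.Adj x c) : evenNbrs (cut G b {c}) x = evenNbrs G x := by
  refine Finset.Subset.antisymm h.evenNbrs_cut_subset fun v hv =>
    h.mem_evenNbrs_cut_iff.mpr ⟨hv, ?_, ?_⟩ <;> rintro rfl
  · exact hb (mem_evenNbrs.mp hv).1
  · exact hc (mem_evenNbrs.mp hv).1

theorem IsTriangleComponent.card_evenNbrs_cut_add_one (h : IsTriangleComponent G a b c)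
    (hb : G.Adj x b) (hc : ¬G.Adj x c) :
    (evenNbrs (cut G b {c}) x).card + 1 = (evenNbrs G x).card := by
  classical
  rw [← Finset.card_erase_add_one (mem_evenNbrs.mpr ⟨hb, h.even_b⟩)]
  congr 2
  ext v
  rw [h.mem_evenNbrs_cut_iff, Finset.mem_erase]
  refine ⟨fun hv => ⟨hv.2.1, hv.1⟩, fun hv => ⟨hv.2, hv.1, ?_⟩⟩
  rintro rfl
  exact hc (mem_evenNbrs.mp hv.2).1

theorem exists_starPrepared (hG : Admissible G) (hbelow : GallaiBelow G)
    (hcomp : EvenIsolatedOrTriangle G) (hx : ¬EvenDeg G x) (hne : (evenNbrs G x).Nonempty) :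
    ∃ d, StarPrepared G x (evenNbrs G x) (evenNbrsSharing G x 0) d := by
  induction G using WellFoundedLT.induction with | ind G ih
  by_cases hiso : ∀ t ∈ evenNbrsSharing G x 0, evenNbrs G t = ∅
  · obtain ⟨d, hd⟩ := exists_starPrepared_of_le_two hG hbelow hcomp.card_evenNbrs_le_two hx hne
    exact ⟨d, hd.mono fun t ht => ⟨evenNbrsSharing_subset ht, hiso t ht⟩⟩
  push Not at hiso
  obtain ⟨a, ha, hne'⟩ := hiso
  obtain ⟨hax, hnot⟩ := mem_evenNbrsSharing_zero.mp ha
  obtain ⟨b, c, h⟩ := (hcomp a (mem_evenNbrs.mp hax).2).resolve_left hne'.ne_empty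
  have hb := hnot b (mem_evenNbrs.mpr ⟨h.adj_ab, h.even_b⟩)
  have hc := hnot c (mem_evenNbrs.mpr ⟨h.adj_ac, h.even_c⟩)
  have heq := h.evenNbrs_cut_eq hb hc
  obtain ⟨d, hd⟩ := ih _ (cut_lt (Finset.mem_singleton_self c) h.adj_bc)
    (h.admissible_cut hG hcomp) (hbelow.anti cut_le) (h.evenIsolatedOrTriangle_cut hcomp)
    (fun e => hx (h.evenDeg_cut_iff.mp e).1) (heq.symm ▸ hne)
  rw [heq] at hd
  obtain ⟨d', hd'⟩ := hd.insert_apex h hx hax hc fun e => absurd e hb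
  refine ⟨d', hd'.mono fun t ht => Or.inr ?_⟩
  obtain ⟨htx, hnot⟩ := mem_evenNbrsSharing_zero.mp ht
  exact mem_evenNbrsSharing_zero.mpr ⟨heq ▸ htx, fun s hs hxs =>
    hnot s (h.evenNbrs_cut_subset hs) (cut_le hxs)⟩

theorem StarPrepared.isGallai_of_even {L : Set V} {d : V → ℕ} {T : Finset V}
    (h : StarPrepared G x T L d) (hle : ∀ v, EvenDeg G v → (evenNbrs G v).card ≤ 2)
    (heven : Even T.card) (ht : t ∈ L) : IsGallai G :=
  h.isGallai hle fun _ hσ =>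
    .of_even hσ heven (h.pos_of_even heven) (h.low t ht).1 (h.low t ht).2

theorem card_evenNbrsSharing_zero_le_one (hG : Admissible G) (hbelow : GallaiBelow G)
    (hcomp : EvenIsolatedOrTriangle G) (hx : ¬EvenDeg G x) (hnot : ¬IsGallai G) :
    (evenNbrsSharing G x 0).card ≤ 1 := by
  refine Finset.card_le_one.mpr fun t ht t' ht' => by_contra fun hne => hnot ?_
  obtain ⟨d, hd⟩ := exists_starPrepared hG hbelow hcomp hx ⟨t, evenNbrsSharing_subset ht⟩
  exact hd.isGallai hcomp.card_evenNbrs_le_two fun σ hσ => .of_two hσ hd.pos_of_even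
    (hd.low t ht).1 (hd.low t' ht').1 hne (hd.low t ht).2 (hd.low t' ht').2

theorem evenNbrsSharing_zero_eq_empty_of_even (hG : Admissible G) (hbelow : GallaiBelow G)
    (hcomp : EvenIsolatedOrTriangle G) (hx : ¬EvenDeg G x) (hnot : ¬IsGallai G)
    (heven : Even (evenNbrs G x).card) : evenNbrsSharing G x 0 = ∅ := by
  refine Finset.eq_empty_of_forall_notMem fun t ht => hnot ?_
  obtain ⟨d, hd⟩ := exists_starPrepared hG hbelow hcomp hx ⟨t, evenNbrsSharing_subset ht⟩
  exact hd.isGallai_of_even hcomp.card_evenNbrs_le_two heven ht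

theorem card_evenNbrs_ne_one (hG : Admissible G) (hbelow : GallaiBelow G)
    (hcomp : EvenIsolatedOrTriangle G) (hx : ¬EvenDeg G x) (hnot : ¬IsGallai G) :
    (evenNbrs G x).card ≠ 1 := fun hcard => hnot <| by
  obtain ⟨d, hd⟩ := exists_starPrepared hG hbelow hcomp hx (Finset.card_pos.mp (by omega))
  exact hd.isGallai hcomp.card_evenNbrs_le_two fun σ hσ => .of_card_eq_one hσ hcard

theorem evenNbrsSharing_one_eq_empty_of_odd (hG : Admissible G) (hbelow : GallaiBelow G)
    (hcomp : EvenIsolatedOrTriangle G) (hx : ¬EvenDeg G x) (hnot : ¬IsGallai G)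
    (hodd : Odd (evenNbrs G x).card) : evenNbrsSharing G x 1 = ∅ := by
  refine Finset.eq_empty_of_forall_notMem fun a ha => hnot ?_
  have hax := evenNbrsSharing_subset ha
  obtain ⟨b, c, h, hb, hc⟩ := hcomp.exists_of_mem_evenNbrsSharing_one ha
  have hacut := h.mem_evenNbrs_cut_iff.mpr ⟨hax, h.adj_ab.ne, h.adj_ac.ne⟩
  have heven : Even (evenNbrs (cut G b {c}) x).card := by
    rwa [← h.card_evenNbrs_cut_add_one hb hc, Nat.odd_add_one, Nat.not_odd_iff_even] at hodd
  obtain ⟨d, hd⟩ := exists_starPrepared (h.admissible_cut hG hcomp) (hbelow.anti cut_le)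
    (h.evenIsolatedOrTriangle_cut hcomp) (fun e => hx (h.evenDeg_cut_iff.mp e).1) ⟨a, hacut⟩
  obtain ⟨d', hd'⟩ := hd.insert_apex h hx hacut hc fun _ => heven
  exact hd'.isGallai_of_even hcomp.card_evenNbrs_le_two heven (Set.mem_insert _ _)

open Classical in
theorem isGallai_of_two_triangles_of_even (hG : Admissible G) (hbelow : GallaiBelow G)
    (hcomp : EvenIsolatedOrTriangle G) (hx : ¬EvenDeg G x) (heven : Even (evenNbrs G x).card)
    (h : IsTriangleComponent G a b c) (ha : G.Adj x a) (hb : G.Adj x b) (hc : ¬G.Adj x c)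
    (h' : IsTriangleComponent G p q r) (hp : G.Adj x p) (hq : G.Adj x q) (hr : ¬G.Adj x r)
    (hpabc : p ∉ ({a, b, c} : Finset V)) : IsGallai G := by
  have hdisj := Finset.disjoint_right.mp (h.disjoint h' hpabc)
  simp only [Finset.mem_insert, Finset.mem_singleton, not_or, forall_eq_or_imp, forall_eq] at hdisj
  obtain ⟨⟨hpa, hpb, hpc⟩, ⟨hqa, hqb, hqc⟩, ⟨hra, hrb, hrc⟩⟩ := hdisj
  have k := h.cut_of_notMem h' hpabc
  have hxb : x ≠ b := hb.ne
  have hx₁ : ¬EvenDeg (cut G b {c}) x := fun e => hx (h.evenDeg_cut_iff.mp e).1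
  have hp₁ : (cut G b {c}).Adj x p := (cut_adj_of_ne hxb hpb).mpr hp
  have hq₁ : (cut G b {c}).Adj x q := (cut_adj_of_ne hxb hqb).mpr hq
  have hr₁ : ¬(cut G b {c}).Adj x r := fun e => hr (cut_le e)
  have ha₂ : a ∈ evenNbrs (cut (cut G b {c}) q {r}) x := k.mem_evenNbrs_cut_iff.mpr
    ⟨h.mem_evenNbrs_cut_iff.mpr ⟨mem_evenNbrs.mpr ⟨ha, h.even_a⟩, h.adj_ab.ne, h.adj_ac.ne⟩,
      Ne.symm hqa, Ne.symm hra⟩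
  have hp₂ : p ∈ evenNbrs (cut (cut G b {c}) q {r}) x :=
    k.mem_evenNbrs_cut_iff.mpr ⟨mem_evenNbrs.mpr ⟨hp₁, k.even_a⟩, k.adj_ab.ne, k.adj_ac.ne⟩
  have heven₂ : Even (evenNbrs (cut (cut G b {c}) q {r}) x).card := by
    rwa [← h.card_evenNbrs_cut_add_one hb hc, ← k.card_evenNbrs_cut_add_one hq₁ hr₁,
      Nat.even_add_one, Nat.even_add_one, not_not] at heven
  have hcomp₁ := h.evenIsolatedOrTriangle_cut hcomp
  obtain ⟨d, hd⟩ := exists_starPrepared (k.admissible_cut (h.admissible_cut hG hcomp) hcomp₁)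
    (hbelow.anti (cut_le.trans cut_le)) (k.evenIsolatedOrTriangle_cut hcomp₁)
    (fun e => hx₁ (k.evenDeg_cut_iff.mp e).1) ⟨a, ha₂⟩
  obtain ⟨d₁, hd₁⟩ := hd.insert_apex k hx₁ hp₂ hr₁ fun _ => heven₂
  obtain ⟨d₂, hd₂⟩ := hd₁.insert_apex h hx ha₂ hc fun _ => heven₂
  exact hd₂.isGallai_of_even hcomp.card_evenNbrs_le_two heven₂ (Set.mem_insert _ _)

open Classical in
theorem isGallai_of_two_triangles_subset_nbr (hG : Admissible G) (hbelow : GallaiBelow G)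
    (hcomp : EvenIsolatedOrTriangle G) (hx : ¬EvenDeg G x)
    (h : IsTriangleComponent G a b c) (hsub : {a, b, c} ⊆ evenNbrs G x)
    (h' : IsTriangleComponent G p q r) (hsub' : {p, q, r} ⊆ evenNbrs G x)
    (hp : p ∉ ({a, b, c} : Finset V)) : IsGallai G := by
  obtain ⟨d, hd⟩ := exists_starPrepared hG hbelow hcomp hx ⟨a, hsub (Finset.mem_insert_self _ _)⟩
  exact hd.isGallai hcomp.card_evenNbrs_le_two fun σ hσ => .of_two_triples hσ hd.pos_of_even
    (fun t ht => hd.pos_of_mem t (evenNbrs_subset_nbr ht)) hsub hsub' (h.disjoint h' hp)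
    h.card_eq_three h'.card_eq_three
    (fun t ht => (hd.blockers_subset t).trans (h.evenNbrs_subset ht))
    (fun t ht => (hd.blockers_subset t).trans (h'.evenNbrs_subset ht))

open Classical in
theorem exists_evenNbrsSharing_one_eq_pair (hG : Admissible G) (hbelow : GallaiBelow G)
    (hcomp : EvenIsolatedOrTriangle G) (hx : ¬EvenDeg G x) (hnot : ¬IsGallai G)
    (heven : Even (evenNbrs G x).card) (ha : a ∈ evenNbrsSharing G x 1) :
    ∃ b c, IsTriangleComponent G a b c ∧ G.Adj x b ∧ evenNbrsSharing G x 1 = {a, b} := by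
  obtain ⟨b, c, h, hb, hc⟩ := hcomp.exists_of_mem_evenNbrsSharing_one ha
  have hxa := (mem_evenNbrs.mp (evenNbrsSharing_subset ha)).1
  refine ⟨b, c, h, hb, Finset.Subset.antisymm (fun p hp => ?_) ?_⟩
  · obtain ⟨q, r, h', hq, hr⟩ := hcomp.exists_of_mem_evenNbrsSharing_one hp
    have hxp := (mem_evenNbrs.mp (evenNbrsSharing_subset hp)).1
    have hpabc : p ∈ ({a, b, c} : Finset V) := by_contra fun hpabc => hnot <|
      isGallai_of_two_triangles_of_even hG hbelow hcomp hx heven h hxa hb hc h' hxp hq hr hpabc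
    have hpc : p ≠ c := fun e => hc (e ▸ hxp)
    simpa [hpc] using hpabc
  · exact Finset.insert_subset ha (Finset.singleton_subset_iff.mpr
      (h.rotate.swap.mem_evenNbrsSharing_one hb hxa hc))

open Classical in
theorem exists_evenNbrsSharing_two_eq_triple (hG : Admissible G) (hbelow : GallaiBelow G)
    (hcomp : EvenIsolatedOrTriangle G) (hx : ¬EvenDeg G x) (hnot : ¬IsGallai G)
    (ha : a ∈ evenNbrsSharing G x 2) :
    ∃ b c, IsTriangleComponent G a b c ∧ G.Adj x b ∧ evenNbrsSharing G x 2 = {a, b, c} := by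
  have hsub : ∀ {p q r}, IsTriangleComponent G p q r → p ∈ evenNbrsSharing G x 2 → G.Adj x q →
      G.Adj x r → {p, q, r} ⊆ evenNbrsSharing G x 2 := by
    intro p q r h hp hq hr
    have hxp := (mem_evenNbrs.mp (evenNbrsSharing_subset hp)).1
    simp only [Finset.insert_subset_iff, Finset.singleton_subset_iff]
    exact ⟨hp, h.rotate.mem_evenNbrsSharing_two hq hr hxp,
      h.rotate.rotate.mem_evenNbrsSharing_two hr hxp hq⟩
  obtain ⟨b, c, h, hb, hc⟩ := hcomp.exists_of_mem_evenNbrsSharing_two ha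
  refine ⟨b, c, h, hb, Finset.Subset.antisymm (fun p hp => by_contra fun hpabc => hnot ?_)
    (hsub h ha hb hc)⟩
  obtain ⟨q, r, h', hq, hr⟩ := hcomp.exists_of_mem_evenNbrsSharing_two hp
  exact isGallai_of_two_triangles_subset_nbr hG hbelow hcomp hx
    h ((hsub h ha hb hc).trans evenNbrsSharing_subset)
    h' ((hsub h' hp hq hr).trans evenNbrsSharing_subset) hpabc

theorem evenNbrsSharing_eq_evenNbrs_of_card {i : ℕ}
    (hcard : (evenNbrs G x).card = (evenNbrsSharing G x i).card) :
    evenNbrsSharing G x i = evenNbrs G x :=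
  Finset.eq_of_subset_of_card_le evenNbrsSharing_subset hcard.le

open Classical in
theorem exists_isTriangleComponent_of_even (hG : Admissible G) (hbelow : GallaiBelow G)
    (hcomp : EvenIsolatedOrTriangle G) (hx : ¬EvenDeg G x) (hnot : ¬IsGallai G)
    (hne : (evenNbrs G x).Nonempty) (heven : Even (evenNbrs G x).card) :
    ∃ a b c, IsTriangleComponent G a b c ∧ G.Adj x a ∧ G.Adj x b ∧
      evenNbrs G x ⊆ {a, b, c} := by
  have hadd := hcomp.card_evenNbrs_eq_add (x := x)
  rw [evenNbrsSharing_zero_eq_empty_of_even hG hbelow hcomp hx hnot heven, Finset.card_empty,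
    zero_add] at hadd
  have hone : Even (evenNbrsSharing G x 1).card := by
    rcases (evenNbrsSharing G x 1).eq_empty_or_nonempty with hempty | ⟨a, ha⟩
    · simp [hempty]
    · obtain ⟨b, c, h, -, hpair⟩ :=
        exists_evenNbrsSharing_one_eq_pair hG hbelow hcomp hx hnot heven ha
      simp [hpair, Finset.card_pair h.adj_ab.ne]
  have htwo : evenNbrsSharing G x 2 = ∅ := by
    by_contra hne
    obtain ⟨a, ha⟩ := Finset.nonempty_iff_ne_empty.mpr hne
    obtain ⟨b, c, h, -, htriple⟩ :=
      exists_evenNbrsSharing_two_eq_triple hG hbelow hcomp hx hnot ha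
    rw [htriple, h.card_eq_three] at hadd
    grind
  have hall := evenNbrsSharing_eq_evenNbrs_of_card (i := 1) (by rw [hadd, htwo]; rfl)
  obtain ⟨a, ha⟩ := hne
  obtain ⟨b, c, h, hb, hpair⟩ :=
    exists_evenNbrsSharing_one_eq_pair hG hbelow hcomp hx hnot heven (hall ▸ ha)
  refine ⟨a, b, c, h, (mem_evenNbrs.mp ha).1, hb, ?_⟩
  rw [← hall, hpair]
  gcongr
  simp

open Classical in
theorem exists_isTriangleComponent_of_odd (hG : Admissible G) (hbelow : GallaiBelow G)
    (hcomp : EvenIsolatedOrTriangle G) (hx : ¬EvenDeg G x) (hnot : ¬IsGallai G)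
    (hodd : Odd (evenNbrs G x).card) :
    ∃ a b c, IsTriangleComponent G a b c ∧ G.Adj x a ∧ G.Adj x b ∧
      evenNbrs G x ⊆ {a, b, c} := by
  have hadd := hcomp.card_evenNbrs_eq_add (x := x)
  rw [evenNbrsSharing_one_eq_empty_of_odd hG hbelow hcomp hx hnot hodd, Finset.card_empty,
    add_zero] at hadd
  have hzero := card_evenNbrsSharing_zero_le_one hG hbelow hcomp hx hnot
  have hcard := card_evenNbrs_ne_one hG hbelow hcomp hx hnot
  obtain ⟨a, ha⟩ : (evenNbrsSharing G x 2).Nonempty := Finset.card_pos.mp (by grind)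
  obtain ⟨b, c, h, hb, htriple⟩ := exists_evenNbrsSharing_two_eq_triple hG hbelow hcomp hx hnot ha
  have hall := evenNbrsSharing_eq_evenNbrs_of_card (G := G) (x := x) (i := 2) <| by
    rw [htriple, h.card_eq_three] at hadd ⊢
    grind
  exact ⟨a, b, c, h, (mem_evenNbrs.mp (evenNbrsSharing_subset ha)).1, hb, by rw [← hall, htriple]⟩

open Classical in
theorem exists_isTriangleComponent_of_not_isGallai (hG : Admissible G) (hbelow : GallaiBelow G)
    (hnot : ¬IsGallai G) (hx : ¬EvenDeg G x) (hne : (evenNbrs G x).Nonempty) :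
    ∃ a b c, IsTriangleComponent G a b c ∧ G.Adj x a ∧ G.Adj x b ∧
      evenNbrs G x ⊆ {a, b, c} := by
  have hcomp := evenIsolatedOrTriangle_of_not_isGallai hG hbelow hnot
  rcases Nat.even_or_odd (evenNbrs G x).card with heven | hodd
  · exact exists_isTriangleComponent_of_even hG hbelow hcomp hx hnot hne heven
  · exact exists_isTriangleComponent_of_odd hG hbelow hcomp hx hnot hodd

end OddVertex

section OddEdge
variable [Fintype V] {G : SimpleGraph V} {a b c p q r v w y : V} {S T : Finset V} {d d' : V → ℕ}

/-- Numbers of ends `d` of a path decomposition of `G` without the edge `wy`, the edges from `w` to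
`S` and those from `y` to `T`, suited for adding these edges. -/
structure EdgePrepared (G : SimpleGraph V) (w y : V) (S T : Finset V) (d : V → ℕ) : Prop where
  adj : G.Adj w y
  hasEnds : HasEnds (cut (cut (cut G y T) y {w}) w S) d
  sum_le : ∑ v, d v ≤ Fintype.card V
  subset_left : S ⊆ evenNbrs G w
  subset_right : T ⊆ evenNbrs G y
  odd_left : Odd S.card
  odd_right : T = ∅ ∨ Odd T.card
  evenDeg_of_eq_zero : ∀ v, v ≠ y → d v = 0 → EvenDeg G v
  pos_left : ∀ v ∈ nbr G w, v ≠ y → 1 ≤ d v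
  pos_right : ∀ v ∈ nbr G y, 1 ≤ d v
  not_adj : ∀ t ∈ S, ¬G.Adj y t
  pos_of_nonempty : T.Nonempty → 1 ≤ d y

theorem cut_evenNbrs_adj (hwy : G.Adj w y) (hy : ¬EvenDeg G y) :
    (cut G w (evenNbrs G w)).Adj y w :=
  (cut_adj_self.mpr ⟨hwy, fun h => hy (mem_evenNbrs.mp h).2⟩).symm

theorem evenDeg_of_evenDeg_cut_cut (hwy : G.Adj w y) (hy : ¬EvenDeg G y) (hvy : v ≠ y)
    (hv : EvenDeg (cut (cut G w (evenNbrs G w)) y (evenNbrs (cut G w (evenNbrs G w)) y)) v) :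
    EvenDeg G v ∧ ¬G.Adj w v ∧ ¬G.Adj y v := by
  have hyv : ¬(cut G w (evenNbrs G w)).Adj y v := fun h => not_evenDeg_cut_evenNbrs_of_adj h hv
  have hvw : v ≠ w := by
    rintro rfl
    exact hyv (cut_evenNbrs_adj hwy hy)
  rw [evenDeg_cut_of_notMem hvy fun h => hyv (mem_evenNbrs.mp h).1] at hv
  have hwv : ¬G.Adj w v := fun h => not_evenDeg_cut_evenNbrs_of_adj h hv
  exact ⟨(evenDeg_cut_of_notMem hvw fun h => hwv (mem_evenNbrs.mp h).1).mp hv, hwv,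
    fun h => hyv ((cut_adj_of_ne hwy.ne' hvw).mpr h)⟩

open Classical in
theorem evenNbrs_cut_evenNbrs_eq_insert (hw : ¬EvenDeg G w) (hy : ¬EvenDeg G y) (hwy : G.Adj w y)
    (hodd : Odd (evenNbrs G w).card) (hnot : ∀ t ∈ evenNbrs G w, ¬G.Adj y t) :
    evenNbrs (cut G w (evenNbrs G w)) y = insert w (evenNbrs G y) := by
  have hevenw : EvenDeg (cut G w (evenNbrs G w)) w := by
    rw [evenDeg_cut_self evenNbrs_subset_nbr]
    exact iff_of_false hw (Nat.not_even_iff_odd.mpr hodd)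
  ext v
  rw [Finset.mem_insert, mem_evenNbrs, mem_evenNbrs]
  rcases eq_or_ne v w with rfl | hvw
  · exact iff_of_true ⟨cut_evenNbrs_adj hwy hy, hevenw⟩ (Or.inl rfl)
  rw [cut_adj_of_ne hwy.ne' hvw]
  by_cases hvS : v ∈ evenNbrs G w
  · simp [hvw, hnot v hvS]
  · simp [hvw, evenDeg_cut_of_notMem hvw hvS]

theorem not_evenDeg_cut_cut (hw : ¬EvenDeg G w) (hy : ¬EvenDeg G y) (hwy : G.Adj w y)
    (hodd : Odd (evenNbrs G w).card) (hnot : ∀ t ∈ evenNbrs G w, ¬G.Adj y t)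
    (hoddy : Odd (evenNbrs G y).card) :
    ¬EvenDeg (cut (cut G w (evenNbrs G w)) y (evenNbrs (cut G w (evenNbrs G w)) y)) y := by
  classical
  have heven : Even (evenNbrs (cut G w (evenNbrs G w)) y).card := by
    rw [evenNbrs_cut_evenNbrs_eq_insert hw hy hwy hodd hnot,
      Finset.card_insert_of_notMem fun h => hw (mem_evenNbrs.mp h).2]
    exact hoddy.add_one
  rw [evenDeg_cut_self evenNbrs_subset_nbr,
    evenDeg_cut_of_notMem hwy.ne' fun h => hy (mem_evenNbrs.mp h).2]
  simp [hy, heven]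

theorem exists_edgePrepared (hG : Admissible G) (hbelow : GallaiBelow G)
    (hle : ∀ v, EvenDeg G v → (evenNbrs G v).card ≤ 2) (hw : ¬EvenDeg G w) (hy : ¬EvenDeg G y)
    (hwy : G.Adj w y) (hodd : Odd (evenNbrs G w).card)
    (hoddy : evenNbrs G y = ∅ ∨ Odd (evenNbrs G y).card)
    (hnot : ∀ t ∈ evenNbrs G w, ¬G.Adj y t) :
    ∃ d, EdgePrepared G w y (evenNbrs G w) (evenNbrs G y) d := by
  classical
  have hins := evenNbrs_cut_evenNbrs_eq_insert hw hy hwy hodd hnot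
  have hred : IsReduction G (cut G w (evenNbrs G w)) := isReduction_cut_evenNbrs_of_le_two hle
  have hlt : cut (cut G w (evenNbrs G w)) y (evenNbrs (cut G w (evenNbrs G w)) y) < G :=
    (cut_lt (hins ▸ Finset.mem_insert_self _ _) (cut_evenNbrs_adj hwy hy)).trans_le cut_le
  obtain ⟨d, hd, hsum⟩ := hbelow _ hlt
    ((isReduction_cut_evenNbrs_of_le_two (hred.card_evenNbrs_le hle)).admissible
      (hred.admissible hG))
  have heven : ∀ v, v ≠ y → d v = 0 → EvenDeg G v ∧ ¬G.Adj w v ∧ ¬G.Adj y v := fun v hvy hv =>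
    evenDeg_of_evenDeg_cut_cut hwy hy hvy (hd.evenDeg_of_eq_zero hv)
  have hends : cut (cut G w (evenNbrs G w)) y (evenNbrs (cut G w (evenNbrs G w)) y) =
      cut (cut (cut G y (evenNbrs G y)) y {w}) w (evenNbrs G w) := by
    rw [hins, cut_comm, cut_cut_union, Finset.union_singleton]
  refine ⟨d, hwy, hends ▸ hd, hsum, subset_rfl, subset_rfl, hodd, hoddy,
    fun v hvy hv => (heven v hvy hv).1, fun v hv hvy => ?_, fun v hv => ?_, hnot, fun hne => ?_⟩
  · exact Nat.one_le_iff_ne_zero.mpr fun h => (heven v hvy h).2.1 (mem_nbr.mp hv)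
  · exact Nat.one_le_iff_ne_zero.mpr fun h => (heven v (ne_of_mem_nbr hv) h).2.2 (mem_nbr.mp hv)
  · exact hd.pos_of_not_evenDeg
      (not_evenDeg_cut_cut hw hy hwy hodd hnot (hoddy.resolve_left hne.ne_empty))

theorem EdgePrepared.exists_endShift (R : EdgePrepared (cut G b {c}) w y S T d)
    (h : IsTriangleComponent G a b c) (hw : ¬EvenDeg G w) (hy : ¬EvenDeg G y) (ha : 1 ≤ d a)
    (hb : G.Adj y b → T.Nonempty) :
    ∃ d', HasEnds (cut (cut (cut G y T) y {w}) w S) d' ∧ EndShift b {c} d d' := by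
  have hbw : b ≠ w := fun e => hw (e ▸ h.even_b)
  have hby : b ≠ y := fun e => hy (e ▸ h.even_b)
  have hcw : c ≠ w := fun e => hw (e ▸ h.even_c)
  have hcy : c ≠ y := fun e => hy (e ▸ h.even_c)
  have hd := R.hasEnds
  rw [cut_comm (x := b) (y := y), cut_comm (x := b) (y := y), cut_comm (x := b) (y := w)] at hd
  refine hd.exists_endShift_singleton_of_pos ((cut_adj_of_ne hbw hcw).mpr
    ((cut_adj_of_ne hby hcy).mpr ((cut_adj_of_ne hby hcy).mpr h.adj_bc))) fun v hv => ?_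
  have hbv : G.Adj b v := cut_le (cut_le (cut_le (mem_nbr.mp hv)))
  rcases eq_or_ne v y with rfl | hvy
  · exact R.pos_of_nonempty (hb hbv.symm)
  by_contra! hlt
  obtain ⟨heven, -, hvc⟩ := h.evenDeg_cut_iff.mp (R.evenDeg_of_eq_zero v hvy (by omega))
  rcases h.of_mem_b v (mem_evenNbrs.mpr ⟨hbv, heven⟩) with rfl | hvc'
  · omega
  · exact hvc hvc'

theorem EdgePrepared.evenDeg_of_endShift (R : EdgePrepared (cut G b {c}) w y S T d)
    (h : IsTriangleComponent G a b c) (hd' : EndShift b {c} d d') (hvy : v ≠ y) (hv : d' v = 0) :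
    EvenDeg G v := by
  rcases eq_or_ne v b with rfl | hvb
  · exact h.even_b
  rcases eq_or_ne v c with rfl | hvc
  · exact h.even_c
  rw [hd'.of_notMem v hvb (by simpa using hvc)] at hv
  exact (h.evenDeg_cut_iff.mp (R.evenDeg_of_eq_zero v hvy hv)).1

theorem EdgePrepared.of_cut (R : EdgePrepared (cut G b {c}) w y S T d)
    (h : IsTriangleComponent G a b c) (hw : ¬EvenDeg G w) (hy : ¬EvenDeg G y) (ha : 1 ≤ d a)
    (hwc : ¬G.Adj w c) (hyc : ¬G.Adj y c) (hyb : G.Adj y b → T.Nonempty) :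
    ∃ d', EdgePrepared G w y S T d' := by
  have hbw : w ≠ b := fun e => hw (e ▸ h.even_b)
  have hby : y ≠ b := fun e => hy (e ▸ h.even_b)
  have hcy : y ≠ c := fun e => hy (e ▸ h.even_c)
  obtain ⟨d', hends, hd'⟩ := R.exists_endShift h hw hy ha hyb
  have heq : ∀ v, v ≠ b → v ≠ c → d' v = d v := fun v hvb hvc =>
    hd'.of_notMem v hvb (by simpa using hvc)
  have hpos : ∀ u v, u ≠ b → ¬G.Adj u c → v ∈ nbr G u →
      (v ∈ nbr (cut G b {c}) u → 1 ≤ d v) → 1 ≤ d' v := fun u v hub huc hv hdv => by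
    have huv := mem_nbr.mp hv
    rcases eq_or_ne v b with rfl | hvb
    · exact le_of_le_of_eq le_add_self hd'.center.symm
    · rw [heq v hvb fun e => huc (e ▸ huv)]
      exact hdv (mem_nbr.mpr ((cut_adj_of_ne hub hvb).mpr huv))
  refine ⟨d', cut_le R.adj, hends, hd'.sum_eq.trans_le R.sum_le,
    R.subset_left.trans h.evenNbrs_cut_subset, R.subset_right.trans h.evenNbrs_cut_subset,
    R.odd_left, R.odd_right, fun v => R.evenDeg_of_endShift h hd',
    fun v hv hvy => hpos w v hbw hwc hv fun hv => R.pos_left v hv hvy,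
    fun v hv => hpos y v hby hyc hv (R.pos_right v), fun t ht hyt => ?_, ?_⟩
  · exact R.not_adj t ht ((cut_adj_of_ne hby
      (h.mem_evenNbrs_cut_iff.mp (R.subset_left ht)).2.1).mpr hyt)
  · rw [heq y hby hcy]
    exact R.pos_of_nonempty

theorem EdgePrepared.exists_redistribution (R : EdgePrepared G w y S T d) (hy : ¬EvenDeg G y)
    (hle : ∀ v, EvenDeg G v → (evenNbrs G v).card ≤ 2) :
    ∃ d', HasEnds (cut (cut G y T) y {w}) d' ∧ Redistribution w S d d' := by
  have hcut : cut (cut G y T) y {w} ≤ G := cut_le.trans cut_le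
  have hS := R.subset_left
  refine HasEnds.exists_redistribution (fun t ht => ?_) R.hasEnds (fun v hv => ?_)
    (fun t ht => ?_) fun σ hσ => .of_odd hσ R.odd_left (R.pos_right w (mem_nbr.mpr R.adj.symm))
  · obtain ⟨hwt, heven⟩ := mem_evenNbrs.mp (hS ht)
    have hty : t ≠ y := fun e => hy (e ▸ heven)
    exact mem_nbr.mpr ((cut_adj_of_ne R.adj.ne hty).mpr ((cut_adj_of_ne R.adj.ne hty).mpr hwt))
  · refine R.pos_left v (mem_nbr.mpr (hcut (mem_nbr.mp hv))) ?_
    rintro rfl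
    exact (cut_adj_self.mp (mem_nbr.mp hv).symm).2 (Finset.mem_singleton_self w)
  · refine (Finset.card_le_card fun v hv => ?_).trans (hle t (mem_evenNbrs.mp (hS ht)).2)
    obtain ⟨htv, -, hv⟩ := mem_blockers.mp hv
    have htv := hcut (mem_nbr.mp htv)
    have hvy : v ≠ y := fun e => R.not_adj t ht (e ▸ htv).symm
    exact mem_evenNbrs.mpr ⟨htv, hv.elim (R.evenDeg_of_eq_zero v hvy) fun hvS =>
      (mem_evenNbrs.mp (hS hvS)).2⟩

/-- The degree of `w` becomes even when the edge `wy` is removed. -/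
theorem EdgePrepared.two_le (R : EdgePrepared G w y S T d) (hw : ¬EvenDeg G w)
    (hends : HasEnds (cut (cut G y T) y {w}) d') (hd' : Redistribution w S d d') : 2 ≤ d' w := by
  have hwT : w ∉ T := fun h => hw (mem_evenNbrs.mp (R.subset_right h)).2
  have hyw : (cut G y T).Adj y w := cut_adj_self.mpr ⟨R.adj.symm, hwT⟩
  have heven : EvenDeg (cut (cut G y T) y {w}) w := by
    rw [evenDeg_cut_of_mem (by simpa [mem_nbr] using hyw) (Finset.mem_singleton_self w),
      evenDeg_cut_of_notMem R.adj.ne hwT]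
    exact hw
  have hpos : 1 ≤ d' w := (R.pos_right w (mem_nbr.mpr R.adj.symm)).trans hd'.le_center
  have hpar : Even (d' w) := (Nat.even_add.mp (hends.even w)).mpr heven
  obtain ⟨m, hm⟩ := hpar
  omega

theorem EdgePrepared.exists_starPrepared (R : EdgePrepared G w y S T d) (hw : ¬EvenDeg G w)
    (hy : ¬EvenDeg G y) (hle : ∀ v, EvenDeg G v → (evenNbrs G v).card ≤ 2) :
    ∃ d', StarPrepared G y T ∅ d' ∧ 1 ≤ d' y := by
  obtain ⟨d₁, hends₁, hd₁⟩ := R.exists_redistribution hy hle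
  have htwo := R.two_le hw hends₁ hd₁
  have hpos : ∀ v ∈ nbr G y, v ≠ w → 1 ≤ d₁ v := fun v hv hvw => by
    rw [hd₁.of_notMem v hvw fun hvS => R.not_adj v hvS (mem_nbr.mp hv)]
    exact R.pos_right v hv
  obtain ⟨d₂, hends₂, hd₂⟩ := hends₁.exists_endShift_singleton_of_pos
    (cut_adj_self.mpr ⟨R.adj.symm, fun h => hw (mem_evenNbrs.mp (R.subset_right h)).2⟩)
    fun v hv => by
      rcases eq_or_ne v w with rfl | hvw
      · omega
      · exact hpos v (nbr_mono cut_le y hv) hvw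
  have hw₂ : d₂ w + 1 = d₁ w := hd₂.of_mem w (Finset.mem_singleton_self w)
  have hy₂ : 1 ≤ d₂ y := le_of_le_of_eq le_add_self hd₂.center.symm
  have heq : ∀ v, v ≠ y → v ≠ w → d₂ v = d₁ v := fun v hvy hvw =>
    hd₂.of_notMem v hvy (Finset.notMem_singleton.mpr hvw)
  refine ⟨d₂, ⟨hends₂, (hd₂.sum_eq.trans hd₁.sum_eq).trans_le R.sum_le, R.subset_right,
    fun v hvy hv => ?_, fun v hv => ?_, fun _ => hy₂, fun t ht => ht.elim⟩, hy₂⟩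
  · have hvw : v ≠ w := by
      rintro rfl
      omega
    rw [heq v hvy hvw] at hv
    by_cases hvS : v ∈ S
    · exact (mem_evenNbrs.mp (R.subset_left hvS)).2
    · exact R.evenDeg_of_eq_zero v hvy ((hd₁.of_notMem v hvw hvS).symm.trans hv)
  · rcases eq_or_ne v w with rfl | hvw
    · omega
    · exact (hpos v hv hvw).trans_eq (heq v (ne_of_mem_nbr hv) hvw).symm

theorem EdgePrepared.isGallai (R : EdgePrepared G w y S T d) (hw : ¬EvenDeg G w)
    (hy : ¬EvenDeg G y) (hle : ∀ v, EvenDeg G v → (evenNbrs G v).card ≤ 2) : IsGallai G := by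
  obtain ⟨d', hd', hpos⟩ := R.exists_starPrepared hw hy hle
  rcases R.odd_right with rfl | hodd
  · exact ⟨d', cut_empty (G := G) (x := y) ▸ hd'.hasEnds, hd'.sum_le⟩
  · exact hd'.isGallai hle fun _ hσ => .of_odd hσ hodd hpos

open Classical in
theorem IsTriangleComponent.card_evenNbrs_eq_three (h : IsTriangleComponent G a b c)
    (ha : G.Adj w a) (hb : G.Adj w b) (hc : G.Adj w c) (hsub : evenNbrs G w ⊆ {a, b, c}) :
    (evenNbrs G w).card = 3 := by
  rw [hsub.antisymm ?_, h.card_eq_three]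
  simp [Finset.insert_subset_iff, mem_evenNbrs, ha, hb, hc, h.even_a, h.even_b, h.even_c]

open Classical in
theorem IsTriangleComponent.evenNbrs_cut_eq_singleton (h : IsTriangleComponent G a b c)
    (ha : G.Adj w a) (hsub : evenNbrs G w ⊆ {a, b, c}) : evenNbrs (cut G b {c}) w = {a} := by
  ext v
  rw [h.mem_evenNbrs_cut_iff, Finset.mem_singleton]
  refine ⟨fun ⟨hv, hvb, hvc⟩ => by simpa [hvb, hvc] using hsub hv, ?_⟩
  rintro rfl
  exact ⟨mem_evenNbrs.mpr ⟨ha, h.even_a⟩, h.adj_ab.ne, h.adj_ac.ne⟩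

open Classical in
theorem exists_edgePrepared_of_triangle (hG : Admissible G) (hbelow : GallaiBelow G)
    (hcomp : EvenIsolatedOrTriangle G) (hw : ¬EvenDeg G w) (hy : ¬EvenDeg G y) (hwy : G.Adj w y)
    (h : IsTriangleComponent G a b c) (ha : G.Adj w a) (hb : G.Adj w b)
    (hsub : evenNbrs G w ⊆ {a, b, c}) (hnot : ∀ t ∈ ({a, b, c} : Finset V), ¬G.Adj y t)
    (hoddy : evenNbrs G y = ∅ ∨ Odd (evenNbrs G y).card) :
    ∃ S d, EdgePrepared G w y S (evenNbrs G y) d := by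
  by_cases hc : G.Adj w c
  · refine ⟨_, exists_edgePrepared hG hbelow hcomp.card_evenNbrs_le_two hw hy hwy ?_ hoddy
      fun t ht => hnot t (hsub ht)⟩
    rw [h.card_evenNbrs_eq_three ha hb hc hsub]
    decide
  have hby : y ≠ b := fun e => hy (e ▸ h.even_b)
  have hwcut := h.evenNbrs_cut_eq_singleton ha hsub
  have hycut := h.evenNbrs_cut_eq (hnot b (by simp)) (hnot c (by simp))
  obtain ⟨d, hd⟩ := exists_edgePrepared (w := w) (y := y) (h.admissible_cut hG hcomp)
    (hbelow.anti cut_le) (h.evenIsolatedOrTriangle_cut hcomp).card_evenNbrs_le_two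
    (fun e => hw (h.evenDeg_cut_iff.mp e).1) (fun e => hy (h.evenDeg_cut_iff.mp e).1)
    ((cut_adj_of_ne hb.ne hby).mpr hwy) (by simp [hwcut])
    (by rwa [hycut]) (by simpa [hwcut] using fun e => hnot a (by simp) (cut_le e))
  rw [hwcut, hycut] at hd
  have hda : 1 ≤ d a := hd.pos_left a
    (evenNbrs_subset_nbr (hd.subset_left (Finset.mem_singleton_self a)))
    fun e => hy (e ▸ h.even_a)
  exact ⟨{a}, hd.of_cut h hw hy hda hc (hnot c (by simp)) fun e => absurd e (hnot b (by simp))⟩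

open Classical in
theorem exists_edgePrepared_of_two_triangles (hG : Admissible G) (hbelow : GallaiBelow G)
    (hcomp : EvenIsolatedOrTriangle G) (hw : ¬EvenDeg G w) (hy : ¬EvenDeg G y) (hwy : G.Adj w y)
    (h : IsTriangleComponent G a b c) (ha : G.Adj w a) (hb : G.Adj w b)
    (hsub : evenNbrs G w ⊆ {a, b, c}) (hnot : ∀ t ∈ ({a, b, c} : Finset V), ¬G.Adj y t)
    (h' : IsTriangleComponent G p q r) (hp : G.Adj y p) (hq : G.Adj y q)
    (hsub' : evenNbrs G y ⊆ {p, q, r}) : ∃ S T d, EdgePrepared G w y S T d := by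
  by_cases hr : G.Adj y r
  · have hcard := h'.card_evenNbrs_eq_three hp hq hr hsub'
    obtain ⟨S, d, hd⟩ := exists_edgePrepared_of_triangle hG hbelow hcomp hw hy hwy h ha hb hsub
      hnot (Or.inr (by rw [hcard]; decide))
    exact ⟨S, _, d, hd⟩
  have hdisj := Finset.disjoint_left.mp (h.disjoint h' fun hpabc => hnot p hpabc hp)
  have haq : a ≠ q := fun e => hdisj (a := a) (by simp) (by simp [e])
  have hbq : b ≠ q := fun e => hdisj (a := b) (by simp) (by simp [e])
  have hwq : w ≠ q := fun e => hw (e ▸ h'.even_b)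
  have hwr : ¬G.Adj w r := fun e =>
    hdisj (hsub (mem_evenNbrs.mpr ⟨e, h'.even_c⟩)) (by simp)
  have hycut := h'.evenNbrs_cut_eq_singleton hp hsub'
  obtain ⟨S, d, hd⟩ := exists_edgePrepared_of_triangle (w := w) (y := y)
    (h'.admissible_cut hG hcomp) (hbelow.anti cut_le) (h'.evenIsolatedOrTriangle_cut hcomp)
    (fun e => hw (h'.evenDeg_cut_iff.mp e).1) (fun e => hy (h'.evenDeg_cut_iff.mp e).1)
    ((cut_adj_of_ne hwq hq.ne).mpr hwy) (h'.cut_of_notMem h (hdisj (by simp)))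
    ((cut_adj_of_ne hwq haq).mpr ha) ((cut_adj_of_ne hwq hbq).mpr hb)
    (h'.evenNbrs_cut_subset.trans hsub) (fun t ht e => hnot t ht (cut_le e)) (by simp [hycut])
  rw [hycut] at hd
  have hdp : 1 ≤ d p := hd.pos_right p
    (evenNbrs_subset_nbr (hd.subset_right (Finset.mem_singleton_self p)))
  exact ⟨S, {p}, hd.of_cut h' hw hy hdp hwr hr (by simp)⟩

end OddEdge

section Triangles
variable [Fintype V] {G : SimpleGraph V} {a b c t v w y : V}

theorem nbr_eq_empty_of_evenDeg (hG : Admissible G) (hbelow : GallaiBelow G)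
    (hcomp : EvenIsolatedOrTriangle G) (hnot : ¬IsGallai G)
    (hno : ∀ a b c, ¬IsTriangleComponent G a b c) (hv : EvenDeg G v) : nbr G v = ∅ := by
  refine Finset.eq_empty_of_forall_notMem fun u hu => ?_
  have hvu := mem_nbr.mp hu
  by_cases heven : EvenDeg G u
  · rcases hcomp v hv with hempty | ⟨b, c, h⟩
    · exact evenNbrs_eq_empty_iff.mp hempty u hvu heven
    · exact hno v b c h
  · obtain ⟨a, b, c, h, -⟩ := exists_isTriangleComponent_of_not_isGallai hG hbelow hnot heven
      ⟨v, mem_evenNbrs.mpr ⟨hvu.symm, hv⟩⟩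
    exact hno a b c h

open Classical in
theorem exists_isTriangleComponent (hG : Admissible G) (hbelow : GallaiBelow G)
    (hcomp : EvenIsolatedOrTriangle G) (hnot : ¬IsGallai G) :
    ∃ a b c, IsTriangleComponent G a b c := by
  by_contra! hno
  have hiso : ∀ v, EvenDeg G v → nbr G v = ∅ := fun v =>
    nbr_eq_empty_of_evenDeg hG hbelow hcomp hnot hno
  refine hnot ⟨fun v => if EvenDeg G v then 0 else 1, .of_parity (fun v => ?_) ?_, ?_⟩
  · rw [Nat.even_add]
    change _ ↔ EvenDeg G v
    by_cases hv : EvenDeg G v <;> simp [hv]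
  · intro u v hu _ hnbr _
    by_cases heven : EvenDeg G u
    · simp [hiso u heven] at hnbr
    · simp [heven] at hu
  · calc ∑ v, (if EvenDeg G v then 0 else 1) ≤ ∑ _v : V, 1 :=
        Finset.sum_le_sum fun v _ => by split_ifs <;> simp
      _ = Fintype.card V := by simp

open Classical in
theorem IsTriangleComponent.not_evenDeg_of_adj (h : IsTriangleComponent G a b c)
    (hv : v ∉ ({a, b, c} : Finset V)) (ht : t ∈ ({a, b, c} : Finset V)) (hvt : G.Adj v t) :
    ¬EvenDeg G v := fun heven =>
  hv (h.evenNbrs_subset ht (mem_evenNbrs.mpr ⟨hvt.symm, heven⟩))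

open Classical in
theorem IsTriangleComponent.exists_relabel (h : IsTriangleComponent G a b c) (hG : Admissible G)
    (hbelow : GallaiBelow G) (hnot : ¬IsGallai G) (hv : ¬EvenDeg G v)
    (ht : t ∈ ({a, b, c} : Finset V)) (hvt : G.Adj v t) :
    ∃ p q r, IsTriangleComponent G p q r ∧ ({p, q, r} : Finset V) = {a, b, c} ∧
      G.Adj v p ∧ G.Adj v q ∧ evenNbrs G v ⊆ {p, q, r} := by
  have hmem : t ∈ evenNbrs G v := mem_evenNbrs.mpr ⟨hvt, h.evenDeg_of_mem ht⟩
  obtain ⟨p, q, r, h', hp, hq, hsub⟩ :=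
    exists_isTriangleComponent_of_not_isGallai hG hbelow hnot hv ⟨t, hmem⟩
  have heq := (h.subset_of_mem h' ht (hsub hmem)).antisymm (h'.subset_of_mem h (hsub hmem) ht)
  exact ⟨p, q, r, h', heq, hp, hq, hsub⟩

open Classical in
theorem IsTriangleComponent.adjTwo (h : IsTriangleComponent G a b c) (hG : Admissible G)
    (hbelow : GallaiBelow G) (hnot : ¬IsGallai G) (hv : v ∉ ({a, b, c} : Finset V))
    (ht : t ∈ ({a, b, c} : Finset V)) (hvt : G.Adj v t) : AdjTwo G a b c v := by
  obtain ⟨p, q, r, h', heq, hvp, hvq, -⟩ :=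
    h.exists_relabel hG hbelow hnot (h.not_evenDeg_of_adj hv ht hvt) ht hvt
  have hp : p ∈ ({a, b, c} : Finset V) := heq ▸ by simp
  have hq : q ∈ ({a, b, c} : Finset V) := heq ▸ by simp
  have hpq := h'.adj_ab.ne
  simp only [Finset.mem_insert, Finset.mem_singleton] at hp hq
  rcases hp with rfl | rfl | rfl <;> rcases hq with rfl | rfl | rfl <;>
    simp_all [AdjTwo]

open Classical in
theorem isGallai_of_odd_edge (hG : Admissible G) (hbelow : GallaiBelow G)
    (hcomp : EvenIsolatedOrTriangle G) (hw : ¬EvenDeg G w) (hy : ¬EvenDeg G y) (hwy : G.Adj w y)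
    (h : IsTriangleComponent G a b c) (ha : G.Adj w a) (hb : G.Adj w b)
    (hsub : evenNbrs G w ⊆ {a, b, c}) (hnot : ∀ t ∈ ({a, b, c} : Finset V), ¬G.Adj y t) :
    IsGallai G := by
  have hprep : ¬IsGallai G → ∃ S T d, EdgePrepared G w y S T d := fun hgallai => by
    rcases (evenNbrs G y).eq_empty_or_nonempty with hempty | hne
    · obtain ⟨S, d, hd⟩ := exists_edgePrepared_of_triangle hG hbelow hcomp hw hy hwy h ha hb hsub
        hnot (Or.inl hempty)
      exact ⟨S, _, d, hd⟩
    · obtain ⟨p, q, r, h', hp, hq, hsub'⟩ :=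
        exists_isTriangleComponent_of_not_isGallai hG hbelow hgallai hy hne
      exact exists_edgePrepared_of_two_triangles hG hbelow hcomp hw hy hwy h ha hb hsub hnot h' hp
        hq hsub'
  by_contra hgallai
  obtain ⟨S, T, d, hd⟩ := hprep hgallai
  exact hgallai (hd.isGallai hw hy hcomp.card_evenNbrs_le_two)

open Classical in
theorem IsTriangleComponent.adj_of_odd_edge (h : IsTriangleComponent G a b c) (hG : Admissible G)
    (hbelow : GallaiBelow G) (hcomp : EvenIsolatedOrTriangle G) (hnot : ¬IsGallai G)
    (hw : w ∉ ({a, b, c} : Finset V)) (ht : t ∈ ({a, b, c} : Finset V)) (hwt : G.Adj w t)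
    (hwy : G.Adj w y) (hy : y ∉ ({a, b, c} : Finset V)) :
    ∃ s ∈ ({a, b, c} : Finset V), G.Adj y s := by
  have hoddw := h.not_evenDeg_of_adj hw ht hwt
  obtain ⟨p, q, r, h', heq, hp, hq, hsub⟩ := h.exists_relabel hG hbelow hnot hoddw ht hwt
  have hoddy : ¬EvenDeg G y := fun heven => hy (heq ▸ hsub (mem_evenNbrs.mpr ⟨hwy, heven⟩))
  by_contra! hyt
  exact hnot (isGallai_of_odd_edge hG hbelow hcomp hoddw hoddy hwy h' hp hq hsub (heq ▸ hyt))

theorem IsTriangleComponent.hasSETComponent (h : IsTriangleComponent G a b c) (hG : Admissible G)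
    (hbelow : GallaiBelow G) (hcomp : EvenIsolatedOrTriangle G) (hnot : ¬IsGallai G) :
    HasSETComponent G := by
  classical
  let T : Finset V := {a, b, c}
  have hadj : ∀ v ∈ {v | v ∈ T ∨ ∃ t ∈ T, G.Adj v t}, v ∉ T → ∃ t ∈ T, G.Adj v t :=
    fun v hv hvT => hv.resolve_left hvT
  refine ⟨{v | v ∈ T ∨ ∃ t ∈ T, G.Adj v t}, a, b, c, Or.inl (by simp [T]), Or.inl (by simp [T]),
    Or.inl (by simp [T]), h.toIsEvenTriangle, fun u hu v huv => ?_, fun v hv hva hvb hvc => ?_⟩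
  · by_cases huT : u ∈ T
    · exact Or.inr ⟨u, huT, huv.symm⟩
    · obtain ⟨t, ht, hut⟩ := hadj u hu huT
      exact or_iff_not_imp_left.mpr (h.adj_of_odd_edge hG hbelow hcomp hnot huT ht hut huv)
  · have hvT : v ∉ T := by simp [T, hva, hvb, hvc]
    obtain ⟨t, ht, hvt⟩ := hadj v hv hvT
    exact ⟨h.not_evenDeg_of_adj hvT ht hvt, h.adjTwo hG hbelow hnot hvT ht hvt⟩

theorem Admissible.isGallai (hG : Admissible G) : IsGallai G := by
  induction G using WellFoundedLT.induction with
  | ind G ih =>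
    by_contra hnot
    have hcomp := evenIsolatedOrTriangle_of_not_isGallai hG ih hnot
    obtain ⟨a, b, c, h⟩ := exists_isTriangleComponent hG ih hcomp hnot
    exact hG.not_hasSETComponent (h.hasSETComponent hG ih hcomp hnot)

end Triangles

section Connected
variable [Fintype V] {G : SimpleGraph V} {a b c : V}

theorem mem_of_connected_of_closed {W : Type*} {G : SimpleGraph W} {a : W} {C : Set W}
    (hconn : G.Connected) (hC : ∀ u ∈ C, ∀ v, G.Adj u v → v ∈ C) (ha : a ∈ C) (v : W) :
    v ∈ C := by
  have hav := hconn.preconnected a v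
  rw [reachable_iff_reflTransGen] at hav
  induction hav with
  | refl => exact ha
  | tail _ huv hu => exact hC _ hu _ huv

open Classical in
theorem sum_setEnds (hab : a ≠ b) (hac : a ≠ c) (hbc : b ≠ c) :
    ∑ v, (if v = a then 0 else if v = b ∨ v = c then 2 else 1) = Fintype.card V + 1 := by
  have hpoint : ∀ v, ((if v = a then 0 else if v = b ∨ v = c then 2 else 1) +
      if v = a then 1 else 0) = 1 + (if v = b then 1 else 0) + if v = c then 1 else 0 := by
    intro v
    grind
  have hsum := Finset.sum_congr (rfl : (Finset.univ : Finset V) = _) fun v _ => hpoint v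
  simp only [Finset.sum_add_distrib, Finset.sum_ite_eq', Finset.mem_univ, if_true,
    Finset.sum_const, Finset.card_univ, smul_eq_mul, mul_one] at hsum
  omega

theorem HasSETComponent.exists_hasEnds (h : HasSETComponent G) (hconn : G.Connected) :
    ∃ d, HasEnds G d ∧ ∑ v, d v ≤ Fintype.card V + 1 := by
  classical
  obtain ⟨C, a, b, c, ha, -, -, habc, hclosed, hrest⟩ := h
  have hodd : ∀ v, v ≠ a → v ≠ b → v ≠ c → ¬EvenDeg G v := fun v hva hvb hvc =>
    (hrest v (mem_of_connected_of_closed hconn hclosed ha v) hva hvb hvc).1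
  have heven : ∀ v, EvenDeg G v ↔ v = a ∨ v = b ∨ v = c := fun v => by
    refine ⟨fun hv => ?_, ?_⟩
    · by_contra! hne
      exact hodd v hne.1 hne.2.1 hne.2.2 hv
    · rintro (rfl | rfl | rfl)
      exacts [habc.even_a, habc.even_b, habc.even_c]
  refine ⟨fun v => if v = a then 0 else if v = b ∨ v = c then 2 else 1,
    .of_parity (fun v => Nat.even_add.mpr (Iff.trans ?_ (heven v).symm)) ?_,
    (sum_setEnds habc.adj_ab.ne habc.adj_ac.ne habc.adj_bc.ne).le⟩
  · grind
  · intro u v hu hv _ _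
    have hzero : ∀ w, (if w = a then 0 else if w = b ∨ w = c then 2 else 1) = 0 → w = a := by
      grind
    exact (hzero u hu).trans (hzero v hv).symm

theorem exists_hasEnds_of_connected (hconn : G.Connected)
    (hle : ∀ v, EvenDeg G v → (evenNbrs G v).card ≤ 3) :
    ∃ d, HasEnds G d ∧ ∑ v, d v ≤ Fintype.card V + 1 := by
  by_cases hset : HasSETComponent G
  · exact hset.exists_hasEnds hconn
  · obtain ⟨d, hd, hsum⟩ := Admissible.isGallai ⟨hle, hset⟩
    exact ⟨d, hd, hsum.trans (Nat.le_succ _)⟩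

end Connected

section Walks
variable {G : SimpleGraph V}

theorem exists_walk_of_list {x : V} {l : List V} (h : ∀ e ∈ listEdges (x :: l), e ∈ G.edgeSet) :
    ∃ (y : V) (p : G.Walk x y), p.support = x :: l ∧
      (p.edges : Multiset (Sym2 V)) = listEdges (x :: l) := by
  induction l generalizing x with
  | nil => exact ⟨x, .nil, by simp, by simp [listEdges, headEdge]⟩
  | cons z l ih =>
    have hxz : G.Adj x z := h s(x, z) (by simp [listEdges, headEdge])
    obtain ⟨y, p, hsupport, hedges⟩ := ih fun e he => h e (Multiset.mem_add.mpr (Or.inr he))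
    refine ⟨y, .cons hxz p, by simp [hsupport], ?_⟩
    rw [Walk.edges_cons, ← Multiset.cons_coe, hedges, ← Multiset.singleton_add]
    rfl

variable {k : ℕ}

theorem PathSystem.mem_edgeSet (P : PathSystem G k) (i : Fin k) {e : Sym2 V}
    (he : e ∈ listEdges (P.path i)) : e ∈ G.edgeSet := by
  classical
  by_contra hne
  have hzero := P.sum_count e
  rw [if_neg hne, Finset.sum_eq_zero_iff] at hzero
  exact Multiset.count_ne_zero.mpr he (hzero i (Finset.mem_univ i))

theorem PathSystem.exists_walks (P : PathSystem G k) :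
    ∃ q : Fin k → Σ a b : V, G.Walk a b, (∀ i, (q i).2.2.support = P.path i) ∧
      ∀ i e, e ∈ (q i).2.2.edges ↔ e ∈ listEdges (P.path i) := by
  have hwalk : ∀ i, ∃ q : Σ a b : V, G.Walk a b, q.2.2.support = P.path i ∧
      (q.2.2.edges : Multiset (Sym2 V)) = listEdges (P.path i) := fun i => by
    obtain ⟨x, l, hl⟩ := List.exists_cons_of_ne_nil (P.ne_nil i)
    have hmem : ∀ e ∈ listEdges (x :: l), e ∈ G.edgeSet := fun e he =>
      P.mem_edgeSet i (hl ▸ he)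
    obtain ⟨y, p, hp⟩ := exists_walk_of_list hmem
    exact ⟨⟨x, y, p⟩, hl ▸ hp⟩
  choose q hsupport hedges using hwalk
  exact ⟨q, hsupport, fun i e => by rw [← hedges i, Multiset.mem_coe]⟩

theorem PathSystem.eq_of_mem_listEdges (P : PathSystem G k) {i j : Fin k} {e : Sym2 V}
    (hi : e ∈ listEdges (P.path i)) (hj : e ∈ listEdges (P.path j)) : i = j := by
  classical
  by_contra hij
  rw [← Multiset.count_pos] at hi hj
  have hle : ∑ t ∈ {i, j}, (listEdges (P.path t)).count e ≤ ∑ t, (listEdges (P.path t)).count e :=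
    Finset.sum_le_sum_of_subset (Finset.subset_univ _)
  rw [P.sum_count e, Finset.sum_pair hij] at hle
  split_ifs at hle <;> omega

theorem PathSystem.exists_mem_listEdges (P : PathSystem G k) {e : Sym2 V} (he : e ∈ G.edgeSet) :
    ∃ i, e ∈ listEdges (P.path i) := by
  classical
  have hone := P.sum_count e
  rw [if_pos he] at hone
  obtain ⟨i, -, hi⟩ := Finset.exists_ne_zero_of_sum_ne_zero (hone.trans_ne one_ne_zero)
  exact ⟨i, Multiset.count_ne_zero.mp hi⟩

theorem PathSystem.pn_le (P : PathSystem G k) : pn G ≤ k := by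
  obtain ⟨q, hsupport, hedges⟩ := P.exists_walks
  let D : PathDecomp G :=
    { paths := ((List.finRange k).map q).filter fun w => 0 < w.2.2.length
      nontrivial := fun w hw => by simpa using (List.mem_filter.mp hw).2
      isPath := fun w hw => by
        obtain ⟨i, -, rfl⟩ := List.mem_map.mp (List.mem_filter.mp hw).1
        rw [Walk.isPath_def, hsupport]
        exact P.nodup i
      edgeDisjoint := by
        refine List.Pairwise.filter _ (List.pairwise_map.mpr ?_)
        exact (List.nodup_finRange k).imp fun {i j} hij e hi hj =>
          hij (P.eq_of_mem_listEdges ((hedges i e).mp hi) ((hedges j e).mp hj))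
      covers := fun e he => by
        obtain ⟨i, hi⟩ := P.exists_mem_listEdges he
        refine ⟨q i, List.mem_filter.mpr ⟨List.mem_map_of_mem (List.mem_finRange i), ?_⟩,
          (hedges i e).mpr hi⟩
        rw [decide_eq_true_iff, ← Walk.length_edges]
        exact List.length_pos_of_mem ((hedges i e).mpr hi) }
  calc pn G ≤ pdCard D := Nat.sInf_le ⟨D, rfl⟩
    _ ≤ ((List.finRange k).map q).length := List.length_filter_le _ _
    _ = k := by simp

theorem HasEnds.two_mul_pn_le [Fintype V] {d : V → ℕ} (h : HasEnds G d) : 2 * pn G ≤ ∑ v, d v := by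
  obtain ⟨k, P, rfl⟩ := h
  rw [P.sum_numEnds]
  exact Nat.mul_le_mul_left 2 P.pn_le

end Walks

theorem card_nbr_eq_ndeg [Fintype V] (G : SimpleGraph V) (v : V) : (nbr G v).card = ndeg G v := by
  rw [ndeg, ← Set.ncard_coe_finset]
  congr 1
  ext w
  simp [mem_nbr]

theorem evenDeg_iff_even_ndeg [Fintype V] (G : SimpleGraph V) (v : V) :
    EvenDeg G v ↔ Even (ndeg G v) := by
  rw [EvenDeg, card_nbr_eq_ndeg]

theorem card_evenNbrs_eq_ncard [Fintype V] (G : SimpleGraph V) (v : V) :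
    (evenNbrs G v).card = {w | G.Adj v w ∧ Even (ndeg G w)}.ncard := by
  rw [← Set.ncard_coe_finset]
  congr 1
  ext w
  simp [mem_evenNbrs, evenDeg_iff_even_ndeg]

theorem gallai_conjecture_max_edegree_three [Fintype V] (G : SimpleGraph V)
    (hconn : G.Connected)
    (h : ∀ v : V, Even (ndeg G v) → {w | G.Adj v w ∧ Even (ndeg G w)}.ncard ≤ 3) :
    pn G ≤ (Fintype.card V + 1) / 2 := by
  obtain ⟨d, hd, hle⟩ := exists_hasEnds_of_connected hconn fun v hv => by
    rw [card_evenNbrs_eq_ncard]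
    exact h v ((evenDeg_iff_even_ndeg G v).mp hv)
  have hpn : 2 * pn G ≤ ∑ v, d v := hd.two_mul_pn_le
  omega
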